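/- Let s > 11/2 and suppose (ξ_k)_{k≥1} satisfies Σ_{k≥1} ‖ξ_k‖_{H^σ} < ∞ for every σ ≥ 0. For ε ∈ (0,1) and X = (u,η) ∈ H^s(𝕋) × H^{s-1}(𝕋), set g_ε(X) = (−J_ε[J_ε u · ∂_x J_ε u] + ½ J_ε³ (1−∂²_x)^{-1} Σ_k 𝓛²_{ξ_k} (1−∂²_x) J_ε u, −J_ε[J_ε u · ∂_x J_ε η] + ½ J_ε³ Σ_k 𝓛²_{ξ_k} J_ε η) and h_ε^k(X) = (−J_ε (1−∂²_x)^{-1} 𝓛_{ξ_k} (1−∂²_x) J_ε u, −J_ε 𝓛_{ξ_k} J_ε η). Then there is a constant C > 0, independent of ε, such that for all X: 2 (g_ε(X), X)_{H^s×H^{s-1}} + Σ_{k=1}^∞ ‖h_ε^k(X)‖²_{H^s×H^{s-1}} ≤ C (1 + ‖∂_x u‖_{L^∞} + ‖∂_x η‖_{L^∞}) (‖u‖²_{H^s} + ‖η‖²_{H^{s-1}}). -/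

import Mathlib

noncomputable section
open scoped BigOperators

/-- A (complex-valued) function on the torus `𝕋 = ℝ/2πℤ`, represented by its sequence of
Fourier coefficients `f̂ : ℤ → ℂ`. -/
abbrev FC := ℤ → ℂ

namespace FC

/-- The Sobolev weight `(1+k²)^s`. -/
def wt (s : ℝ) (k : ℤ) : ℝ := (1 + (k : ℝ) ^ 2) ^ s

/-- `c` represents a function belonging to the Sobolev space `H^s(𝕋)`. -/
def memHs (s : ℝ) (c : FC) : Prop := Summable fun k : ℤ => wt s k * ‖c k‖ ^ 2

/-- The `H^s(𝕋)` norm: `‖f‖²_{H^s} = Σ_{k∈ℤ} (1+k²)^s |f̂(k)|²`. -/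
def hsNorm (s : ℝ) (c : FC) : ℝ := Real.sqrt (∑' k : ℤ, wt s k * ‖c k‖ ^ 2)

/-- The `H^s(𝕋)` inner product `(f,g)_{H^s} = Σ_{k∈ℤ} (1+k²)^s f̂(k) conj(ĝ(k))`
(its real part; the sum is real for real-valued functions). -/
def hsInner (s : ℝ) (c d : FC) : ℝ :=
  (∑' k : ℤ, ((wt s k : ℂ) * (c k * (starRingEnd ℂ) (d k)))).re

/-- `c` represents a real-valued function (conjugate-symmetric coefficients). -/
def isReal (c : FC) : Prop := ∀ k : ℤ, c (-k) = (starRingEnd ℂ) (c k)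

/-- The derivative `∂ₓ`, i.e. the Fourier multiplier `ik`. -/
def D1 (c : FC) : FC := fun k => Complex.I * (k : ℂ) * c k

/-- The pointwise product of functions, i.e. convolution of Fourier coefficients. -/
def mul (c d : FC) : FC := fun k => ∑' j : ℤ, c j * d (k - j)

/-- The represented function, evaluated at `x ∈ ℝ`. -/
def eval (c : FC) (x : ℝ) : ℂ := ∑' k : ℤ, c k * Complex.exp (Complex.I * (k : ℂ) * (x : ℂ))

/-- The `L^∞` norm (supremum of the represented periodic function over ℝ). -/
def linfty (c : FC) : ℝ := ⨆ x : ℝ, ‖eval c x‖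

/-- The `W^{1,∞}` norm. -/
def w1infty (c : FC) : ℝ := linfty c + linfty (D1 c)

/-- A Fourier multiplier operator with real symbol `m`. -/
def mult (m : ℤ → ℝ) (c : FC) : FC := fun k => (m k : ℂ) * c k

/-- The operator `(1-∂ₓ²)⁻¹`, i.e. the Fourier multiplier `(1+k²)⁻¹`. -/
def helmInv : FC → FC := mult fun k => (1 + (k : ℝ) ^ 2)⁻¹

/-- The operator `1-∂ₓ²`, i.e. the Fourier multiplier `1+k²`. -/
def helm : FC → FC := mult fun k => 1 + (k : ℝ) ^ 2

/-- The operator `T̃_ε = (1-ε²∂ₓ²)⁻¹`, i.e. the Fourier multiplier `(1+ε²k²)⁻¹`. -/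
def T (ε : ℝ) : FC → FC := mult fun k => (1 + ε ^ 2 * (k : ℝ) ^ 2)⁻¹

/-- The periodic Hilbert transform, i.e. the Fourier multiplier `-i·sgn(k)`. -/
def hilbert (c : FC) : FC := fun k => -Complex.I * (Int.sign k : ℂ) * c k

/-- The Friedrichs-type mollifier `J_ε`, the Fourier multiplier `ĵ(εk)`. -/
def Jmol (jhat : ℝ → ℝ) (ε : ℝ) : FC → FC := mult fun k => jhat (ε * (k : ℝ))

/-- The generalized Lie derivative `𝓛_ξ f = ξ ∂ₓ f + (∂ₓ ξ) f`. -/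
def lie (ξ c : FC) : FC := mul ξ (D1 c) + mul (D1 ξ) c

/-- `𝓛²_ξ f = 𝓛_ξ (𝓛_ξ f)`. -/
def lie2 (ξ c : FC) : FC := lie ξ (lie ξ c)

/-- The coefficientwise sum `Σ_{k∈ℕ} F k` of a sequence of functions. -/
def tsumFC (F : ℕ → FC) : FC := fun m => ∑' k : ℕ, F k m

/-- The norm on the product space `H^{s₁}×H^{s₂}`. -/
def pairNorm (s₁ s₂ : ℝ) (c d : FC) : ℝ := Real.sqrt (hsNorm s₁ c ^ 2 + hsNorm s₂ d ^ 2)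

/-- The inner product on the product space `H^{s₁}×H^{s₂}`:
`((c₁,d₁),(c₂,d₂)) ↦ (c₁,c₂)_{H^{s₁}} + (d₁,d₂)_{H^{s₂}}`. -/
def pairInner (s₁ s₂ : ℝ) (c₁ d₁ c₂ d₂ : FC) : ℝ := hsInner s₁ c₁ c₂ + hsInner s₂ d₁ d₂

end FC

/-- First component of the mollified diffusion coefficient `h_ε^k`:
`−J_ε (1−∂ₓ²)⁻¹ 𝓛_{ξ_k} (1−∂ₓ²) J_ε u`. -/
def hMol1 (jh : ℝ → ℝ) (ε : ℝ) (ξ : ℕ → FC) (k : ℕ) (u : FC) : FC :=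
  -(FC.Jmol jh ε (FC.helmInv (FC.lie (ξ k) (FC.helm (FC.Jmol jh ε u)))))

/-- Second component of the mollified diffusion coefficient `h_ε^k`:
`−J_ε 𝓛_{ξ_k} J_ε η`. -/
def hMol2 (jh : ℝ → ℝ) (ε : ℝ) (ξ : ℕ → FC) (k : ℕ) (η : FC) : FC :=
  -(FC.Jmol jh ε (FC.lie (ξ k) (FC.Jmol jh ε η)))

/-- First component of the mollified singular drift `g_ε`:
`−J_ε[J_ε u · ∂ₓ J_ε u] + ½ J_ε³ (1−∂ₓ²)⁻¹ Σ_k 𝓛²_{ξ_k} (1−∂ₓ²) J_ε u`. -/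
def gMol1 (jh : ℝ → ℝ) (ε : ℝ) (ξ : ℕ → FC) (u : FC) : FC :=
  -(FC.Jmol jh ε (FC.mul (FC.Jmol jh ε u) (FC.D1 (FC.Jmol jh ε u)))) +
    (1 / 2 : ℝ) • (FC.Jmol jh ε (FC.Jmol jh ε (FC.Jmol jh ε
      (FC.helmInv (FC.tsumFC fun k => FC.lie2 (ξ k) (FC.helm (FC.Jmol jh ε u)))))))

/-- Second component of the mollified singular drift `g_ε`:
`−J_ε[J_ε u · ∂ₓ J_ε η] + ½ J_ε³ Σ_k 𝓛²_{ξ_k} J_ε η`. -/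
def gMol2 (jh : ℝ → ℝ) (ε : ℝ) (ξ : ℕ → FC) (u η : FC) : FC :=
  -(FC.Jmol jh ε (FC.mul (FC.Jmol jh ε u) (FC.D1 (FC.Jmol jh ε η)))) +
    (1 / 2 : ℝ) • (FC.Jmol jh ε (FC.Jmol jh ε (FC.Jmol jh ε
      (FC.tsumFC fun k => FC.lie2 (ξ k) (FC.Jmol jh ε η)))))


namespace S17
open FC

/-- The weight `1 + |k|`. -/
def bb (k : ℤ) : ℝ := 1 + |(k : ℝ)|

lemma one_le_bb (k : ℤ) : 1 ≤ bb k := by unfold bb; linarith [abs_nonneg (k : ℝ)]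
lemma bb_pos (k : ℤ) : 0 < bb k := lt_of_lt_of_le one_pos (one_le_bb k)
lemma abs_le_bb (k : ℤ) : |(k : ℝ)| ≤ bb k := by unfold bb; linarith
lemma bb_neg (k : ℤ) : bb (-k) = bb k := by simp [bb]
lemma bb_add (k m : ℤ) : bb (k + m) ≤ bb k * bb m := by
  unfold bb; push_cast
  nlinarith [abs_add_le (k : ℝ) (m : ℝ), abs_nonneg (k : ℝ), abs_nonneg (m : ℝ),
    mul_nonneg (abs_nonneg (k : ℝ)) (abs_nonneg (m : ℝ))]
lemma bb_sub (k m : ℤ) : bb (k - m) ≤ bb k * bb m := by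
  have := bb_add k (-m); rwa [bb_neg, ← sub_eq_add_neg] at this

lemma base_pos (k : ℤ) : (0 : ℝ) < 1 + (k : ℝ) ^ 2 := by positivity
lemma one_le_base (k : ℤ) : (1 : ℝ) ≤ 1 + (k : ℝ) ^ 2 := by nlinarith [sq_nonneg (k : ℝ)]
lemma wt_pos (s : ℝ) (k : ℤ) : 0 < wt s k := Real.rpow_pos_of_pos (base_pos k) s
lemma wt_add (a b : ℝ) (k : ℤ) : wt a k * wt b k = wt (a + b) k :=
  (Real.rpow_add (base_pos k) a b).symm
lemma wt_zero (k : ℤ) : wt 0 k = 1 := by simp [wt]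
lemma wt_one (k : ℤ) : wt 1 k = 1 + (k : ℝ) ^ 2 := by simp [wt]
lemma wt_mono {a b : ℝ} (h : a ≤ b) (k : ℤ) : wt a k ≤ wt b k :=
  Real.rpow_le_rpow_of_exponent_le (one_le_base k) h
lemma one_le_wt {a : ℝ} (h : 0 ≤ a) (k : ℤ) : 1 ≤ wt a k := by
  have := wt_mono h k; rwa [wt_zero] at this
lemma wt_half_sq (s : ℝ) (k : ℤ) : wt (s / 2) k ^ 2 = wt s k := by
  rw [sq, wt_add]; congr 1; ring
lemma base_le_bb (k : ℤ) : 1 + (k : ℝ) ^ 2 ≤ bb k ^ 2 := by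
  unfold bb; nlinarith [abs_nonneg (k : ℝ), sq_abs (k : ℝ)]
lemma bb_le_base (k : ℤ) : bb k ^ 2 ≤ 2 * (1 + (k : ℝ) ^ 2) := by
  unfold bb; nlinarith [sq_nonneg (|(k : ℝ)| - 1), sq_abs (k : ℝ)]

lemma wt_le_bb (a : ℝ) : ∃ p : ℕ, ∀ k : ℤ, wt a k ≤ bb k ^ p := by
  obtain ⟨n, hn⟩ := exists_nat_ge a
  refine ⟨2 * n, fun k => ?_⟩
  calc wt a k ≤ wt n k := wt_mono hn k
    _ = (1 + (k : ℝ) ^ 2) ^ n := by simp [wt]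
    _ ≤ (bb k ^ 2) ^ n := by gcongr; exact base_le_bb k
    _ = bb k ^ (2 * n) := by rw [pow_mul]

lemma bb_le_wt (p : ℕ) (k : ℤ) : bb k ^ p ≤ 2 ^ p * wt (p : ℝ) k := by
  have h1 : bb k ≤ bb k ^ 2 := by nlinarith [one_le_bb k]
  have h2 : bb k ≤ 2 * (1 + (k : ℝ) ^ 2) := h1.trans (bb_le_base k)
  calc bb k ^ p ≤ (2 * (1 + (k : ℝ) ^ 2)) ^ p := pow_le_pow_left₀ (bb_pos k).le h2 p
    _ = _ := by simp [wt, mul_pow]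

/-- Rapidly decreasing coefficient sequences. -/
def Rapid (c : FC) : Prop := ∀ p : ℕ, ∃ C : ℝ, ∀ k : ℤ, ‖c k‖ * bb k ^ p ≤ C

lemma summable_bb : Summable fun k : ℤ => (bb k ^ 2)⁻¹ := by
  have h : Summable fun k : ℤ => ((k : ℝ) ^ 2)⁻¹ := by
    have := (Real.summable_one_div_int_pow (p := 2)).2 (by norm_num)
    simpa using this
  have h' : Summable fun k : ℤ => ((k : ℝ) ^ 2)⁻¹ + if k = 0 then (1 : ℝ) else 0 :=
    h.add (summable_of_ne_finset_zero (s := {0}) (by intro b hb; simp at hb; simp [hb]))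
  refine Summable.of_nonneg_of_le (fun k => by have := bb_pos k; positivity) (fun k => ?_) h'
  by_cases hk : k = 0
  · subst hk; simp [bb]
  · simp only [hk, if_false, add_zero]
    have h0 : (0 : ℝ) < (k : ℝ) ^ 2 := by positivity
    refine inv_anti₀ h0 ?_
    have := base_le_bb k; linarith

lemma Rapid.of_le {c d : FC} (hc : Rapid c) (q : ℕ) (A : ℝ)
    (h : ∀ k, ‖d k‖ ≤ A * bb k ^ q * ‖c k‖) : Rapid d := by
  intro p
  obtain ⟨C, hC⟩ := hc (q + p)
  refine ⟨|A| * C, fun k => ?_⟩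
  have hb := bb_pos k
  calc ‖d k‖ * bb k ^ p ≤ (A * bb k ^ q * ‖c k‖) * bb k ^ p := by gcongr; exact h k
    _ ≤ (|A| * bb k ^ q * ‖c k‖) * bb k ^ p := by gcongr; exact le_abs_self A
    _ = |A| * (‖c k‖ * bb k ^ (q + p)) := by rw [pow_add]; ring
    _ ≤ |A| * C := by gcongr; exact hC k

lemma Rapid.summable_pow {c : FC} (hc : Rapid c) (p : ℕ) :
    Summable fun k => ‖c k‖ * bb k ^ p := by
  obtain ⟨C, hC⟩ := hc (p + 2)
  refine Summable.of_nonneg_of_le (fun k => by have := bb_pos k; positivity) (fun k => ?_)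
    (summable_bb.mul_left C)
  have hb := bb_pos k
  rw [← div_eq_mul_inv, le_div_iff₀ (by positivity), mul_assoc, ← pow_add]
  exact hC k

lemma Rapid.summable {c : FC} (hc : Rapid c) : Summable fun k => ‖c k‖ := by
  simpa using hc.summable_pow 0

lemma Rapid.bdd {c : FC} (hc : Rapid c) : ∃ C : ℝ, 0 ≤ C ∧ ∀ k, ‖c k‖ ≤ C := by
  obtain ⟨C, hC⟩ := hc 0
  refine ⟨C, (norm_nonneg _).trans (by simpa using hC 0), fun k => by simpa using hC k⟩

lemma Rapid.summable_sq {c : FC} (hc : Rapid c) : Summable fun k => ‖c k‖ ^ 2 := by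
  obtain ⟨C, h0, hC⟩ := hc.bdd
  refine Summable.of_nonneg_of_le (fun k => by positivity) (fun k => ?_) (hc.summable.mul_left C)
  rw [sq]; gcongr; exact hC k

lemma Rapid.wt {c : FC} (hc : Rapid c) (a : ℝ) : Rapid (fun k => (FC.wt a k : ℂ) * c k) := by
  obtain ⟨p, hp⟩ := wt_le_bb a
  refine hc.of_le p 1 (fun k => ?_)
  rw [norm_mul, Complex.norm_real, Real.norm_of_nonneg (wt_pos a k).le, one_mul]
  gcongr; exact hp k

lemma Rapid.D1 {c : FC} (hc : Rapid c) : Rapid (D1 c) := by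
  refine hc.of_le 1 1 (fun k => ?_)
  simp only [FC.D1, norm_mul, Complex.norm_I, one_mul, pow_one]
  gcongr
  have := abs_le_bb k
  simpa using this

lemma Rapid.memHs {c : FC} (hc : Rapid c) (s : ℝ) : memHs s c := by
  have := (hc.wt (s / 2)).summable_sq
  refine this.congr (fun k => ?_)
  rw [norm_mul, mul_pow, Complex.norm_real, Real.norm_of_nonneg (wt_pos _ k).le, wt_half_sq]

lemma hsNorm_sq (s : ℝ) (c : FC) : hsNorm s c ^ 2 = ∑' k, FC.wt s k * ‖c k‖ ^ 2 :=
  Real.sq_sqrt (tsum_nonneg fun k => mul_nonneg (wt_pos s k).le (by positivity))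

lemma hsNorm_nonneg (s : ℝ) (c : FC) : 0 ≤ hsNorm s c := Real.sqrt_nonneg _

lemma memHs_le {s : ℝ} {c : FC} (h : memHs s c) (k : ℤ) :
    FC.wt s k * ‖c k‖ ^ 2 ≤ hsNorm s c ^ 2 := by
  rw [hsNorm_sq]
  exact h.le_tsum k fun j _ => mul_nonneg (wt_pos s j).le (by positivity)

lemma memHs_coef {s : ℝ} {c : FC} (h : memHs s c) (k : ℤ) :
    FC.wt (s / 2) k * ‖c k‖ ≤ hsNorm s c := by
  refine abs_le_of_sq_le_sq' ?_ (hsNorm_nonneg s c) |>.2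
  rw [mul_pow, wt_half_sq]; exact memHs_le h k

/-- Sobolev functions of all orders are rapidly decreasing, with bounds. -/
lemma coef_le_hsNorm {c : FC} (p : ℕ) (h : memHs (2 * p : ℝ) c) (k : ℤ) :
    ‖c k‖ * bb k ^ p ≤ 2 ^ p * hsNorm (2 * p : ℝ) c := by
  have h1 := memHs_coef h k
  rw [show (2 * (p : ℝ)) / 2 = p by ring] at h1
  calc ‖c k‖ * bb k ^ p ≤ ‖c k‖ * (2 ^ p * FC.wt p k) := by gcongr; exact bb_le_wt p k
    _ = 2 ^ p * (FC.wt p k * ‖c k‖) := by ring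
    _ ≤ _ := by gcongr

lemma rapid_of_memHs {c : FC} (h : ∀ s : ℝ, 0 ≤ s → memHs s c) : Rapid c := fun p =>
  ⟨_, coef_le_hsNorm p (h _ (by positivity))⟩

lemma Jmol_rapid (j : SchwartzMap ℝ ℝ) {ε : ℝ} (hε : 0 < ε) {c : FC} {A : ℝ}
    (hc : ∀ k, ‖c k‖ ≤ A) : Rapid (Jmol j ε c) := by
  have hA : 0 ≤ A := (norm_nonneg _).trans (hc 0)
  intro p
  obtain ⟨C0, hC0⟩ := j.decay 0 0
  obtain ⟨C1, hC1⟩ := j.decay p 0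
  have key : ∀ x : ℝ, |j x| ≤ C0 ∧ |x| ^ p * |j x| ≤ C1 := fun x => by
    constructor
    · simpa using hC0.2 x
    · simpa using hC1.2 x
  refine ⟨2 ^ p * (C0 + C1 / ε ^ p) * A, fun k => ?_⟩
  have h1 : bb k ^ p ≤ 2 ^ p * (1 + |(k : ℝ)| ^ p) := by
    have := add_pow_le (zero_le_one) (abs_nonneg (k : ℝ)) p
    calc bb k ^ p ≤ 2 ^ (p - 1) * (1 ^ p + |(k : ℝ)| ^ p) := this
      _ ≤ _ := by
        rw [one_pow]; gcongr
        · norm_num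
        · omega
  have hj := key (ε * k)
  have h2 : |(k : ℝ)| ^ p * |j (ε * k)| ≤ C1 / ε ^ p := by
    rw [le_div_iff₀ (by positivity)]
    have := hj.2
    rw [abs_mul, abs_of_pos hε, mul_pow] at this
    linarith [this]
  have h3 : bb k ^ p * |j (ε * k)| ≤ 2 ^ p * (C0 + C1 / ε ^ p) := by
    calc bb k ^ p * |j (ε * k)| ≤ (2 ^ p * (1 + |(k : ℝ)| ^ p)) * |j (ε * k)| := by gcongr
      _ = 2 ^ p * (|j (ε * k)| + |(k : ℝ)| ^ p * |j (ε * k)|) := by ring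
      _ ≤ _ := by gcongr; exact hj.1
  have h4 : ‖Jmol j ε c k‖ = |j (ε * k)| * ‖c k‖ := by
    simp [Jmol, mult]
  rw [h4]
  calc |j (ε * k)| * ‖c k‖ * bb k ^ p = (bb k ^ p * |j (ε * k)|) * ‖c k‖ := by ring
    _ ≤ _ := mul_le_mul h3 (hc k) (norm_nonneg _)
        (le_trans (by have := bb_pos k; positivity) h3)

end S17

namespace S17
open FC MeasureTheory

/-- A matrix kernel is bounded by `B` (in arithmetic-mean form). -/
def Bd (F : ℤ → ℤ → ℂ) (B : ℝ) : Prop :=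
  ∀ (S T : Finset ℤ) (x y : ℤ → ℂ),
    ‖∑ k ∈ S, ∑ m ∈ T, x k * F k m * y m‖ ≤ B * (∑ k ∈ S, ‖x k‖ ^ 2 + ∑ m ∈ T, ‖y m‖ ^ 2)

lemma Bd.mono {F : ℤ → ℤ → ℂ} {B B' : ℝ} (h : Bd F B) (hB : B ≤ B') : Bd F B' := fun S T x y =>
  (h S T x y).trans (by gcongr)

lemma Bd.nonneg {F : ℤ → ℤ → ℂ} {B : ℝ} (h : Bd F B) : 0 ≤ B := by
  have := h {0} {0} (fun _ => 1) (fun _ => 1)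
  have h2 := (norm_nonneg _).trans this
  simp at h2; linarith

lemma Bd.congr {F G : ℤ → ℤ → ℂ} {B : ℝ} (h : Bd F B) (e : ∀ k m, F k m = G k m) : Bd G B := by
  have : F = G := by funext k m; exact e k m
  rwa [← this]

lemma Bd.transpose {F : ℤ → ℤ → ℂ} {B : ℝ} (h : Bd F B) : Bd (fun k m => F m k) B := by
  intro S T x y
  have := h T S y x
  rw [Finset.sum_comm, add_comm (∑ k ∈ S, ‖x k‖ ^ 2)]
  refine le_trans (le_of_eq ?_) this
  congr 1
  refine Finset.sum_congr rfl fun k _ => Finset.sum_congr rfl fun m _ => by ring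

lemma Bd.add {F G : ℤ → ℤ → ℂ} {B C : ℝ} (h : Bd F B) (h' : Bd G C) :
    Bd (fun k m => F k m + G k m) (B + C) := by
  intro S T x y
  have e : ∑ k ∈ S, ∑ m ∈ T, x k * (F k m + G k m) * y m
      = ∑ k ∈ S, ∑ m ∈ T, x k * F k m * y m + ∑ k ∈ S, ∑ m ∈ T, x k * G k m * y m := by
    simp only [← Finset.sum_add_distrib]
    refine Finset.sum_congr rfl fun k _ => Finset.sum_congr rfl fun m _ => by ring
  rw [e, add_mul]
  exact (norm_add_le _ _).trans (add_le_add (h S T x y) (h' S T x y))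

lemma Bd.smul {F : ℤ → ℤ → ℂ} {B : ℝ} (h : Bd F B) (c : ℂ) :
    Bd (fun k m => c * F k m) (‖c‖ * B) := by
  intro S T x y
  have e : ∑ k ∈ S, ∑ m ∈ T, x k * (c * F k m) * y m
      = c * ∑ k ∈ S, ∑ m ∈ T, x k * F k m * y m := by
    simp only [Finset.mul_sum]
    refine Finset.sum_congr rfl fun k _ => Finset.sum_congr rfl fun m _ => by ring
  rw [e, norm_mul, mul_assoc]
  gcongr; exact h S T x y

lemma Bd.neg {F : ℤ → ℤ → ℂ} {B : ℝ} (h : Bd F B) : Bd (fun k m => - F k m) B := by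
  have := h.smul (-1); simpa using this

lemma Bd.sub {F G : ℤ → ℤ → ℂ} {B C : ℝ} (h : Bd F B) (h' : Bd G C) :
    Bd (fun k m => F k m - G k m) (B + C) :=
  (h.add h'.neg).congr fun k m => by ring

lemma Bd.zero : Bd (fun _ _ => 0) 0 := by intro S T x y; simp

lemma Bd.sum {ι : Type*} (s : Finset ι) {F : ι → ℤ → ℤ → ℂ} {B : ι → ℝ}
    (h : ∀ i ∈ s, Bd (F i) (B i)) : Bd (fun k m => ∑ i ∈ s, F i k m) (∑ i ∈ s, B i) := by
  classical
  induction s using Finset.induction_on with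
  | empty => simpa using Bd.zero
  | insert a s ha ih =>
    simp only [Finset.sum_insert ha]
    exact (h a (Finset.mem_insert_self a s)).add
      (ih fun i hi => h i (Finset.mem_insert_of_mem hi))

/-- multiplication by a bounded function of the row and of the column index -/
lemma Bd.mul_left {F : ℤ → ℤ → ℂ} {B : ℝ} (h : Bd F B) {p : ℤ → ℂ} (hp : ∀ k, ‖p k‖ ≤ 1) :
    Bd (fun k m => p k * F k m) B := by
  intro S T x y
  have := h S T (fun k => x k * p k) y
  refine le_trans (le_of_eq ?_) (this.trans ?_)
  · congr 1
    refine Finset.sum_congr rfl fun k _ => Finset.sum_congr rfl fun m _ => by ring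
  · have := h.nonneg
    gcongr with k hk
    rw [norm_mul]
    exact mul_le_of_le_one_right (norm_nonneg _) (hp k)

lemma Bd.mul_left' {F : ℤ → ℤ → ℂ} {B : ℝ} (h : Bd F B) {p : ℤ → ℂ} {c : ℝ} (hc : 0 < c)
    (hp : ∀ k, ‖p k‖ ≤ c) : Bd (fun k m => p k * F k m) (c * B) := by
  have h1 : ∀ k, ‖p k / c‖ ≤ 1 := fun k => by
    rw [norm_div, Complex.norm_real, Real.norm_of_nonneg hc.le]
    exact div_le_one_of_le₀ (hp k) hc.le
  have := (h.mul_left h1).smul (c : ℂ)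
  rw [Complex.norm_real, Real.norm_of_nonneg hc.le] at this
  refine this.congr fun k m => ?_
  have : (c : ℂ) ≠ 0 := by exact_mod_cast hc.ne'
  field_simp

lemma Bd.mul_right' {F : ℤ → ℤ → ℂ} {B : ℝ} (h : Bd F B) {p : ℤ → ℂ} {c : ℝ} (hc : 0 < c)
    (hp : ∀ k, ‖p k‖ ≤ c) : Bd (fun k m => p m * F k m) (c * B) :=
  (h.transpose.mul_left' hc hp).transpose

/-- Limits of kernels. -/
lemma Bd.tsum {F : ℕ → ℤ → ℤ → ℂ} {G : ℤ → ℤ → ℂ} {b : ℕ → ℝ} {B : ℝ}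
    (h : ∀ i, Bd (F i) (b i)) (hb : HasSum b B) (hG : ∀ k m, HasSum (fun i => F i k m) (G k m)) :
    Bd G B := by
  intro S T x y
  have h1 : HasSum (fun i => ∑ k ∈ S, ∑ m ∈ T, x k * F i k m * y m)
      (∑ k ∈ S, ∑ m ∈ T, x k * G k m * y m) :=
    hasSum_sum fun k _ => hasSum_sum fun m _ => ((hG k m).mul_left _).mul_right _
  have h2 := hb.mul_right (∑ k ∈ S, ‖x k‖ ^ 2 + ∑ m ∈ T, ‖y m‖ ^ 2)
  rw [← h1.tsum_eq]
  exact tsum_of_norm_bounded h2 fun i => h i S T x y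

/-- The block lemma. -/
lemma Bd.block {F : ℕ → ℤ → ℤ → ℂ} {B : ℝ} (hF : ∀ n, Bd (F n) B) (a : ℤ → ℕ)
    (Y : ℤ → ℕ → ℂ) {C : ℝ} (hC : 1 ≤ C) (hY : ∀ k (N : Finset ℕ), ∑ n ∈ N, ‖Y k n‖ ^ 2 ≤ C) :
    Bd (fun k m => Y k (a m) * F (a m) k m) (B * C) := by
  classical
  intro S T x y
  have hB := (hF 0).nonneg
  set N := T.image a with hN
  have e : ∑ k ∈ S, ∑ m ∈ T, x k * (Y k (a m) * F (a m) k m) * y m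
      = ∑ n ∈ N, ∑ k ∈ S, ∑ m ∈ T.filter (fun m => a m = n), (x k * Y k n) * F n k m * y m := by
    rw [Finset.sum_comm (s := N)]
    refine Finset.sum_congr rfl fun k _ => ?_
    refine (Finset.sum_fiberwise_of_maps_to (s := T) (t := N) (g := a)
      (fun m hm => Finset.mem_image_of_mem a hm) _).symm.trans ?_
    refine Finset.sum_congr rfl fun n _ => Finset.sum_congr rfl fun m hm => ?_
    rw [(Finset.mem_filter.1 hm).2]; ring
  rw [e]
  calc _ ≤ ∑ n ∈ N, ‖∑ k ∈ S, ∑ m ∈ T.filter (fun m => a m = n), (x k * Y k n) * F n k m * y m‖ :=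
        norm_sum_le _ _
    _ ≤ ∑ n ∈ N, B * (∑ k ∈ S, ‖x k * Y k n‖ ^ 2
          + ∑ m ∈ T.filter (fun m => a m = n), ‖y m‖ ^ 2) := by
        gcongr with n hn
        exact hF n S _ (fun k => x k * Y k n) y
    _ = B * (∑ k ∈ S, ‖x k‖ ^ 2 * ∑ n ∈ N, ‖Y k n‖ ^ 2 + ∑ m ∈ T, ‖y m‖ ^ 2) := by
        rw [← Finset.mul_sum, Finset.sum_add_distrib, Finset.sum_fiberwise_of_maps_to
          (fun m hm => Finset.mem_image_of_mem a hm), Finset.sum_comm]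
        congr 2
        refine Finset.sum_congr rfl fun k _ => ?_
        rw [Finset.mul_sum]
        refine Finset.sum_congr rfl fun n _ => ?_
        rw [norm_mul, mul_pow]
    _ ≤ B * (∑ k ∈ S, ‖x k‖ ^ 2 * C + (∑ m ∈ T, ‖y m‖ ^ 2) * C) := by
        gcongr with k hk
        · exact hY k N
        · exact le_mul_of_one_le_right (Finset.sum_nonneg fun _ _ => by positivity) hC
    _ = _ := by rw [← Finset.sum_mul]; ring

/-- Passing to infinite sums. -/
lemma Bd.norm_tsum_le {F : ℤ → ℤ → ℂ} {B : ℝ} (h : Bd F B) {x y : ℤ → ℂ}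
    (hx : Summable fun k => ‖x k‖ ^ 2) (hy : Summable fun k => ‖y k‖ ^ 2)
    (hs : Summable fun p : ℤ × ℤ => x p.1 * F p.1 p.2 * y p.2) :
    ‖∑' p : ℤ × ℤ, x p.1 * F p.1 p.2 * y p.2‖ ≤ B * (∑' k, ‖x k‖ ^ 2 + ∑' k, ‖y k‖ ^ 2) := by
  have h1 := hs.hasSum.comp Filter.tendsto_finsetProd_atTop
  refine le_of_tendsto h1.norm (Filter.Eventually.of_forall fun P => ?_)
  simp only [Function.comp]
  rw [Finset.sum_product]
  refine (h P.1 P.2 x y).trans ?_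
  have := h.nonneg
  gcongr
  · exact hx.sum_le_tsum _ fun _ _ => by positivity
  · exact hy.sum_le_tsum _ fun _ _ => by positivity

end S17

namespace S17
open FC MeasureTheory

/-- The character `e^{ikx}`. -/
def ee (k : ℤ) (x : ℝ) : ℂ := Complex.exp (Complex.I * (k : ℂ) * (x : ℂ))

lemma ee_norm (k : ℤ) (x : ℝ) : ‖ee k x‖ = 1 := by
  unfold ee
  rw [show Complex.I * (k : ℂ) * (x : ℂ) = ((k * x : ℝ) : ℂ) * Complex.I by push_cast; ring]
  exact Complex.norm_exp_ofReal_mul_I _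

lemma ee_add (k m : ℤ) (x : ℝ) : ee (k + m) x = ee k x * ee m x := by
  unfold ee; rw [← Complex.exp_add]; congr 1; push_cast; ring

lemma ee_add_right (k : ℤ) (x y : ℝ) : ee k (x + y) = ee k x * ee k y := by
  unfold ee; rw [← Complex.exp_add]; congr 1; push_cast; ring

lemma ee_conj (k : ℤ) (x : ℝ) : (starRingEnd ℂ) (ee k x) = ee (-k) x := by
  unfold ee; rw [← Complex.exp_conj]; congr 1; simp

lemma ee_continuous (k : ℤ) : Continuous (ee k) := by unfold ee; fun_prop

lemma eval_eq (c : FC) (x : ℝ) : eval c x = ∑' k, c k * ee k x := rfl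

lemma eval_summable {c : FC} (hc : Summable fun k => ‖c k‖) (x : ℝ) :
    Summable fun k => c k * ee k x := by
  refine Summable.of_norm ?_
  simpa [ee_norm] using hc

lemma eval_norm_le {c : FC} (hc : Summable fun k => ‖c k‖) (x : ℝ) :
    ‖eval c x‖ ≤ ∑' k, ‖c k‖ := by
  refine tsum_of_norm_bounded hc.hasSum fun k => ?_
  have := ee_norm k x
  rw [norm_mul]; unfold ee at this; rw [this, mul_one]

lemma eval_le_linfty {c : FC} (hc : Summable fun k => ‖c k‖) (x : ℝ) :
    ‖eval c x‖ ≤ linfty c :=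
  le_ciSup (f := fun x => ‖eval c x‖)
    ⟨∑' k, ‖c k‖, by rintro _ ⟨y, rfl⟩; exact eval_norm_le hc y⟩ x

lemma linfty_nonneg (c : FC) : 0 ≤ linfty c := Real.iSup_nonneg fun _ => norm_nonneg _

lemma eval_continuous {c : FC} (hc : Summable fun k => ‖c k‖) : Continuous (eval c) := by
  have : eval c = fun x => ∑' k, c k * ee k x := rfl
  rw [this]
  refine continuous_tsum (fun k => continuous_const.mul (ee_continuous k)) hc fun k x => ?_
  simp [ee_norm]

lemma integral_ee (n : ℤ) : ∫ x in (0 : ℝ)..(2 * Real.pi), ee n x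
    = if n = 0 then (2 * Real.pi : ℂ) else 0 := by
  split_ifs with h
  · subst h; simp [ee]
  · unfold ee
    have hc : Complex.I * (n : ℂ) ≠ 0 := mul_ne_zero Complex.I_ne_zero (by exact_mod_cast h)
    rw [integral_exp_mul_complex hc]
    have : Complex.exp (Complex.I * (n : ℂ) * ((2 * Real.pi : ℝ) : ℂ)) = 1 := by
      rw [Complex.exp_eq_one_iff]; exact ⟨n, by push_cast; ring⟩
    rw [this]; simp

lemma integral_eval_ee {c : FC} (hc : Summable fun k => ‖c k‖) (n : ℤ) :
    ∫ x in (0 : ℝ)..(2 * Real.pi), eval c x * ee (-n) x = 2 * Real.pi * c n := by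
  have h := intervalIntegral.hasSum_integral_of_dominated_convergence (μ := volume)
    (a := 0) (b := 2 * Real.pi)
    (F := fun k x => c k * ee k x * ee (-n) x) (f := fun x => eval c x * ee (-n) x)
    (fun k _ => ‖c k‖)
    (fun k => ((continuous_const.mul (ee_continuous k)).mul
      (ee_continuous (-n))).aestronglyMeasurable)
    (fun k => Filter.Eventually.of_forall fun x _ => by simp [ee_norm])
    (Filter.Eventually.of_forall fun x _ => hc)
    (by simp)
    (Filter.Eventually.of_forall fun x _ => (eval_summable hc x).hasSum.mul_right _)
  have h2 : ∀ k, ∫ x in (0 : ℝ)..(2 * Real.pi), c k * ee k x * ee (-n) x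
      = if k = n then 2 * Real.pi * c n else 0 := by
    intro k
    have : ∀ x, c k * ee k x * ee (-n) x = c k * ee (k - n) x := fun x => by
      rw [sub_eq_add_neg, ee_add]; ring
    simp_rw [this]
    rw [intervalIntegral.integral_const_mul, integral_ee]
    by_cases hk : k = n
    · subst hk; simp; ring
    · simp [hk, sub_eq_zero]
  simp_rw [h2] at h
  exact h.unique (hasSum_ite_eq n _)

lemma parseval (S : Finset ℤ) (x : ℤ → ℂ) :
    ∫ t in (0 : ℝ)..(2 * Real.pi), ‖∑ k ∈ S, x k * ee k t‖ ^ 2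
      = 2 * Real.pi * ∑ k ∈ S, ‖x k‖ ^ 2 := by
  have h1 : ∀ t, ((‖∑ k ∈ S, x k * ee k t‖ ^ 2 : ℝ) : ℂ)
      = ∑ k ∈ S, ∑ m ∈ S, x k * (starRingEnd ℂ) (x m) * ee (k - m) t := by
    intro t
    rw [Complex.ofReal_pow, ← Complex.mul_conj', map_sum, Finset.sum_mul_sum]
    refine Finset.sum_congr rfl fun k _ => Finset.sum_congr rfl fun m _ => ?_
    rw [map_mul, ee_conj, sub_eq_add_neg, ee_add]; ring
  apply Complex.ofReal_injective
  rw [← intervalIntegral.integral_ofReal]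
  simp_rw [h1]
  have hcont : ∀ k m : ℤ, Continuous fun t => x k * (starRingEnd ℂ) (x m) * ee (k - m) t :=
    fun k m => continuous_const.mul (ee_continuous _)
  rw [intervalIntegral.integral_finsetSum fun k _ => Continuous.intervalIntegrable
    (continuous_finsetSum _ fun m _ => hcont k m) _ _]
  push_cast
  rw [Finset.mul_sum]
  refine Finset.sum_congr rfl fun k hk => ?_
  rw [intervalIntegral.integral_finsetSum fun m _ => Continuous.intervalIntegrable
    (hcont k m) _ _]
  simp_rw [intervalIntegral.integral_const_mul, integral_ee, sub_eq_zero]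
  simp only [mul_ite, mul_zero]
  rw [Finset.sum_ite_eq]
  simp only [hk, if_true]
  rw [Complex.mul_conj']; ring

/-- A Toeplitz kernel is bounded by the sup norm of its symbol. -/
lemma Bd.toeplitz {c : FC} (hc : Summable fun k => ‖c k‖) :
    Bd (fun k m => c (k - m)) (linfty c) := by
  intro S T x y
  set X : ℝ → ℂ := fun t => ∑ k ∈ S, (starRingEnd ℂ) (x k) * ee k t with hX
  set Y : ℝ → ℂ := fun t => ∑ m ∈ T, y m * ee m t with hY
  have hXc : Continuous X := continuous_finsetSum _ fun m _ =>
    continuous_const.mul (ee_continuous _)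
  have hYc : Continuous Y := continuous_finsetSum _ fun m _ =>
    continuous_const.mul (ee_continuous _)
  have hec := eval_continuous hc
  have hpi : (0 : ℝ) < 2 * Real.pi := by positivity
  have e1 : (2 * Real.pi : ℂ) * ∑ k ∈ S, ∑ m ∈ T, x k * c (k - m) * y m
      = ∫ t in (0 : ℝ)..(2 * Real.pi), eval c t * ((starRingEnd ℂ) (X t) * Y t) := by
    have h1 : ∀ t, eval c t * ((starRingEnd ℂ) (X t) * Y t)
        = ∑ k ∈ S, ∑ m ∈ T, x k * y m * (eval c t * ee (-(k - m)) t) := by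
      intro t
      simp only [hX, hY]
      rw [map_sum, Finset.sum_mul_sum, Finset.mul_sum]
      refine Finset.sum_congr rfl fun k _ => ?_
      rw [Finset.mul_sum]
      refine Finset.sum_congr rfl fun m _ => ?_
      rw [map_mul, ee_conj, Complex.conj_conj, show -(k - m) = -k + m by ring, ee_add]; ring
    simp_rw [h1]
    have hcont : ∀ k m : ℤ, Continuous fun t => x k * y m * (eval c t * ee (-(k - m)) t) :=
      fun k m => continuous_const.mul (hec.mul (ee_continuous _))
    rw [intervalIntegral.integral_finsetSum fun k _ => Continuous.intervalIntegrable
      (continuous_finsetSum _ fun m _ => hcont k m) _ _, Finset.mul_sum]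
    refine Finset.sum_congr rfl fun k hk => ?_
    rw [intervalIntegral.integral_finsetSum fun m _ => Continuous.intervalIntegrable
      (hcont k m) _ _, Finset.mul_sum]
    refine Finset.sum_congr rfl fun m hm => ?_
    rw [intervalIntegral.integral_const_mul, integral_eval_ee hc]; ring
  have e2 : ‖(2 * Real.pi : ℂ) * ∑ k ∈ S, ∑ m ∈ T, x k * c (k - m) * y m‖
      ≤ 2 * Real.pi * (linfty c * (∑ k ∈ S, ‖x k‖ ^ 2 + ∑ m ∈ T, ‖y m‖ ^ 2)) := by
    rw [e1]
    calc _ ≤ ∫ t in (0 : ℝ)..(2 * Real.pi), linfty c * (‖X t‖ ^ 2 + ‖Y t‖ ^ 2) := by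
          refine intervalIntegral.norm_integral_le_of_norm_le hpi.le
            (Filter.Eventually.of_forall fun t _ => ?_)
            (Continuous.intervalIntegrable (by fun_prop) _ _)
          rw [norm_mul, norm_mul, RCLike.norm_conj]
          have := eval_le_linfty hc t
          have h0 := linfty_nonneg c
          gcongr
          nlinarith [sq_nonneg (‖X t‖ - ‖Y t‖), sq_nonneg (‖X t‖), sq_nonneg (‖Y t‖)]
      _ = _ := by
          rw [intervalIntegral.integral_const_mul, intervalIntegral.integral_add
            (Continuous.intervalIntegrable (by fun_prop) _ _)
            (Continuous.intervalIntegrable (by fun_prop) _ _)]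
          simp only [hX, hY]
          rw [parseval, parseval]
          simp only [RCLike.norm_conj]; ring
  rw [norm_mul] at e2
  have h3 : ‖(2 * Real.pi : ℂ)‖ = 2 * Real.pi := by
    rw [show (2 * Real.pi : ℂ) = ((2 * Real.pi : ℝ) : ℂ) by push_cast; ring, Complex.norm_real,
      Real.norm_of_nonneg hpi.le]
  rw [h3] at e2
  exact le_of_mul_le_mul_left e2 hpi

end S17

namespace S17
open FC MeasureTheory SchwartzMap FourierTransform

lemma schwartz_rep (ψ : SchwartzMap ℝ ℝ) : ∃ G : ℝ → ℂ, Integrable G ∧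
    Integrable (fun ξ => |ξ| * ‖G ξ‖) ∧ ∀ x : ℝ, ((ψ x : ℝ) : ℂ)
      = ∫ ξ, G ξ * Complex.exp (Complex.I * ((x * (2 * Real.pi * ξ) : ℝ) : ℂ)) := by
  set f : SchwartzMap ℝ ℂ := SchwartzMap.postcompCLM Complex.ofRealCLM ψ with hf
  have hfx : ∀ x, f x = (ψ x : ℂ) := fun x => rfl
  refine ⟨(𝓕 f : SchwartzMap ℝ ℂ), (𝓕 f).integrable, ?_, fun x => ?_⟩
  · have := (𝓕 f).integrable_pow_mul volume 1
    simpa using this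
  · have h1 : 𝓕⁻ (𝓕 f) = f := FourierTransform.fourierInv_fourier_eq f
    rw [← hfx, ← h1, fourierInv_coe, Real.fourierInv_eq']
    congr 1
    ext ξ
    rw [h1, smul_eq_mul, mul_comm]
    congr 2
    simp
    ring

lemma ee_eq (k : ℤ) (x : ℝ) : ee k x = Complex.exp (Complex.I * ((k * x : ℝ) : ℂ)) := by
  unfold ee; congr 1; push_cast; ring

lemma rep_ee {ψ : SchwartzMap ℝ ℝ} {G : ℝ → ℂ} (h : ∀ x : ℝ, ((ψ x : ℝ) : ℂ)
      = ∫ ξ, G ξ * Complex.exp (Complex.I * ((x * (2 * Real.pi * ξ) : ℝ) : ℂ))) (ε : ℝ) (k : ℤ) :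
    ((ψ (ε * k) : ℝ) : ℂ) = ∫ ξ, G ξ * ee k (2 * Real.pi * ε * ξ) := by
  rw [h]; congr 1; ext ξ; rw [ee_eq]; congr 4; ring

lemma eval_Jmol {ψ : SchwartzMap ℝ ℝ} {G : ℝ → ℂ} (hG : Integrable G)
    (h : ∀ x : ℝ, ((ψ x : ℝ) : ℂ)
      = ∫ ξ, G ξ * Complex.exp (Complex.I * ((x * (2 * Real.pi * ξ) : ℝ) : ℂ))) (ε : ℝ)
    {c : FC} (hc : Summable fun k => ‖c k‖) (x : ℝ) :
    eval (Jmol ψ ε c) x = ∫ ξ, G ξ * eval c (x + 2 * Real.pi * ε * ξ) := by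
  have hintg : ∀ k : ℤ, Integrable fun ξ => G ξ * (c k * ee k (x + 2 * Real.pi * ε * ξ)) := by
    intro k
    refine Integrable.mul_bdd (c := ‖c k‖) hG ?_ ?_
    · refine Continuous.aestronglyMeasurable ?_
      exact continuous_const.mul ((ee_continuous k).comp (by fun_prop))
    · exact Filter.Eventually.of_forall fun ξ => by simp [ee_norm]
  have hs := hasSum_integral_of_summable_integral_norm hintg (by
    have : ∀ k, ∫ ξ, ‖G ξ * (c k * ee k (x + 2 * Real.pi * ε * ξ))‖ = (∫ ξ, ‖G ξ‖) * ‖c k‖ := by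
      intro k
      simp only [norm_mul, ee_norm, mul_one]
      rw [integral_mul_const]
    simp_rw [this]
    exact hc.mul_left _)
  have e1 : ∀ ξ, ∑' k, G ξ * (c k * ee k (x + 2 * Real.pi * ε * ξ))
      = G ξ * eval c (x + 2 * Real.pi * ε * ξ) := fun ξ => by rw [tsum_mul_left]; rfl
  simp_rw [e1] at hs
  rw [← hs.tsum_eq, eval_eq]
  refine tsum_congr fun k => ?_
  unfold Jmol mult
  rw [rep_ee h, mul_assoc, ← integral_mul_const]
  congr 1; ext ξ
  rw [ee_add_right]; ring

lemma Jmol_summable (ψ : SchwartzMap ℝ ℝ) (ε : ℝ)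
    {c : FC} (hc : Summable fun k => ‖c k‖) : Summable fun k => ‖Jmol ψ ε c k‖ := by
  obtain ⟨C, -, hC⟩ := ψ.decay 0 0
  simp only [pow_zero, one_mul, norm_iteratedFDeriv_zero] at hC
  refine Summable.of_nonneg_of_le (fun _ => norm_nonneg _) (fun k => ?_) (hc.mul_left C)
  unfold Jmol mult
  rw [norm_mul, Complex.norm_real]
  gcongr
  exact hC _

lemma linfty_Jmol (ψ : SchwartzMap ℝ ℝ) : ∃ C : ℝ, 0 ≤ C ∧ ∀ (ε : ℝ) (c : FC),
    (Summable fun k => ‖c k‖) → linfty (Jmol ψ ε c) ≤ C * linfty c := by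
  obtain ⟨G, hG, -, h⟩ := schwartz_rep ψ
  refine ⟨∫ ξ, ‖G ξ‖, integral_nonneg fun _ => norm_nonneg _, fun ε c hc => ?_⟩
  refine Real.iSup_le (fun x => ?_) (mul_nonneg (integral_nonneg fun _ => norm_nonneg _)
    (linfty_nonneg c))
  rw [eval_Jmol hG h ε hc, ← integral_mul_const]
  refine norm_integral_le_of_norm_le (hG.norm.mul_const _) (Filter.Eventually.of_forall fun ξ => ?_)
  rw [norm_mul]
  gcongr
  exact eval_le_linfty hc _

lemma ee_hasDerivAt (k : ℤ) (x : ℝ) : HasDerivAt (ee k) (Complex.I * k * ee k x) x := by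
  have h1 : HasDerivAt (fun x : ℝ => Complex.I * (k : ℂ) * (x : ℂ)) (Complex.I * k) x := by
    have := (Complex.ofRealCLM.hasDerivAt (x := x)).const_mul (Complex.I * (k : ℂ))
    simpa using this
  have := h1.cexp
  exact this.congr_deriv (mul_comm _ _)

lemma eval_hasDerivAt {c : FC} (hc : Summable fun k => ‖c k‖)
    (hd : Summable fun k => ‖D1 c k‖) (x : ℝ) : HasDerivAt (eval c) (eval (D1 c) x) x := by
  have := hasDerivAt_tsum (𝕜 := ℝ) (g := fun k x => c k * ee k x)
    (g' := fun k x => D1 c k * ee k x) (y₀ := 0) hd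
    (fun k y => by
      have := (ee_hasDerivAt k y).const_mul (c k)
      exact this.congr_deriv (by unfold D1; ring))
    (fun k y => by simp [ee_norm]) (eval_summable hc 0) x
  exact this

lemma eval_lip {c : FC} (hc : Summable fun k => ‖c k‖)
    (hd : Summable fun k => ‖D1 c k‖) (x y : ℝ) :
    ‖eval c y - eval c x‖ ≤ linfty (D1 c) * |y - x| := by
  have := Convex.norm_image_sub_le_of_norm_hasDerivWithin_le (f := eval c) (f' := eval (D1 c))
    (s := Set.univ) (C := linfty (D1 c)) (x := x) (y := y)
    (fun z _ => (eval_hasDerivAt hc hd z).hasDerivWithinAt)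
    (fun z _ => eval_le_linfty hd z) convex_univ trivial trivial
  simpa using this

lemma linfty_Jodd (ψ : SchwartzMap ℝ ℝ) : ∃ C : ℝ, 0 ≤ C ∧ ∀ (ε : ℝ) (c : FC),
    (Summable fun k => ‖c k‖) → (Summable fun k => ‖D1 c k‖) →
    linfty (fun n => ((ψ (ε * n) - ψ (-(ε * n)) : ℝ) : ℂ) * c n) ≤ C * |ε| * linfty (D1 c) := by
  obtain ⟨G, hG, hG1, h⟩ := schwartz_rep ψ
  have h0 : 0 ≤ ∫ ξ, |ξ| * ‖G ξ‖ := integral_nonneg fun _ => by positivity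
  refine ⟨4 * Real.pi * ∫ ξ, |ξ| * ‖G ξ‖, by positivity, fun ε c hc hd => ?_⟩
  have hl := linfty_nonneg (D1 c)
  refine Real.iSup_le (fun x => ?_) (by positivity)
  have e0 : eval (fun n => ((ψ (ε * n) - ψ (-(ε * n)) : ℝ) : ℂ) * c n) x
      = eval (Jmol ψ ε c) x - eval (Jmol ψ (-ε) c) x := by
    simp only [eval_eq]
    rw [← (eval_summable (Jmol_summable ψ ε hc) x).tsum_sub
      (eval_summable (Jmol_summable ψ (-ε) hc) x)]
    refine tsum_congr fun k => ?_
    unfold Jmol mult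
    push_cast
    rw [neg_mul]; ring
  have hI : ∀ δ : ℝ, Integrable fun ξ => G ξ * eval c (x + 2 * Real.pi * δ * ξ) := fun δ => by
    refine Integrable.mul_bdd (c := linfty c) hG ?_ ?_
    · exact ((eval_continuous hc).comp (by fun_prop)).aestronglyMeasurable
    · exact Filter.Eventually.of_forall fun ξ => eval_le_linfty hc _
  rw [e0, eval_Jmol hG h ε hc, eval_Jmol hG h (-ε) hc, ← integral_sub (hI _) (hI _)]
  have e1 : 4 * Real.pi * (∫ ξ, |ξ| * ‖G ξ‖) * |ε| * linfty (D1 c)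
      = ∫ ξ, 4 * Real.pi * |ε| * linfty (D1 c) * (|ξ| * ‖G ξ‖) := by
    rw [integral_const_mul]; ring
  rw [e1]
  refine norm_integral_le_of_norm_le (hG1.const_mul _) (Filter.Eventually.of_forall fun ξ => ?_)
  rw [← mul_sub, norm_mul]
  have := eval_lip hc hd (x + 2 * Real.pi * (-ε) * ξ) (x + 2 * Real.pi * ε * ξ)
  have e2 : |x + 2 * Real.pi * ε * ξ - (x + 2 * Real.pi * (-ε) * ξ)| = 4 * Real.pi * |ε| * |ξ| := by
    rw [show x + 2 * Real.pi * ε * ξ - (x + 2 * Real.pi * (-ε) * ξ) = 4 * Real.pi * ε * ξ by ring,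
      abs_mul, abs_mul, abs_of_pos (by positivity : 0 < 4 * Real.pi)]
  rw [e2] at this
  calc _ ≤ ‖G ξ‖ * (linfty (D1 c) * (4 * Real.pi * |ε| * |ξ|)) := by gcongr
    _ = _ := by ring

end S17

namespace S17
open FC MeasureTheory

/-- The square-root factor of the resolvent integrand. -/
def hL (r t A : ℝ) : ℝ := t ^ (r / 2) / (t + A)

lemma hL_meas (r A : ℝ) : Measurable fun t => hL r t A := by unfold hL; fun_prop

lemma hL_mul {r t A B : ℝ} (ht : 0 < t) :
    hL r t A * hL r t B = t ^ r / ((t + A) * (t + B)) := by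
  unfold hL
  rw [div_mul_div_comm, ← Real.rpow_add ht]; congr 2; ring

lemma exists_lowner {r : ℝ} (hr : r ∈ Set.Ioo (0 : ℝ) 1) : ∃ μ : Measure ℝ,
    (∀ A > 0, ∀ B > 0, Integrable (fun t => hL r t A * hL r t B) μ ∧
      A ^ r - B ^ r = (A - B) * ∫ t, hL r t A * hL r t B ∂μ) ∧
    (∀ A > 0, ∫ t, hL r t A * hL r t A ∂μ ≤ A ^ (r - 1)) := by
  obtain ⟨μ, hμ⟩ := Real.exists_measure_rpow_eq_integral_rpowIntegrand₀₁ hr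
  have key : ∀ A > 0, ∀ t ∈ Set.Ioi (0 : ℝ),
      Real.rpowIntegrand₀₁ r t A = A * (t ^ r / (t * (t + A))) := by
    intro A hA t ht
    have ht : 0 < t := ht
    unfold Real.rpowIntegrand₀₁
    have : t + A ≠ 0 := by positivity
    field_simp; ring
  have hI : ∀ A > 0, IntegrableOn (fun t => t ^ r / (t * (t + A))) (Set.Ioi 0) μ := by
    intro A hA
    have h1 := ((hμ A hA.le).1.congr_fun (key A hA) measurableSet_Ioi)
    have : IntegrableOn (fun t => A⁻¹ * (A * (t ^ r / (t * (t + A))))) (Set.Ioi 0) μ :=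
      h1.const_mul A⁻¹
    refine this.congr_fun (fun t _ => ?_) measurableSet_Ioi
    exact inv_mul_cancel_left₀ hA.ne' _
  have hintg : ∀ A > 0, ∀ B > 0, IntegrableOn (fun t => hL r t A * hL r t B) (Set.Ioi 0) μ := by
    intro A hA B hB
    refine Integrable.mono' (hI A hA)
      (((hL_meas r A).mul (hL_meas r B)).aestronglyMeasurable) ?_
    refine (ae_restrict_iff' measurableSet_Ioi).2 (Filter.Eventually.of_forall fun t ht => ?_)
    have ht : 0 < t := ht
    rw [hL_mul ht, Real.norm_of_nonneg (by positivity)]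
    refine div_le_div_of_nonneg_left (by positivity) (by positivity) ?_
    nlinarith [mul_pos hB (add_pos ht hA)]
  refine ⟨μ.restrict (Set.Ioi 0), fun A hA B hB => ⟨hintg A hA B hB, ?_⟩, fun A hA => ?_⟩
  · rw [(hμ A hA.le).2, (hμ B hB.le).2, ← integral_sub (hμ A hA.le).1 (hμ B hB.le).1,
      ← integral_const_mul]
    refine setIntegral_congr_fun measurableSet_Ioi fun t ht => ?_
    have ht : 0 < t := ht
    rw [hL_mul ht]
    unfold Real.rpowIntegrand₀₁
    have h1 : t + A ≠ 0 := by positivity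
    have h2 : t + B ≠ 0 := by positivity
    field_simp; ring
  · have h1 : ∫ t in Set.Ioi 0, hL r t A * hL r t A ∂μ
        ≤ ∫ t in Set.Ioi 0, t ^ r / (t * (t + A)) ∂μ := by
      refine setIntegral_mono_on (hintg A hA A hA) (hI A hA) measurableSet_Ioi fun t ht => ?_
      have ht : 0 < t := ht
      rw [hL_mul ht]
      refine div_le_div_of_nonneg_left (by positivity) (by positivity) ?_
      nlinarith [mul_pos hA (add_pos ht hA)]
    have h2 : A ^ r = A * ∫ t in Set.Ioi 0, t ^ r / (t * (t + A)) ∂μ := by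
      rw [(hμ A hA.le).2, ← integral_const_mul]
      exact setIntegral_congr_fun measurableSet_Ioi (key A hA)
    rw [Real.rpow_sub_one hA.ne', h2, mul_div_cancel_left₀ _ hA.ne']
    exact h1

lemma Bd.lowner {r : ℝ} (hr : r ∈ Set.Ioo (0 : ℝ) 1) : ∃ Λ : ℝ → ℝ → ℝ,
    (∀ A > 0, ∀ B > 0, A ^ r - B ^ r = (A - B) * Λ A B) ∧
    ∀ (F : ℤ → ℤ → ℂ) (B : ℝ), Bd F B → Bd (fun k m =>
      ((Λ (1 + (k : ℝ) ^ 2) (1 + (m : ℝ) ^ 2) * (wt ((1 - r) / 2) k * wt ((1 - r) / 2) m) : ℝ) : ℂ)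
        * F k m) B := by
  obtain ⟨μ, h1, h2⟩ := exists_lowner hr
  refine ⟨fun A B => ∫ t, hL r t A * hL r t B ∂μ, fun A hA B hB => (h1 A hA B hB).2,
    fun F B hF S T x y => ?_⟩
  set c : ℤ → ℝ := fun k => wt ((1 - r) / 2) k with hc
  set H : ℝ → ℤ → ℝ := fun t k => hL r t (1 + (k : ℝ) ^ 2) with hH
  have hintg : ∀ k m, Integrable (fun t => H t k * H t m) μ := fun k m =>
    (h1 _ (base_pos k) _ (base_pos m)).1
  have hint2 : ∀ k m, Integrable (fun t => x k * (c k : ℂ) * F k m * (y m * (c m : ℂ))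
      * ((H t k * H t m : ℝ) : ℂ)) μ := fun k m => (hintg k m).ofReal.const_mul _
  have hB := hF.nonneg
  have e1 : ∑ k ∈ S, ∑ m ∈ T, x k * (((∫ t, H t k * H t m ∂μ) * (c k * c m) : ℝ) * F k m) * y m
      = ∫ t, ∑ k ∈ S, ∑ m ∈ T, (x k * (c k * H t k : ℝ)) * F k m * (y m * (c m * H t m : ℝ)) ∂μ := by
    have : ∀ t, ∑ k ∈ S, ∑ m ∈ T, (x k * (c k * H t k : ℝ)) * F k m * (y m * (c m * H t m : ℝ))
        = ∑ k ∈ S, ∑ m ∈ T, x k * (c k : ℂ) * F k m * (y m * (c m : ℂ))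
          * ((H t k * H t m : ℝ) : ℂ) := fun t =>
      Finset.sum_congr rfl fun k _ => Finset.sum_congr rfl fun m _ => by push_cast; ring
    simp_rw [this]
    rw [integral_finsetSum _ fun k _ => integrable_finsetSum _ fun m _ => hint2 k m]
    refine Finset.sum_congr rfl fun k _ => ?_
    rw [integral_finsetSum _ fun m _ => hint2 k m]
    refine Finset.sum_congr rfl fun m _ => ?_
    rw [integral_const_mul, integral_complex_ofReal]
    push_cast; ring
  have hsq : ∀ (z : ℤ → ℂ) k t, ‖z k * (c k * H t k : ℝ)‖ ^ 2
      = ‖z k‖ ^ 2 * c k ^ 2 * (H t k * H t k) := fun z k t => by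
    rw [norm_mul, mul_pow, Complex.norm_real, Real.norm_eq_abs, sq_abs]; ring
  have hint3 : ∀ (U : Finset ℤ) (z : ℤ → ℂ),
      Integrable (fun t => ∑ k ∈ U, ‖z k * (c k * H t k : ℝ)‖ ^ 2) μ := fun U z => by
    simp_rw [hsq]
    exact integrable_finsetSum _ fun k _ => (hintg k k).const_mul _
  have hle : ∀ (U : Finset ℤ) (z : ℤ → ℂ),
      ∫ t, ∑ k ∈ U, ‖z k * (c k * H t k : ℝ)‖ ^ 2 ∂μ ≤ ∑ k ∈ U, ‖z k‖ ^ 2 := fun U z => by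
    simp_rw [hsq]
    rw [integral_finsetSum _ fun k _ => (hintg k k).const_mul _]
    refine Finset.sum_le_sum fun k _ => ?_
    rw [integral_const_mul]
    have h3 := h2 _ (base_pos k)
    have h4 : c k ^ 2 * (1 + (k : ℝ) ^ 2) ^ (r - 1) = 1 := by
      simp only [hc]
      rw [wt_half_sq]
      unfold wt
      rw [← Real.rpow_add (base_pos k)]; simp
    calc _ ≤ ‖z k‖ ^ 2 * c k ^ 2 * (1 + (k : ℝ) ^ 2) ^ (r - 1) := by gcongr
      _ = ‖z k‖ ^ 2 := by rw [mul_assoc, h4, mul_one]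
  rw [e1]
  calc _ ≤ ∫ t, B * (∑ k ∈ S, ‖x k * (c k * H t k : ℝ)‖ ^ 2
          + ∑ m ∈ T, ‖y m * (c m * H t m : ℝ)‖ ^ 2) ∂μ := by
        refine norm_integral_le_of_norm_le (((hint3 S x).add (hint3 T y)).const_mul B)
          (Filter.Eventually.of_forall fun t => ?_)
        exact hF S T _ _
    _ ≤ _ := by
        rw [integral_const_mul, integral_add (hint3 S x) (hint3 T y)]
        gcongr
        · exact hle S x
        · exact hle T y

end S17

namespace S17
open FC MeasureTheory

/-- Dyadic block index. -/
def aa (k : ℤ) : ℕ := Nat.log 2 k.natAbs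

lemma natAbs_cast (k : ℤ) : ((k.natAbs : ℕ) : ℝ) = |(k : ℝ)| := by
  rw [Nat.cast_natAbs]; push_cast; rfl

lemma aa_le {k : ℤ} (hk : k ≠ 0) : (2 : ℝ) ^ aa k ≤ |(k : ℝ)| := by
  have := Nat.pow_log_le_self 2 (Int.natAbs_ne_zero.2 hk)
  rw [← natAbs_cast]; exact_mod_cast this

lemma lt_aa (k : ℤ) : |(k : ℝ)| + 1 ≤ (2 : ℝ) ^ (aa k + 1) := by
  have := Nat.lt_pow_succ_log_self (b := 2) (by norm_num) k.natAbs
  rw [← natAbs_cast]; exact_mod_cast this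

lemma aa_zero : aa 0 = 0 := by simp [aa]

lemma aa_base_le (k : ℤ) : (4 : ℝ) ^ aa k ≤ 1 + (k : ℝ) ^ 2 := by
  by_cases hk : k = 0
  · subst hk; simp [aa_zero]
  · have := aa_le hk
    have h2 : (4 : ℝ) ^ aa k = (2 ^ aa k) ^ 2 := by rw [← pow_mul, mul_comm, pow_mul]; norm_num
    rw [h2, ← sq_abs (k : ℝ)]
    have : (0 : ℝ) < 2 ^ aa k := by positivity
    nlinarith

lemma base_le_aa (k : ℤ) : 1 + (k : ℝ) ^ 2 ≤ 4 * (4 : ℝ) ^ aa k := by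
  have := lt_aa k
  have h2 : 4 * (4 : ℝ) ^ aa k = (2 ^ (aa k + 1)) ^ 2 := by
    rw [← pow_mul, mul_comm (aa k + 1), pow_mul, pow_succ]; norm_num; ring
  rw [h2, ← sq_abs (k : ℝ)]
  have : (0 : ℝ) < 2 ^ (aa k + 1) := by positivity
  nlinarith [abs_nonneg (k : ℝ)]

/-- The block weight `4^{α n}`. -/
def TT (α : ℝ) (n : ℕ) : ℝ := ((4 : ℝ) ^ n) ^ α

lemma TT_pos (α : ℝ) (n : ℕ) : 0 < TT α n := by unfold TT; positivity

lemma TT_mul_neg (α : ℝ) (n : ℕ) : TT α n * TT (-α) n = 1 := by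
  unfold TT; rw [← Real.rpow_add (by positivity)]; simp

lemma wt_mul_neg (α : ℝ) (k : ℤ) : wt α k * wt (-α) k = 1 := by
  rw [wt_add]; simp [wt_zero]

/-- The comparison constant. -/
def cc (α : ℝ) : ℝ := (4 : ℝ) ^ |α|

lemma one_le_cc (α : ℝ) : 1 ≤ cc α := Real.one_le_rpow (by norm_num) (abs_nonneg _)

lemma cc_neg (α : ℝ) : cc (-α) = cc α := by simp [cc]

lemma wt_le_TT (α : ℝ) (k : ℤ) : wt α k ≤ cc α * TT α (aa k) := by
  have h1 := aa_base_le k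
  have h2 := base_le_aa k
  have h4 : (0 : ℝ) < 4 ^ aa k := by positivity
  rcases le_total 0 α with h | h
  · unfold wt cc TT
    rw [abs_of_nonneg h, ← Real.mul_rpow (by norm_num) h4.le]
    exact Real.rpow_le_rpow (base_pos k).le h2 h
  · have : wt α k ≤ TT α (aa k) := Real.rpow_le_rpow_of_nonpos h4 h1 h
    have h3 := TT_pos α (aa k)
    nlinarith [one_le_cc α]

lemma TT_le_wt (α : ℝ) (k : ℤ) : TT α (aa k) ≤ cc α * wt α k := by
  have h1 := wt_le_TT (-α) k
  rw [cc_neg] at h1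
  have h2 := TT_mul_neg α (aa k)
  have h3 := wt_mul_neg α k
  have h4 := TT_pos α (aa k)
  have h5 := wt_pos α k
  calc TT α (aa k) = TT α (aa k) * wt α k * wt (-α) k := by rw [mul_assoc, h3, mul_one]
    _ ≤ TT α (aa k) * wt α k * (cc α * TT (-α) (aa k)) := by gcongr
    _ = cc α * wt α k * (TT α (aa k) * TT (-α) (aa k)) := by ring
    _ = _ := by rw [h2, mul_one]

lemma TT_near (α : ℝ) {n m : ℕ} (h : n ≤ m + 4) (h' : m ≤ n + 4) :
    TT α n * TT (-α) m ≤ (256 : ℝ) ^ |α| := by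
  unfold TT
  have e : ((4 : ℝ) ^ n) ^ α * ((4 : ℝ) ^ m) ^ (-α) = (4 : ℝ) ^ (((n : ℝ) - m) * α) := by
    rw [← Real.rpow_natCast, ← Real.rpow_natCast, ← Real.rpow_mul (by norm_num),
      ← Real.rpow_mul (by norm_num), ← Real.rpow_add (by norm_num)]
    congr 1; ring
  rw [e, show (256 : ℝ) = 4 ^ (4 : ℝ) by norm_num, ← Real.rpow_mul (by norm_num)]
  refine Real.rpow_le_rpow_of_exponent_le (by norm_num) ?_
  have h1 : |(n : ℝ) - m| ≤ 4 := by
    rw [abs_le]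
    have : (n : ℝ) ≤ m + 4 := by exact_mod_cast h
    have : (m : ℝ) ≤ n + 4 := by exact_mod_cast h'
    constructor <;> linarith
  calc _ ≤ |((n : ℝ) - m) * α| := le_abs_self _
    _ = |(n : ℝ) - m| * |α| := abs_mul _ _
    _ ≤ _ := by gcongr

/-- Nearness of blocks. -/
def near (n m : ℕ) : Prop := n ≤ m + 4 ∧ m ≤ n + 4

instance (n m : ℕ) : Decidable (near n m) := by unfold near; infer_instance

lemma near_card (n : ℕ) (N : Finset ℕ) : (N.filter (near n)).card ≤ 9 := by
  have : N.filter (near n) ⊆ Finset.Icc (n - 4) (n + 4) := by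
    intro m hm
    have := (Finset.mem_filter.1 hm).2
    unfold near at this
    rw [Finset.mem_Icc]; omega
  refine (Finset.card_le_card this).trans ?_
  rw [Nat.card_Icc]; omega

/-- The near-diagonal block lemma. -/
lemma Bd.near (α : ℝ) : ∃ C : ℝ, 0 ≤ C ∧ ∀ (F : ℕ → ℤ → ℤ → ℂ) (B : ℝ), (∀ n, Bd (F n) B) →
    ∀ p q : ℤ → ℂ, (∀ k, ‖p k‖ ≤ FC.wt α k) → (∀ k, ‖q k‖ ≤ FC.wt (-α) k) →
    Bd (fun k m => if S17.near (aa k) (aa m) then p k * q m * F (aa m) k m else 0) (C * B) := by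
  have hcc := one_le_cc α
  set M : ℝ := cc α * (256 : ℝ) ^ |α| with hM
  have hM0 : 0 ≤ M := by positivity
  refine ⟨cc α * (9 * M ^ 2 + 1), by positivity, fun F B hF p q hp hq => ?_⟩
  set Y : ℤ → ℕ → ℂ := fun k n => if S17.near (aa k) n then p k * (TT (-α) n : ℂ) else 0 with hY
  have hYle : ∀ k n, ‖Y k n‖ ≤ M := by
    intro k n
    simp only [hY]
    split_ifs with h
    · rw [norm_mul, Complex.norm_real, Real.norm_of_nonneg (TT_pos _ _).le]
      calc _ ≤ (cc α * TT α (aa k)) * TT (-α) n := by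
            have := TT_pos (-α) n
            gcongr
            exact (hp k).trans (wt_le_TT α k)
        _ = cc α * (TT α (aa k) * TT (-α) n) := by ring
        _ ≤ _ := by
            rw [hM]; gcongr
            exact TT_near α h.1 h.2
    · simpa using hM0
  have hYs : ∀ k (N : Finset ℕ), ∑ n ∈ N, ‖Y k n‖ ^ 2 ≤ 9 * M ^ 2 + 1 := by
    intro k N
    have : ∑ n ∈ N, ‖Y k n‖ ^ 2 = ∑ n ∈ N.filter (S17.near (aa k)), ‖Y k n‖ ^ 2 := by
      rw [Finset.sum_filter]
      refine Finset.sum_congr rfl fun n _ => ?_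
      split_ifs with h
      · rfl
      · simp [hY, h]
    rw [this]
    calc _ ≤ ∑ n ∈ N.filter (S17.near (aa k)), M ^ 2 := by
          gcongr with n hn
          exact hYle k n
      _ = (N.filter (S17.near (aa k))).card * M ^ 2 := by rw [Finset.sum_const, nsmul_eq_mul]
      _ ≤ 9 * M ^ 2 := by
          gcongr
          exact_mod_cast near_card (aa k) N
      _ ≤ _ := by linarith
  have h1 := Bd.block hF aa Y (by nlinarith [sq_nonneg M]) hYs
  have h2 := h1.mul_right' (p := fun m => q m * (TT α (aa m) : ℂ)) (c := cc α) (by positivity) (by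
    intro m
    rw [norm_mul, Complex.norm_real, Real.norm_of_nonneg (TT_pos _ _).le]
    have h3 := TT_le_wt α m
    have h4 := hq m
    calc _ ≤ FC.wt (-α) m * (cc α * FC.wt α m) := by
          have := wt_pos (-α) m
          have := TT_pos α (aa m)
          gcongr
      _ = cc α * (FC.wt α m * FC.wt (-α) m) := by ring
      _ = _ := by rw [wt_mul_neg, mul_one])
  refine (h2.congr fun k m => ?_).mono (le_of_eq (by ring))
  simp only [hY]
  split_ifs with h
  · have : (TT α (aa m) : ℂ) * (TT (-α) (aa m) : ℂ) = 1 := by exact_mod_cast TT_mul_neg α (aa m)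
    linear_combination (p k * q m * F (aa m) k m) * this
  · simp

/-- The bump function. -/
def bump0 : ContDiffBump (0 : ℝ) := ⟨1 / 8, 1 / 4, by norm_num, by norm_num⟩

/-- The bump as a Schwartz function. -/
def psi : SchwartzMap ℝ ℝ := (bump0.hasCompactSupport).toSchwartzMap bump0.contDiff

lemma psi_nonneg (x : ℝ) : 0 ≤ psi x := bump0.nonneg
lemma psi_le_one (x : ℝ) : psi x ≤ 1 := bump0.le_one
lemma psi_one {x : ℝ} (h : |x| ≤ 1 / 8) : psi x = 1 :=
  bump0.one_of_mem_closedBall (by simpa [bump0] using h)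
lemma psi_zero {x : ℝ} (h : 1 / 4 ≤ |x|) : psi x = 0 :=
  bump0.zero_of_le_dist (by simpa [bump0] using h)

/-- Low-frequency cutoffs. -/
def phi (n : ℕ) (k : ℤ) : ℝ := psi (((2 : ℝ) ^ n)⁻¹ * k)

lemma phi_nonneg (n : ℕ) (k : ℤ) : 0 ≤ phi n k := psi_nonneg _
lemma phi_le_one (n : ℕ) (k : ℤ) : phi n k ≤ 1 := psi_le_one _
lemma phi_norm_le (n : ℕ) (k : ℤ) : ‖(phi n k : ℂ)‖ ≤ 1 := by
  rw [Complex.norm_real, Real.norm_of_nonneg (phi_nonneg _ _)]; exact phi_le_one _ _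
lemma phi_one {n : ℕ} {k : ℤ} (h : 8 * |(k : ℝ)| ≤ 2 ^ n) : phi n k = 1 := by
  refine psi_one ?_
  rw [abs_mul, abs_of_pos (by positivity), inv_mul_le_iff₀ (by positivity)]; linarith
lemma phi_zero {n : ℕ} {k : ℤ} (h : 2 ^ n ≤ 4 * |(k : ℝ)|) : phi n k = 0 := by
  refine psi_zero ?_
  rw [abs_mul, abs_of_pos (by positivity), le_inv_mul_iff₀ (by positivity)]; linarith
lemma lt_of_phi {n : ℕ} {k : ℤ} (h : phi n k ≠ 0) : 4 * |(k : ℝ)| < 2 ^ n := by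
  by_contra hcon
  exact h (phi_zero (not_lt.1 hcon))

/-- The near-diagonal cutoff. -/
def Phi1 (k m : ℤ) : ℝ := 1 - phi (aa k) m - phi (aa m) k

lemma Phi1_symm (k m : ℤ) : Phi1 k m = Phi1 m k := by unfold Phi1; ring

lemma Phi1_far {k m : ℤ} (h : aa m + 4 < aa k) : Phi1 k m = 0 := by
  have hk : k ≠ 0 := by rintro rfl; simp [aa_zero] at h
  have h1 := aa_le hk
  have h2 := lt_aa m
  have h3 : (2 : ℝ) ^ (aa m + 5) ≤ 2 ^ aa k := pow_le_pow_right₀ (by norm_num) (by omega)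
  have h4 : (0 : ℝ) < 2 ^ aa m := by positivity
  rw [pow_add] at h3
  rw [pow_succ] at h2
  unfold Phi1
  rw [phi_one (by linarith), phi_zero (by linarith)]; ring

lemma near_of_Phi1 {k m : ℤ} (h : Phi1 k m ≠ 0) : near (aa k) (aa m) := by
  constructor
  · by_contra h'
    exact h (Phi1_far (by omega))
  · by_contra h'
    exact h (by rw [Phi1_symm]; exact Phi1_far (by omega))

lemma Bd.phi1 (α : ℝ) : ∃ C : ℝ, 0 ≤ C ∧ ∀ (F : ℤ → ℤ → ℂ) (B : ℝ), Bd F B →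
    ∀ p q : ℤ → ℂ, (∀ k, ‖p k‖ ≤ FC.wt α k) → (∀ k, ‖q k‖ ≤ FC.wt (-α) k) →
    Bd (fun k m => (Phi1 k m : ℂ) * (p k * q m * F k m)) (C * B) := by
  obtain ⟨C1, hC1, h1⟩ := Bd.near α
  obtain ⟨C2, hC2, h2⟩ := Bd.near (-α)
  refine ⟨C1 + C2 + C1, by positivity, fun F B hF p q hp hq => ?_⟩
  have a1 := h1 (fun _ => F) B (fun _ => hF) p q hp hq
  have a2 := h1 (fun n k m => (phi n k : ℂ) * F k m) B
    (fun n => hF.mul_left (phi_norm_le n)) p q hp hq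
  have a3 := (h2 (fun n k m => (phi n k : ℂ) * F m k) B
    (fun n => hF.transpose.mul_left (phi_norm_le n)) q p hq (by simpa using hp)).transpose
  refine (((a1.sub a3).sub a2).congr fun k m => ?_).mono (le_of_eq (by ring))
  by_cases h : S17.near (aa k) (aa m)
  · have h' : S17.near (aa m) (aa k) := ⟨h.2, h.1⟩
    simp only [if_pos h, if_pos h', Phi1]
    push_cast; ring
  · have h' : ¬ S17.near (aa m) (aa k) := fun h'' => h ⟨h''.2, h''.1⟩
    have : Phi1 k m = 0 := by
      by_contra h3; exact h (near_of_Phi1 h3)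
    simp [if_neg h, if_neg h', this]

end S17

namespace S17
open FC MeasureTheory

lemma near_of_phi {k j : ℤ} (h : phi (aa k) (k - j) ≠ 0) : near (aa j) (aa k) := by
  have h0 := lt_of_phi h
  push_cast at h0
  by_cases hk : k = 0
  · subst hk
    have hj : j = 0 := by
      by_contra hj
      have : (1 : ℝ) ≤ |(j : ℝ)| := by exact_mod_cast Int.one_le_abs hj
      simp [aa_zero] at h0
      linarith
    subst hj; simp [near]
  have h1 := aa_le hk
  have h2 := lt_aa k
  have h3 := lt_aa j
  have h4 : (0 : ℝ) < 2 ^ aa k := by positivity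
  have h5 : |(k : ℝ)| ≤ |(k : ℝ) - j| + |(j : ℝ)| := by
    have := abs_add_le ((k : ℝ) - j) j; simpa using this
  have h6 : |(j : ℝ)| ≤ |(k : ℝ) - j| + |(k : ℝ)| := by
    have := abs_add_le ((j : ℝ) - k) k
    rw [abs_sub_comm] at this; simpa using this
  rw [pow_succ] at h2 h3
  constructor
  · by_contra hc
    have h7 : (2 : ℝ) ^ (aa k + 5) ≤ 2 ^ aa j := pow_le_pow_right₀ (by norm_num) (by omega)
    rw [pow_add] at h7
    have hj : j ≠ 0 := by rintro rfl; simp [aa_zero] at hc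
    have := aa_le hj
    linarith
  · by_contra hc
    have h7 : (2 : ℝ) ^ (aa j + 5) ≤ 2 ^ aa k := pow_le_pow_right₀ (by norm_num) (by omega)
    rw [pow_add] at h7
    linarith [abs_nonneg (j : ℝ)]

lemma norm_wt (α : ℝ) (k : ℤ) : ‖(wt α k : ℂ)‖ = wt α k := by
  rw [Complex.norm_real, Real.norm_of_nonneg (wt_pos _ _).le]

/-- Low-high kernel. -/
lemma kern2 (σ : ℝ) : ∃ C : ℝ, 0 ≤ C ∧ ∀ g : FC, (Summable fun k => ‖g k‖) →
    Bd (fun k j => (phi (aa k) (k - j) : ℂ) * g (k - j) * (wt σ k : ℂ) * (wt (-σ) j : ℂ))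
      (C * linfty g) := by
  obtain ⟨C1, hC1, h1⟩ := Bd.near (-σ)
  obtain ⟨C2, hC2, h2⟩ := linfty_Jmol psi
  refine ⟨C1 * C2, by positivity, fun g hg => ?_⟩
  have h3 : ∀ n : ℕ, Bd (fun j k => (phi n (k - j) : ℂ) * g (k - j)) (C2 * linfty g) := by
    intro n
    have := (Bd.toeplitz (Jmol_summable psi ((2 : ℝ) ^ n)⁻¹ hg)).transpose
    refine (this.congr fun j k => ?_).mono (h2 _ g hg)
    unfold Jmol mult phi
    rfl
  have h4 := (h1 (fun n j k => (phi n (k - j) : ℂ) * g (k - j)) _ h3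
    (fun j => (wt (-σ) j : ℂ)) (fun k => (wt σ k : ℂ)) (fun k => (norm_wt _ _).le)
    (fun k => by rw [norm_wt, neg_neg])).transpose
  refine (h4.congr fun k j => ?_).mono (le_of_eq (by ring))
  split_ifs with h
  · ring
  · have : phi (aa k) (k - j) = 0 := by
      by_contra h'; exact h (near_of_phi h')
    simp [this]

lemma geom_block (a : ℕ) (N : Finset ℕ) :
    ∑ n ∈ N, (if a ≤ n then (4 : ℝ) * (1 / 4) ^ (n - a) else 0) ≤ 6 := by
  rw [← Finset.sum_filter]
  have hs : Summable fun n : ℕ => (4 : ℝ) * (1 / 4) ^ n :=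
    (summable_geometric_of_lt_one (by norm_num) (by norm_num)).mul_left _
  have ht : ∑' n : ℕ, (4 : ℝ) * (1 / 4) ^ n ≤ 6 := by
    rw [tsum_mul_left, tsum_geometric_of_lt_one (by norm_num) (by norm_num)]; norm_num
  have : ∑ n ∈ N.filter (fun n => a ≤ n), (4 : ℝ) * (1 / 4) ^ (n - a)
      = ∑ n ∈ (N.filter (fun n => a ≤ n)).image (fun n => n - a), (4 : ℝ) * (1 / 4) ^ n := by
    rw [Finset.sum_image]
    intro x hx y hy hxy
    have hx := (Finset.mem_filter.1 hx).2
    have hy := (Finset.mem_filter.1 hy).2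
    simp only at hxy
    omega
  rw [this]
  exact (hs.sum_le_tsum _ fun _ _ => by positivity).trans ht

lemma wt_TT_le {σ : ℝ} (hσ : 1 ≤ σ) {k : ℤ} {n : ℕ} (h : 4 * |(k : ℝ)| < 2 ^ n) :
    aa k ≤ n ∧ (wt (σ / 2) k * TT (-(σ / 2)) n) ^ 2 ≤ 4 * (1 / 4) ^ (n - aa k) := by
  have h1 : aa k ≤ n := by
    by_cases hk : k = 0
    · subst hk; simp [aa_zero]
    · have := aa_le hk
      have h2 : (2 : ℝ) ^ aa k < 2 ^ n := by linarith [abs_nonneg (k : ℝ)]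
      exact ((pow_lt_pow_iff_right₀ (by norm_num)).1 h2).le
  refine ⟨h1, ?_⟩
  have hp : (0 : ℝ) < 4 ^ n := by positivity
  have e1 : (wt (σ / 2) k * TT (-(σ / 2)) n) ^ 2 = ((1 + (k : ℝ) ^ 2) / 4 ^ n) ^ σ := by
    rw [mul_pow, wt_half_sq]
    unfold TT wt
    have e0 : -(σ / 2) * ((2 : ℕ) : ℝ) = -σ := by push_cast; ring
    rw [← Real.rpow_natCast (((4 : ℝ) ^ n) ^ (-(σ / 2))) 2, ← Real.rpow_mul hp.le, e0,
      Real.div_rpow (base_pos k).le hp.le, Real.rpow_neg hp.le, ← div_eq_mul_inv]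
  have h4 : (4 : ℝ) ^ n = (2 ^ n) ^ 2 := by rw [← pow_mul, mul_comm, pow_mul]; norm_num
  have h5 : 1 + (k : ℝ) ^ 2 ≤ 4 ^ n := by
    by_cases hk : k = 0
    · subst hk; simp; exact one_le_pow₀ (by norm_num)
    · have : (1 : ℝ) ≤ |(k : ℝ)| := by exact_mod_cast Int.one_le_abs hk
      rw [h4, ← sq_abs (k : ℝ)]; nlinarith
  rw [e1]
  calc _ ≤ (1 + (k : ℝ) ^ 2) / 4 ^ n :=
        Real.rpow_le_self_of_le_one (by positivity) (div_le_one_of_le₀ h5 hp.le) hσ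
    _ ≤ 4 * 4 ^ aa k / 4 ^ n := by gcongr; exact base_le_aa k
    _ = _ := by
        have : (4 : ℝ) ^ n = 4 ^ (n - aa k) * 4 ^ aa k := by rw [← pow_add]; congr 1; omega
        rw [this]; field_simp; rw [← mul_pow]; norm_num

/-- High-low kernel. -/
lemma kern3 {σ : ℝ} (hσ : 1 ≤ σ) : ∃ C : ℝ, 0 ≤ C ∧ ∀ f : FC, (Summable fun k => ‖f k‖) →
    f 0 = 0 →
    Bd (fun k m => (phi (aa m) k : ℂ) * (wt (σ / 2) k : ℂ) * (wt (-(σ / 2)) m : ℂ)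
      * ((m : ℂ) / ((k : ℂ) - m)) * f (k - m)) (C * linfty f) := by
  refine ⟨cc (σ / 2) * 6 * (4 / 3), by have := one_le_cc (σ / 2); positivity, fun f hf hf0 => ?_⟩
  have hcc := one_le_cc (σ / 2)
  set Y : ℕ → ℤ → ℕ → ℂ := fun i k n =>
    ((phi n k * (wt (σ / 2) k * TT (-(σ / 2)) n) * (4 * k / 2 ^ n) ^ i : ℝ) : ℂ) with hY
  set q : ℕ → ℤ → ℂ := fun i m =>
    ((wt (-(σ / 2)) m * TT (σ / 2) (aa m) * (2 ^ aa m / (m : ℝ)) ^ i : ℝ) : ℂ) with hq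
  have hYs : ∀ i k (N : Finset ℕ), ∑ n ∈ N, ‖Y i k n‖ ^ 2 ≤ 6 := by
    intro i k N
    refine le_trans (Finset.sum_le_sum fun n _ => ?_) (geom_block (aa k) N)
    simp only [hY]
    rw [Complex.norm_real, Real.norm_eq_abs, sq_abs]
    by_cases h : phi n k = 0
    · rw [h]; simp; split_ifs <;> positivity
    · obtain ⟨h1, h2⟩ := wt_TT_le hσ (lt_of_phi h)
      have h3 := lt_of_phi h
      rw [if_pos h1, mul_pow, mul_pow]
      have h4 : (phi n k) ^ 2 ≤ 1 := pow_le_one₀ (phi_nonneg _ _) (phi_le_one _ _)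
      have h5 : ((4 * (k : ℝ) / 2 ^ n) ^ i) ^ 2 ≤ 1 := by
        rw [← sq_abs, abs_pow]
        refine pow_le_one₀ (by positivity) (pow_le_one₀ (by positivity) ?_)
        rw [abs_div, abs_mul, abs_of_pos (by positivity : (0 : ℝ) < 2 ^ n),
          abs_of_pos (by norm_num : (0 : ℝ) < 4)]
        exact div_le_one_of_le₀ h3.le (by positivity)
      calc _ ≤ 1 * (4 * (1 / 4 : ℝ) ^ (n - aa k)) * 1 := by gcongr
        _ = 4 * (1 / 4 : ℝ) ^ (n - aa k) := by rw [one_mul, mul_one]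
  have hqs : ∀ i m, ‖q i m‖ ≤ cc (σ / 2) := by
    intro i m
    simp only [hq]
    rw [Complex.norm_real, Real.norm_eq_abs, abs_mul]
    have h1 : |wt (-(σ / 2)) m * TT (σ / 2) (aa m)| ≤ cc (σ / 2) := by
      have := TT_le_wt (σ / 2) m
      have h2 := wt_pos (-(σ / 2)) m
      have h3 := TT_pos (σ / 2) (aa m)
      rw [abs_of_pos (by positivity)]
      calc _ ≤ wt (-(σ / 2)) m * (cc (σ / 2) * wt (σ / 2) m) := by gcongr
        _ = cc (σ / 2) * (wt (σ / 2) m * wt (-(σ / 2)) m) := by ring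
        _ = _ := by rw [wt_mul_neg, mul_one]
    have h2 : |(2 ^ aa m / (m : ℝ)) ^ i| ≤ 1 := by
      rw [abs_pow]
      refine pow_le_one₀ (by positivity) ?_
      rw [abs_div, abs_of_pos (by positivity : (0 : ℝ) < 2 ^ aa m)]
      by_cases hm : m = 0
      · subst hm; simp
      · exact div_le_one_of_le₀ (aa_le hm) (abs_nonneg _)
    calc _ ≤ cc (σ / 2) * 1 := by gcongr
      _ = _ := mul_one _
  have hB : ∀ i : ℕ, Bd (fun k m => (-(1 / 4) ^ i : ℂ) * (q i m * (Y i k (aa m) * f (k - m))))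
      ((1 / 4) ^ i * (cc (σ / 2) * (linfty f * 6))) := by
    intro i
    have h1 := Bd.block (fun _ => Bd.toeplitz hf) aa (Y i) (by norm_num) (hYs i)
    have h2 := (h1.mul_right' (p := q i) (by positivity) (hqs i)).smul (-(1 / 4) ^ i : ℂ)
    refine h2.mono (le_of_eq ?_)
    congr 1
    rw [norm_neg, norm_pow]; norm_num
  have hsum : HasSum (fun i : ℕ => (1 / 4 : ℝ) ^ i * (cc (σ / 2) * (linfty f * 6)))
      (cc (σ / 2) * 6 * (4 / 3) * linfty f) := by
    have := (hasSum_geometric_of_lt_one (r := (1 / 4 : ℝ)) (by norm_num) (by norm_num)).mul_right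
      (cc (σ / 2) * (linfty f * 6))
    rw [show (1 - 1 / 4 : ℝ)⁻¹ = 4 / 3 by norm_num] at this
    rwa [show cc (σ / 2) * 6 * (4 / 3) * linfty f = 4 / 3 * (cc (σ / 2) * (linfty f * 6)) by ring]
  refine Bd.tsum hB hsum fun k m => ?_
  have hTT : (TT (-(σ / 2)) (aa m) : ℂ) * (TT (σ / 2) (aa m) : ℂ) = 1 := by
    rw [mul_comm]; exact_mod_cast TT_mul_neg (σ / 2) (aa m)
  by_cases h : phi (aa m) k = 0
  · simp only [hY, h]; simpa using hasSum_zero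
  have h3 := lt_of_phi h
  by_cases hm : m = 0
  · subst hm
    have hk : k = 0 := by
      by_contra hk
      have : (1 : ℝ) ≤ |(k : ℝ)| := by exact_mod_cast Int.one_le_abs hk
      simp [aa_zero] at h3
      linarith
    subst hk
    simp only [sub_self, hf0, mul_zero]
    exact hasSum_zero
  have hm' : (m : ℂ) ≠ 0 := by exact_mod_cast hm
  have h4 := aa_le hm
  have hmp : 0 < |(m : ℝ)| := by positivity
  have hkm : |(k : ℝ)| < |(m : ℝ)| := by linarith [abs_nonneg (k : ℝ)]
  have hr : ‖(k : ℂ) / m‖ < 1 := by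
    rw [norm_div, div_lt_one (norm_pos_iff.2 hm'), Complex.norm_intCast, Complex.norm_intCast]
    exact hkm
  have hne : (k : ℂ) - m ≠ 0 := by
    intro h0
    have : k = m := by exact_mod_cast sub_eq_zero.1 h0
    rw [this] at hkm; exact lt_irrefl _ hkm
  have hg := (hasSum_geometric_of_norm_lt_one hr).mul_left
    (-((phi (aa m) k : ℂ) * (wt (σ / 2) k : ℂ) * (wt (-(σ / 2)) m : ℂ) * f (k - m)))
  have e0 : (m : ℂ) / ((k : ℂ) - m) = -(1 - (k : ℂ) / m)⁻¹ := by
    rw [← inv_neg, neg_sub, show (k : ℂ) / m - 1 = (k - m) / m by field_simp, inv_div]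
  have e1 : (phi (aa m) k : ℂ) * (wt (σ / 2) k : ℂ) * (wt (-(σ / 2)) m : ℂ)
      * ((m : ℂ) / ((k : ℂ) - m)) * f (k - m) = -((phi (aa m) k : ℂ) * (wt (σ / 2) k : ℂ)
        * (wt (-(σ / 2)) m : ℂ) * f (k - m)) * (1 - (k : ℂ) / m)⁻¹ := by rw [e0]; ring
  rw [e1]
  refine Eq.mpr (congrArg (fun F : ℕ → ℂ => HasSum F _) (funext fun i => ?_)) hg
  simp only [hY, hq]
  push_cast
  have e : (1 / 4 : ℂ) ^ i * ((2 ^ aa m / (m : ℂ)) ^ i * (4 * (k : ℂ) / 2 ^ aa m) ^ i)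
      = ((k : ℂ) / m) ^ i := by
    rw [← mul_pow, ← mul_pow]; congr 1; field_simp
  rw [← e]
  linear_combination (-(1 / 4 : ℂ) ^ i * (wt (-(σ / 2)) m) * (2 ^ aa m / (m : ℂ)) ^ i
    * (phi (aa m) k) * (wt (σ / 2) k) * (4 * (k : ℂ) / 2 ^ aa m) ^ i * f (k - m)) * hTT

lemma abs_le_wt (k : ℤ) : |(k : ℝ)| ≤ wt (1 / 2) k := by
  unfold wt
  rw [← Real.sqrt_eq_rpow]
  exact Real.abs_le_sqrt (by linarith)

/-- Near-diagonal kernel. -/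
lemma kern1 {σ : ℝ} (hσ : 0 < σ) : ∃ C : ℝ, 0 ≤ C ∧ ∀ f : FC, (Summable fun k => ‖D1 f k‖) →
    Bd (fun k m => (Phi1 k m : ℂ) * ((wt (-(σ / 2)) k : ℂ) * (wt (-(σ / 2)) m : ℂ)
      * (Complex.I * ((wt σ k : ℂ) * m - k * (wt σ m : ℂ)) * f (k - m)))) (C * linfty (D1 f)) := by
  obtain ⟨n, hn⟩ := exists_nat_gt σ
  have hn0 : (0 : ℝ) < n := hσ.trans hn
  set r : ℝ := σ / n with hr
  have hr01 : r ∈ Set.Ioo (0 : ℝ) 1 := ⟨by positivity, (div_lt_one hn0).2 hn⟩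
  have hrn : r * n = σ := by rw [hr]; field_simp
  obtain ⟨Λ, hΛ, hL⟩ := Bd.lowner hr01
  obtain ⟨C0, hC0, h0⟩ := Bd.phi1 (-(σ / 2))
  set α : ℕ → ℝ := fun i => -(σ / 2) + r * i - (1 - r) / 2 with hα
  set β : ℕ → ℝ := fun i => -1 - α i with hβ
  choose C1 hC1 h1 using fun i => Bd.phi1 (α i + 1 / 2)
  choose C2 hC2 h2 using fun i => Bd.phi1 (α i)
  have hC1' : 0 ≤ ∑ i ∈ Finset.range n, (C1 i + C2 i) :=
    Finset.sum_nonneg fun i _ => add_nonneg (hC1 i) (hC2 i)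
  refine ⟨∑ i ∈ Finset.range n, (C1 i + C2 i) + C0, by positivity, fun f hf => ?_⟩
  have hT := Bd.toeplitz hf
  have hLT := hL _ _ hT
  have hi : ∀ i ∈ Finset.range n, _ := fun i _ =>
    ((h1 i _ _ hLT (fun k => ((k * wt (α i) k : ℝ) : ℂ)) (fun m => ((m * wt (β i) m : ℝ) : ℂ))
      (fun k => by
        rw [Complex.norm_real, Real.norm_eq_abs, abs_mul, abs_of_pos (wt_pos _ _), add_comm,
          ← wt_add]
        have := wt_pos (α i) k
        gcongr
        exact abs_le_wt k)
      (fun m => by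
        rw [Complex.norm_real, Real.norm_eq_abs, abs_mul, abs_of_pos (wt_pos _ _),
          show -(α i + 1 / 2) = 1 / 2 + β i by simp only [hβ]; ring, ← wt_add]
        have := wt_pos (β i) m
        gcongr
        exact abs_le_wt m)).add
    (h2 i _ _ hLT (fun k => ((wt (α i) k : ℝ) : ℂ)) (fun m => ((m ^ 2 * wt (β i) m : ℝ) : ℂ))
      (fun k => (norm_wt _ _).le)
      (fun m => by
        rw [Complex.norm_real, Real.norm_eq_abs, abs_mul, abs_of_pos (wt_pos _ _),
          show -(α i) = 1 + β i by simp only [hβ]; ring, ← wt_add]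
        have := wt_pos (β i) m
        gcongr
        rw [wt_one, abs_of_nonneg (by positivity)]; linarith)))
  have hz := h0 _ _ hT (fun k => ((wt (-(σ / 2)) k : ℝ) : ℂ)) (fun m => ((wt (σ / 2) m : ℝ) : ℂ))
      (fun k => (norm_wt _ _).le) (fun k => by rw [norm_wt, neg_neg])
  refine (((Bd.sum _ hi).sub hz).congr fun k m => ?_).mono (le_of_eq ?_)
  swap
  · rw [add_mul, Finset.sum_mul]; congr 1
    exact Finset.sum_congr rfl fun i _ => by ring
  set A : ℝ := 1 + (k : ℝ) ^ 2 with hA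
  set B : ℝ := 1 + (m : ℝ) ^ 2 with hB
  have hApos : 0 < A := base_pos k
  have hBpos : 0 < B := base_pos m
  set w : ℤ → ℝ := fun k => wt (-(σ / 2)) k with hw
  have hpow : ∀ (l : ℤ) (i : ℕ), wt (r * i) l = ((1 + (l : ℝ) ^ 2) ^ r) ^ i := fun l i => by
    unfold wt; rw [Real.rpow_mul (base_pos l).le, Real.rpow_natCast]
  have hterm : ∀ i ∈ Finset.range n,
      (Phi1 k m : ℂ) * (((k * wt (α i) k : ℝ) : ℂ) * ((m * wt (β i) m : ℝ) : ℂ)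
        * (((Λ A B * (wt ((1 - r) / 2) k * wt ((1 - r) / 2) m) : ℝ) : ℂ) * D1 f (k - m)))
      + (Phi1 k m : ℂ) * (((wt (α i) k : ℝ) : ℂ) * ((m ^ 2 * wt (β i) m : ℝ) : ℂ)
        * (((Λ A B * (wt ((1 - r) / 2) k * wt ((1 - r) / 2) m) : ℝ) : ℂ) * D1 f (k - m)))
      = ((Phi1 k m * (w k * w m * (m * (k + m) * Λ A B)) : ℝ) : ℂ) * D1 f (k - m)
        * (((A ^ r) ^ i * (B ^ r) ^ (n - 1 - i) : ℝ) : ℂ) := by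
    intro i hi
    have hi' : i < n := Finset.mem_range.1 hi
    have e1 : wt (α i) k * wt ((1 - r) / 2) k = w k * (A ^ r) ^ i := by
      rw [hA, ← hpow, hw, wt_add, wt_add]; congr 1; simp only [hα]; ring
    have e2 : wt (β i) m * wt ((1 - r) / 2) m = w m * (B ^ r) ^ (n - 1 - i) := by
      rw [hB, ← hpow, hw, wt_add, wt_add]; congr 1; simp only [hβ, hα]
      rw [Nat.sub_sub, Nat.cast_sub (by omega)]
      push_cast
      linear_combination (-1 : ℝ) * hrn
    have e1' : (wt (α i) k : ℂ) * (wt ((1 - r) / 2) k : ℂ) = (w k : ℂ) * (((A ^ r) ^ i : ℝ) : ℂ) := by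
      exact_mod_cast e1
    have e2' : (wt (β i) m : ℂ) * (wt ((1 - r) / 2) m : ℂ)
        = (w m : ℂ) * (((B ^ r) ^ (n - 1 - i) : ℝ) : ℂ) := by exact_mod_cast e2
    simp only [Complex.ofReal_mul, Complex.ofReal_add, Complex.ofReal_intCast,
      Complex.ofReal_pow (m : ℝ)]
    calc _ = (Phi1 k m : ℂ) * (Λ A B : ℂ) * D1 f (k - m) * m * (k + m)
          * ((wt (α i) k : ℂ) * (wt ((1 - r) / 2) k : ℂ))
          * ((wt (β i) m : ℂ) * (wt ((1 - r) / 2) m : ℂ)) := by ring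
      _ = _ := by rw [e1', e2']; ring
  rw [Finset.sum_congr rfl hterm, ← Finset.mul_sum, ← Complex.ofReal_sum]
  have hgeo := geom_sum₂_mul (A ^ r) (B ^ r) n
  rw [hΛ A hApos B hBpos] at hgeo
  have hAσ : (A ^ r) ^ n = wt σ k := by rw [← hrn, hpow]
  have hBσ : (B ^ r) ^ n = wt σ m := by rw [← hrn, hpow]
  rw [hAσ, hBσ, show A - B = ((k : ℝ) - m) * (k + m) by rw [hA, hB]; ring] at hgeo
  have hgeo' : (((∑ i ∈ Finset.range n, (A ^ r) ^ i * (B ^ r) ^ (n - 1 - i) : ℝ)) : ℂ)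
      * (((k : ℂ) - m) * (k + m) * (Λ A B : ℂ)) = (wt σ k : ℂ) - (wt σ m : ℂ) := by
    exact_mod_cast hgeo
  have hw2 : wt (σ / 2) m = w m * wt σ m := by
    rw [hw, wt_add]; congr 1; ring
  rw [hw2]
  unfold D1
  push_cast
  push_cast at hgeo'
  linear_combination ((Phi1 k m : ℂ) * (w k : ℂ) * (w m : ℂ) * (m : ℂ) * Complex.I * f (k - m)) * hgeo'

end S17

namespace S17
open FC MeasureTheory

lemma summable_pair {x y : FC} (hx : Rapid x) (hy : Rapid y) {F : ℤ → ℤ → ℂ} {A : ℝ} {p : ℕ}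
    (hF : ∀ k m, ‖F k m‖ ≤ A * (bb k ^ p * bb m ^ p)) :
    Summable fun q : ℤ × ℤ => x q.1 * F q.1 q.2 * y q.2 := by
  have h := ((hx.summable_pow p).mul_of_nonneg (hy.summable_pow p)
    (fun k => by have := bb_pos k; positivity) (fun k => by have := bb_pos k; positivity)).mul_left A
  refine Summable.of_norm_bounded h fun q => ?_
  rw [norm_mul, norm_mul]
  calc _ ≤ ‖x q.1‖ * (A * (bb q.1 ^ p * bb q.2 ^ p)) * ‖y q.2‖ := by gcongr; exact hF _ _
    _ = _ := by ring

lemma Rapid.conj {c : FC} (hc : Rapid c) : Rapid (fun k => (starRingEnd ℂ) (c k)) :=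
  hc.of_le 0 1 fun k => by simp

lemma tsum_wt_half (σ : ℝ) (g : FC) : ∑' k, ‖(FC.wt (σ / 2) k : ℂ) * g k‖ ^ 2 = hsNorm σ g ^ 2 := by
  rw [hsNorm_sq]
  refine tsum_congr fun k => ?_
  rw [norm_mul, mul_pow, norm_wt, wt_half_sq]

lemma tsum_wt_half_conj (σ : ℝ) (g : FC) :
    ∑' k, ‖(FC.wt (σ / 2) k : ℂ) * (starRingEnd ℂ) (g k)‖ ^ 2 = hsNorm σ g ^ 2 := by
  rw [hsNorm_sq]
  refine tsum_congr fun k => ?_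
  rw [norm_mul, mul_pow, norm_wt, wt_half_sq, RCLike.norm_conj]

lemma abs_Phi1_le (k m : ℤ) : |Phi1 k m| ≤ 3 := by
  unfold Phi1
  have h1 := phi_nonneg (aa k) m
  have h2 := phi_le_one (aa k) m
  have h3 := phi_nonneg (aa m) k
  have h4 := phi_le_one (aa m) k
  rw [abs_le]; constructor <;> linarith

/-- The trilinear summand. -/
def EE (σ : ℝ) (f g : FC) (k m : ℤ) : ℂ :=
  (starRingEnd ℂ) (g k) * ((wt σ k : ℂ) * (f (k - m) * (Complex.I * m))) * g m

lemma summable_EE (σ : ℝ) {f g : FC} (hf : Rapid f) (hg : Rapid g) {P : ℤ → ℤ → ℝ}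
    (hP : ∀ k m, |P k m| ≤ 3) : Summable fun q : ℤ × ℤ => (P q.1 q.2 : ℂ) * EE σ f g q.1 q.2 := by
  obtain ⟨p, hp⟩ := wt_le_bb σ
  obtain ⟨A, hA, hfA⟩ := hf.bdd
  have := summable_pair (A := 3 * A) (p := p + 1) hg.conj hg
    (F := fun k m => (P k m : ℂ) * ((wt σ k : ℂ) * (f (k - m) * (Complex.I * m)))) fun k m => ?_
  · refine this.congr fun q => ?_
    unfold EE; ring
  · have h1 := one_le_bb k
    have h2 := one_le_bb m
    rw [norm_mul, norm_mul, norm_mul, norm_mul, norm_wt, Complex.norm_I, Complex.norm_real,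
      Complex.norm_intCast, one_mul, Real.norm_eq_abs]
    have hw := wt_pos σ k
    calc _ ≤ 3 * (bb k ^ p * (A * bb m)) := by
          gcongr
          · exact hP k m
          · exact hp k
          · exact hfA _
          · exact abs_le_bb m
      _ ≤ 3 * (bb k ^ (p + 1) * (A * bb m ^ (p + 1))) := by
          gcongr
          · omega
          · exact le_self_pow₀ h2 (by omega)
      _ = _ := by ring

lemma NL2 (σ : ℝ) : ∃ C : ℝ, 0 ≤ C ∧ ∀ f g : FC, Rapid f → Rapid g →
    ‖∑' q : ℤ × ℤ, (phi (aa q.1) q.2 : ℂ) * EE σ f g q.1 q.2‖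
      ≤ C * (linfty (D1 g) * (hsNorm σ f ^ 2 + hsNorm σ g ^ 2)) := by
  obtain ⟨C, hC, h⟩ := kern2 (σ / 2)
  refine ⟨C, hC, fun f g hf hg => ?_⟩
  have hS := summable_EE σ hf hg (P := fun k m => phi (aa k) m) fun k m => by
    rw [abs_of_nonneg (phi_nonneg _ _)]; linarith [phi_le_one (aa k) m]
  let e : ℤ × ℤ ≃ ℤ × ℤ :=
    ⟨fun q => (q.1, q.1 - q.2), fun q => (q.1, q.1 - q.2), fun q => by simp, fun q => by simp⟩
  have hB := h (D1 g) hg.D1.summable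
  set x : ℤ → ℂ := fun k => (wt (σ / 2) k : ℂ) * (starRingEnd ℂ) (g k) with hx
  set y : ℤ → ℂ := fun k => (wt (σ / 2) k : ℂ) * f k with hy
  have key : ∀ q : ℤ × ℤ, (phi (aa (e q).1) (e q).2 : ℂ) * EE σ f g (e q).1 (e q).2
      = x q.1 * ((phi (aa q.1) (q.1 - q.2) : ℂ) * D1 g (q.1 - q.2) * (wt (σ / 2) q.1 : ℂ)
        * (wt (-(σ / 2)) q.2 : ℂ)) * y q.2 := by
    intro q
    have h1 : (wt (σ / 2) q.2 : ℂ) * (wt (-(σ / 2)) q.2 : ℂ) = 1 := by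
      exact_mod_cast wt_mul_neg _ _
    have h2 : (wt σ q.1 : ℂ) = (wt (σ / 2) q.1 : ℂ) ^ 2 := by
      rw [← wt_half_sq]; push_cast; rfl
    simp only [e, Equiv.coe_fn_mk, EE, hx, hy, sub_sub_cancel, D1, h2]
    push_cast
    linear_combination (-(phi (aa q.1) (q.1 - q.2) : ℂ) * (starRingEnd ℂ) (g q.1) *
      (wt (σ / 2) q.1 : ℂ) ^ 2 * f q.2 * Complex.I * ((q.1 : ℂ) - q.2) * g (q.1 - q.2)) * h1
  rw [← e.tsum_eq, tsum_congr key]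
  refine (hB.norm_tsum_le (hg.conj.wt _).summable_sq (hf.wt _).summable_sq
    ((e.summable_iff.2 hS).congr key)).trans (le_of_eq ?_)
  rw [tsum_wt_half_conj, tsum_wt_half]; ring

lemma NL3 {σ : ℝ} (hσ : 1 ≤ σ) : ∃ C : ℝ, 0 ≤ C ∧ ∀ f g : FC, Rapid f → Rapid g →
    ‖∑' q : ℤ × ℤ, (phi (aa q.2) q.1 : ℂ) * EE σ f g q.1 q.2‖
      ≤ C * (linfty (D1 f) * hsNorm σ g ^ 2) := by
  obtain ⟨C, hC, h⟩ := kern3 hσ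
  refine ⟨2 * C, by positivity, fun f g hf hg => ?_⟩
  have hS := summable_EE σ hf hg (P := fun k m => phi (aa m) k) fun k m => by
    rw [abs_of_nonneg (phi_nonneg _ _)]; linarith [phi_le_one (aa m) k]
  have hB := h (D1 f) hf.D1.summable (by simp [D1])
  set x : ℤ → ℂ := fun k => (wt (σ / 2) k : ℂ) * (starRingEnd ℂ) (g k) with hx
  set y : ℤ → ℂ := fun k => (wt (σ / 2) k : ℂ) * g k with hy
  have key : ∀ q : ℤ × ℤ, (phi (aa q.2) q.1 : ℂ) * EE σ f g q.1 q.2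
      = x q.1 * ((phi (aa q.2) q.1 : ℂ) * (wt (σ / 2) q.1 : ℂ) * (wt (-(σ / 2)) q.2 : ℂ)
      * ((q.2 : ℂ) / ((q.1 : ℂ) - q.2)) * D1 f (q.1 - q.2)) * y q.2 := by
    intro ⟨k, m⟩
    have h1 : (wt (σ / 2) m : ℂ) * (wt (-(σ / 2)) m : ℂ) = 1 := by
      exact_mod_cast wt_mul_neg _ _
    have h2 : (wt σ k : ℂ) = (wt (σ / 2) k : ℂ) ^ 2 := by
      rw [← wt_half_sq]; push_cast; rfl
    simp only [EE, hx, hy, D1, h2]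
    by_cases hp : phi (aa m) k = 0
    · simp [hp]
    by_cases hm : m = 0
    · simp [hm]
    have h3 := lt_of_phi hp
    have h4 := aa_le hm
    have hmp : 0 < |(m : ℝ)| := by positivity
    have hne : (k : ℂ) - m ≠ 0 := by
      intro h0
      have : k = m := by exact_mod_cast sub_eq_zero.1 h0
      rw [this] at h3; linarith
    push_cast
    have h5 : (m : ℂ) / ((k : ℂ) - m) * ((k : ℂ) - m) = m := div_mul_cancel₀ _ hne
    calc _ = (phi (aa m) k : ℂ) * (starRingEnd ℂ) (g k) * (wt (σ / 2) k : ℂ) ^ 2 * f (k - m)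
          * Complex.I * m * g m * 1 := by ring
      _ = (phi (aa m) k : ℂ) * (starRingEnd ℂ) (g k) * (wt (σ / 2) k : ℂ) ^ 2 * f (k - m)
          * Complex.I * ((m : ℂ) / ((k : ℂ) - m) * ((k : ℂ) - m)) * g m
          * ((wt (σ / 2) m : ℂ) * (wt (-(σ / 2)) m : ℂ)) := by rw [h5, h1]
      _ = _ := by ring
  rw [tsum_congr key]
  refine (hB.norm_tsum_le (hg.conj.wt _).summable_sq (hg.wt _).summable_sq
    (hS.congr key)).trans (le_of_eq ?_)
  rw [tsum_wt_half_conj, tsum_wt_half]; ring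

/-- The odd defect. -/
def oddp (f : FC) : FC := fun n => f n - (starRingEnd ℂ) (f (-n))

lemma bb_neg' (n : ℤ) : bb (-n) = bb n := by unfold bb; simp

lemma oddp_rapid {f : FC} (hf : Rapid f) : Rapid (oddp f) := by
  intro p
  obtain ⟨C, hC⟩ := hf p
  refine ⟨C + C, fun k => ?_⟩
  have h1 := hC k
  have h2 := hC (-k)
  have hb := bb_pos k
  rw [bb_neg'] at h2
  unfold oddp
  calc _ ≤ (‖f k‖ + ‖f (-k)‖) * bb k ^ p := by
        gcongr
        refine (norm_sub_le _ _).trans (le_of_eq ?_)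
        rw [RCLike.norm_conj]
    _ ≤ _ := by linarith

lemma NL1 {σ : ℝ} (hσ : 0 < σ) : ∃ C : ℝ, 0 ≤ C ∧ ∀ f g : FC, Rapid f → Rapid g →
    ∀ ε : ℝ, 0 < ε →
    |(∑' q : ℤ × ℤ, (Phi1 q.1 q.2 : ℂ) * EE σ f g q.1 q.2).re|
      ≤ C * (linfty (D1 f) * hsNorm σ g ^ 2
        + linfty (oddp f) * ε⁻¹ * (hsNorm σ g ^ 2 + ε ^ 2 * hsNorm σ (D1 g) ^ 2)) := by
  obtain ⟨C, hC, h⟩ := kern1 hσ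
  obtain ⟨C', hC', h'⟩ := Bd.phi1 (-(σ / 2))
  refine ⟨2 * C + C', by positivity, fun f g hf hg ε hε => ?_⟩
  have hS := summable_EE σ hf hg (P := fun k m => Phi1 k m) abs_Phi1_le
  have hB := h f hf.D1.summable
  have hB' := h' _ _ (Bd.toeplitz (oddp_rapid hf).summable)
    (fun k => (wt (-(σ / 2)) k : ℂ)) (fun k => (wt (σ / 2) k : ℂ)) (fun k => (norm_wt _ _).le)
    (fun k => by rw [norm_wt, neg_neg])
  set x : ℤ → ℂ := fun k => (wt (σ / 2) k : ℂ) * (starRingEnd ℂ) (g k) with hx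
  set y : ℤ → ℂ := fun k => (wt (σ / 2) k : ℂ) * g k with hy
  set z : ℤ → ℂ := fun k => (ε : ℂ) * ((wt (σ / 2) k : ℂ) * (starRingEnd ℂ) (D1 g k)) with hz
  have hxr : Rapid x := hg.conj.wt _
  have hyr : Rapid y := hg.wt _
  have hzr : Rapid z := (hg.D1.conj.wt (σ / 2)).of_le 0 ε fun k => by
    simp [hz, abs_of_pos hε]
  set I := ∑' q : ℤ × ℤ, (Phi1 q.1 q.2 : ℂ) * EE σ f g q.1 q.2 with hI
  have hS' : Summable fun q : ℤ × ℤ => (Phi1 q.1 q.2 : ℂ) * (starRingEnd ℂ) (EE σ f g q.2 q.1) := by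
    have := (Equiv.prodComm ℤ ℤ).summable_iff.2 (hS.star)
    refine this.congr fun q => ?_
    simp [Function.comp, Phi1_symm q.2 q.1]
  have hI' : (starRingEnd ℂ) I
      = ∑' q : ℤ × ℤ, (Phi1 q.1 q.2 : ℂ) * (starRingEnd ℂ) (EE σ f g q.2 q.1) := by
    rw [hI, Complex.conj_tsum, ← (Equiv.prodComm ℤ ℤ).tsum_eq]
    refine tsum_congr fun q => ?_
    simp [Phi1_symm q.2 q.1]
  set K1 : ℤ × ℤ → ℂ := fun q => x q.1 * ((Phi1 q.1 q.2 : ℂ) * ((wt (-(σ / 2)) q.1 : ℂ)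
    * (wt (-(σ / 2)) q.2 : ℂ)
      * (Complex.I * ((wt σ q.1 : ℂ) * q.2 - q.1 * (wt σ q.2 : ℂ)) * f (q.1 - q.2)))) * y q.2 with hK1
  set K2 : ℤ × ℤ → ℂ := fun q => z q.1 * ((Phi1 q.1 q.2 : ℂ) * ((wt (-(σ / 2)) q.1 : ℂ)
    * (wt (σ / 2) q.2 : ℂ) * oddp f (q.1 - q.2))) * y q.2 with hK2
  have key : ∀ q : ℤ × ℤ, (Phi1 q.1 q.2 : ℂ) * EE σ f g q.1 q.2
      + (Phi1 q.1 q.2 : ℂ) * (starRingEnd ℂ) (EE σ f g q.2 q.1) = K1 q - (ε : ℂ)⁻¹ * K2 q := by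
    intro ⟨k, m⟩
    have hwm : (wt (σ / 2) m : ℂ) * (wt (-(σ / 2)) m : ℂ) = 1 := by
      exact_mod_cast wt_mul_neg _ _
    have hwk : (wt (σ / 2) k : ℂ) * (wt (-(σ / 2)) k : ℂ) = 1 := by
      exact_mod_cast wt_mul_neg _ _
    have h2 : (wt σ m : ℂ) = (wt (σ / 2) m : ℂ) * (wt (σ / 2) m : ℂ) := by
      rw [← wt_half_sq]; push_cast; ring
    have hε' : (ε : ℂ)⁻¹ * ε = 1 := inv_mul_cancel₀ (by exact_mod_cast hε.ne')
    have ef : (starRingEnd ℂ) (f (m - k)) = f (k - m) - oddp f (k - m) := by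
      unfold oddp; rw [neg_sub]; ring
    have l1 : K1 (k, m) = (Phi1 k m : ℂ) * (starRingEnd ℂ) (g k) * g m * (Complex.I *
        ((wt σ k : ℂ) * m - k * (wt σ m : ℂ)) * f (k - m)) := by
      simp only [hK1, hx, hy]
      calc _ = (Phi1 k m : ℂ) * (starRingEnd ℂ) (g k) * g m * (Complex.I *
        ((wt σ k : ℂ) * m - k * (wt σ m : ℂ)) * f (k - m))
          * ((wt (σ / 2) m : ℂ) * (wt (-(σ / 2)) m : ℂ))
          * ((wt (σ / 2) k : ℂ) * (wt (-(σ / 2)) k : ℂ)) := by ring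
        _ = _ := by rw [hwm, hwk]; ring
    have l2 : (ε : ℂ)⁻¹ * K2 (k, m) = (Phi1 k m : ℂ) * (starRingEnd ℂ) (g k) * g m * (-Complex.I *
        k * (wt σ m : ℂ) * oddp f (k - m)) := by
      simp only [hK2, hz, hy, D1, map_mul, Complex.conj_I, map_intCast]
      rw [h2]
      calc _ = ((ε : ℂ)⁻¹ * ε) * ((Phi1 k m : ℂ) * (starRingEnd ℂ) (g k) * g m * (-Complex.I *
        k * ((wt (σ / 2) m : ℂ) * (wt (σ / 2) m : ℂ)) * oddp f (k - m)))
          * ((wt (σ / 2) k : ℂ) * (wt (-(σ / 2)) k : ℂ)) := by ring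
        _ = _ := by rw [hε', hwk]; ring
    rw [l1, l2]
    simp only [EE, map_mul, Complex.conj_conj, Complex.conj_I, Complex.conj_ofReal,
      map_intCast, ef]
    ring
  have hK2s : Summable K2 := by
    obtain ⟨A, hA, hfA⟩ := (oddp_rapid hf).bdd
    obtain ⟨p1, hp1⟩ := wt_le_bb (-(σ / 2))
    obtain ⟨p2, hp2⟩ := wt_le_bb (σ / 2)
    refine summable_pair (A := 3 * A) (p := p1 + p2) hzr hyr (F := fun k m => (Phi1 k m : ℂ) *
      ((wt (-(σ / 2)) k : ℂ) * (wt (σ / 2) m : ℂ) * oddp f (k - m))) fun k m => ?_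
    have h1 := one_le_bb k
    have h2 := one_le_bb m
    rw [norm_mul, norm_mul, norm_mul, norm_wt, norm_wt, Complex.norm_real, Real.norm_eq_abs]
    have hw1 := wt_pos (-(σ / 2)) k
    have hw2 := wt_pos (σ / 2) m
    calc _ ≤ 3 * (bb k ^ (p1 + p2) * bb m ^ (p1 + p2) * A) := by
          gcongr
          · exact abs_Phi1_le k m
          · exact (hp1 k).trans (pow_le_pow_right₀ h1 (by omega))
          · exact (hp2 m).trans (pow_le_pow_right₀ h2 (by omega))
          · exact hfA _
      _ = _ := by ring
  have hK1s : Summable K1 := by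
    refine ((hS.add hS').add (hK2s.mul_left (ε : ℂ)⁻¹)).congr fun q => ?_
    rw [key]; ring
  have hsum : I + (starRingEnd ℂ) I = ∑' q, K1 q - (ε : ℂ)⁻¹ * ∑' q, K2 q := by
    rw [hI', hI, ← hS.tsum_add hS', tsum_congr key, hK1s.tsum_sub (hK2s.mul_left _), tsum_mul_left]
  have b1 : ‖∑' q, K1 q‖ ≤ C * linfty (D1 f) * (hsNorm σ g ^ 2 + hsNorm σ g ^ 2) := by
    refine (hB.norm_tsum_le hxr.summable_sq hyr.summable_sq hK1s).trans (le_of_eq ?_)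
    simp only [hx, hy]
    rw [tsum_wt_half_conj, tsum_wt_half]
  have b2 : ‖∑' q, K2 q‖ ≤ C' * linfty (oddp f) * (ε ^ 2 * hsNorm σ (D1 g) ^ 2 + hsNorm σ g ^ 2) := by
    refine (hB'.norm_tsum_le hzr.summable_sq hyr.summable_sq hK2s).trans (le_of_eq ?_)
    simp only [hz, hy]
    rw [tsum_wt_half]
    simp_rw [norm_mul (ε : ℂ), mul_pow]
    rw [tsum_mul_left, tsum_wt_half_conj]
    simp
  have hre : 2 * |I.re| = ‖I + (starRingEnd ℂ) I‖ := by
    rw [Complex.add_conj, Complex.norm_real, Real.norm_eq_abs, abs_mul, abs_two]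
  have hL1 := linfty_nonneg (D1 f)
  have hL2 := linfty_nonneg (oddp f)
  have b3 : 2 * |I.re| ≤ C * linfty (D1 f) * (hsNorm σ g ^ 2 + hsNorm σ g ^ 2)
      + ε⁻¹ * (C' * linfty (oddp f) * (ε ^ 2 * hsNorm σ (D1 g) ^ 2 + hsNorm σ g ^ 2)) := by
    rw [hre, hsum]
    refine (norm_sub_le _ _).trans (add_le_add b1 ?_)
    rw [norm_mul, norm_inv, Complex.norm_real, Real.norm_of_nonneg hε.le]
    gcongr
  have t1 : 0 ≤ linfty (D1 f) * hsNorm σ g ^ 2 := by positivity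
  have t2 : 0 ≤ linfty (oddp f) * ε⁻¹ * (hsNorm σ g ^ 2 + ε ^ 2 * hsNorm σ (D1 g) ^ 2) := by
    positivity
  have e : C * linfty (D1 f) * (hsNorm σ g ^ 2 + hsNorm σ g ^ 2)
      + ε⁻¹ * (C' * linfty (oddp f) * (ε ^ 2 * hsNorm σ (D1 g) ^ 2 + hsNorm σ g ^ 2))
      = 2 * C * (linfty (D1 f) * hsNorm σ g ^ 2) + C' * (linfty (oddp f) * ε⁻¹ *
        (hsNorm σ g ^ 2 + ε ^ 2 * hsNorm σ (D1 g) ^ 2)) := by ring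
  rw [e] at b3
  have := mul_nonneg hC t1
  have := mul_nonneg hC' t1
  have := mul_nonneg hC t2
  have := mul_nonneg hC' t2
  have := abs_nonneg I.re
  rw [mul_add, add_mul, add_mul]
  linarith

lemma NL {σ : ℝ} (hσ : 1 ≤ σ) : ∃ C : ℝ, 0 ≤ C ∧ ∀ f g : FC, Rapid f → Rapid g →
    ∀ ε : ℝ, 0 < ε →
    |(∑' q : ℤ × ℤ, EE σ f g q.1 q.2).re|
      ≤ C * (linfty (D1 f) * hsNorm σ g ^ 2 + linfty (D1 g) * (hsNorm σ f ^ 2 + hsNorm σ g ^ 2)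
        + linfty (oddp f) * ε⁻¹ * (hsNorm σ g ^ 2 + ε ^ 2 * hsNorm σ (D1 g) ^ 2)) := by
  obtain ⟨C1, hC1, h1⟩ := NL1 (σ := σ) (by linarith)
  obtain ⟨C2, hC2, h2⟩ := NL2 σ
  obtain ⟨C3, hC3, h3⟩ := NL3 hσ
  refine ⟨C1 + C2 + C3, by positivity, fun f g hf hg ε hε => ?_⟩
  have s1 := summable_EE σ hf hg (P := fun k m => Phi1 k m) abs_Phi1_le
  have s2 := summable_EE σ hf hg (P := fun k m => phi (aa k) m) fun k m => by
    rw [abs_of_nonneg (phi_nonneg _ _)]; linarith [phi_le_one (aa k) m]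
  have s3 := summable_EE σ hf hg (P := fun k m => phi (aa m) k) fun k m => by
    rw [abs_of_nonneg (phi_nonneg _ _)]; linarith [phi_le_one (aa m) k]
  have e : ∑' q : ℤ × ℤ, EE σ f g q.1 q.2
      = ∑' q : ℤ × ℤ, (Phi1 q.1 q.2 : ℂ) * EE σ f g q.1 q.2
      + ∑' q : ℤ × ℤ, (phi (aa q.1) q.2 : ℂ) * EE σ f g q.1 q.2
      + ∑' q : ℤ × ℤ, (phi (aa q.2) q.1 : ℂ) * EE σ f g q.1 q.2 := by
    rw [← s1.tsum_add s2, ← (s1.add s2).tsum_add s3]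
    refine tsum_congr fun q => ?_
    unfold Phi1; push_cast; ring
  rw [e, Complex.add_re, Complex.add_re]
  have b1 := h1 f g hf hg ε hε
  have b2 := (Complex.abs_re_le_norm _).trans (h2 f g hf hg)
  have b3 := (Complex.abs_re_le_norm _).trans (h3 f g hf hg)
  refine (abs_add_three _ _ _).trans ?_
  have hL1 := linfty_nonneg (D1 f)
  have hL2 := linfty_nonneg (oddp f)
  have hL3 := linfty_nonneg (D1 g)
  set t1 := linfty (D1 f) * hsNorm σ g ^ 2
  set t2 := linfty (D1 g) * (hsNorm σ f ^ 2 + hsNorm σ g ^ 2)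
  set t3 := linfty (oddp f) * ε⁻¹ * (hsNorm σ g ^ 2 + ε ^ 2 * hsNorm σ (D1 g) ^ 2)
  have p1 : 0 ≤ t1 := by positivity
  have p2 : 0 ≤ t2 := by positivity
  have p3 : 0 ≤ t3 := by positivity
  have := mul_nonneg hC1 p2
  have := mul_nonneg hC2 p1
  have := mul_nonneg hC2 p3
  have := mul_nonneg hC3 p2
  have := mul_nonneg hC3 p3
  nlinarith

end S17

namespace S17
open FC MeasureTheory

lemma summable_conv {ξ w : FC} (hξ : Rapid ξ) (hw : Rapid w) (k : ℤ) :
    Summable fun j => ξ j * w (k - j) := by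
  obtain ⟨W, _, hW⟩ := hw.bdd
  refine Summable.of_norm_bounded (hξ.summable.mul_right W) fun j => ?_
  rw [norm_mul]; gcongr; exact hW _

lemma lie_eq' {ξ w : FC} (hξ : Rapid ξ) (hw : Rapid w) (k : ℤ) :
    lie ξ w k = Complex.I * k * ∑' j, ξ j * w (k - j) := by
  unfold lie mul
  rw [Pi.add_apply, ← (summable_conv hξ hw.D1 k).tsum_add (summable_conv hξ.D1 hw k),
    ← tsum_mul_left]
  refine tsum_congr fun j => ?_
  unfold D1; push_cast; ring

lemma lie_eq {ξ w : FC} (hξ : Rapid ξ) (hw : Rapid w) (k : ℤ) :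
    lie ξ w k = Complex.I * k * ∑' j, ξ (k - j) * w j := by
  rw [lie_eq' hξ hw, ← (Equiv.subLeft k).tsum_eq]
  simp

/-- Weighted `ℓ¹` norm. -/
def Zn (p : ℕ) (ξ : FC) : ℝ := ∑' k, ‖ξ k‖ * bb k ^ p

lemma Zn_nonneg (p : ℕ) (ξ : FC) : 0 ≤ Zn p ξ :=
  tsum_nonneg fun k => by have := bb_pos k; positivity

lemma lie_bound {ξ w : FC} (hξ : Rapid ξ) (hw : Rapid w) {p : ℕ} {W : ℝ}
    (h : ∀ k, ‖w k‖ * bb k ^ (p + 1) ≤ W) (k : ℤ) :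
    ‖lie ξ w k‖ * bb k ^ p ≤ Zn (p + 1) ξ * W := by
  have hb := bb_pos k
  have hs := (hξ.summable_pow (p + 1)).mul_right W
  have h1 : ‖∑' j, ξ j * w (k - j)‖ * bb k ^ (p + 1) ≤ Zn (p + 1) ξ * W := by
    rw [← Real.norm_of_nonneg (by positivity : (0 : ℝ) ≤ bb k ^ (p + 1)), ← Complex.norm_real,
      ← norm_mul, ← tsum_mul_right]
    unfold Zn
    rw [← tsum_mul_right]
    refine tsum_of_norm_bounded hs.hasSum fun j => ?_
    rw [norm_mul, norm_mul, Complex.norm_real, Real.norm_of_nonneg (by positivity)]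
    have h2 : bb k ≤ bb j * bb (k - j) := by
      have := bb_add j (k - j); rwa [add_sub_cancel] at this
    have h3 := bb_pos j
    have h4 := bb_pos (k - j)
    calc _ ≤ ‖ξ j‖ * ‖w (k - j)‖ * (bb j * bb (k - j)) ^ (p + 1) := by gcongr
      _ = ‖ξ j‖ * bb j ^ (p + 1) * (‖w (k - j)‖ * bb (k - j) ^ (p + 1)) := by rw [mul_pow]; ring
      _ ≤ _ := by gcongr; exact h _
  rw [lie_eq' hξ hw, norm_mul, norm_mul, Complex.norm_I, one_mul, Complex.norm_intCast]
  refine le_trans ?_ h1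
  calc _ ≤ bb k * ‖∑' j, ξ j * w (k - j)‖ * bb k ^ p := by gcongr; exact abs_le_bb k
    _ = _ := by ring

lemma Rapid.lie {ξ w : FC} (hξ : Rapid ξ) (hw : Rapid w) : Rapid (lie ξ w) := fun p => by
  obtain ⟨W, hW⟩ := hw (p + 1)
  exact ⟨_, lie_bound hξ hw hW⟩

lemma Zn_le (p : ℕ) : ∃ C : ℝ, 0 ≤ C ∧ ∀ ξ : FC, (∀ s : ℝ, 0 ≤ s → memHs s ξ) →
    Zn p ξ ≤ C * hsNorm (2 * ((p + 2 : ℕ) : ℝ)) ξ := by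
  refine ⟨2 ^ (p + 2) * ∑' k : ℤ, (bb k ^ 2)⁻¹, mul_nonneg (by positivity)
    (tsum_nonneg fun k => by positivity), fun ξ hξ => ?_⟩
  have h1 := coef_le_hsNorm (p + 2) (hξ (2 * ((p + 2 : ℕ) : ℝ)) (by positivity))
  unfold Zn
  rw [mul_right_comm, ← tsum_mul_left]
  refine ((rapid_of_memHs hξ).summable_pow p).tsum_le_tsum (fun k => ?_) (summable_bb.mul_left _)
  have hb := bb_pos k
  rw [← div_eq_mul_inv, le_div_iff₀ (by positivity), mul_assoc, ← pow_add]
  exact h1 k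

lemma hasSum_of_eq {ι : Type*} {E : Type*} [AddCommMonoid E] [TopologicalSpace E] {f g : ι → E}
    {a : E} (h : HasSum f a) (e : ∀ x, g x = f x) : HasSum g a := by
  rwa [show g = f from funext e]

lemma triple_sq {a ζ : ℤ → ℝ} (ha : Summable a) (hζ : Summable ζ) (ha0 : ∀ k, 0 ≤ a k)
    (hζ0 : ∀ k, 0 ≤ ζ k) :
    (HasSum (fun q : ℤ × ℤ × ℤ => a q.1 * ζ (q.1 - q.2.1) * ζ (q.2.1 - q.2.2))
      ((∑' k, ζ k) ^ 2 * ∑' k, a k)) ∧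
    (HasSum (fun q : ℤ × ℤ × ℤ => a q.2.2 * ζ (q.1 - q.2.1) * ζ (q.2.1 - q.2.2))
      ((∑' k, ζ k) ^ 2 * ∑' k, a k)) := by
  have hs2 := hζ.mul_of_nonneg hζ hζ0 hζ0
  have hs3 := ha.mul_of_nonneg hs2 ha0 (fun q => mul_nonneg (hζ0 _) (hζ0 _))
  have hS : HasSum (fun q : ℤ × ℤ × ℤ => a q.1 * (ζ q.2.1 * ζ q.2.2))
      ((∑' k, ζ k) ^ 2 * ∑' k, a k) := by
    have h2 := hζ.hasSum.mul hζ.hasSum hs2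
    have h3 := ha.hasSum.mul h2 hs3
    rwa [show (∑' k, ζ k) ^ 2 * ∑' k, a k = (∑' k, a k) * ((∑' k, ζ k) * ∑' k, ζ k) by ring]
  let e1 : ℤ × ℤ × ℤ ≃ ℤ × ℤ × ℤ :=
    ⟨fun q => (q.1, q.1 - q.2.1, q.2.1 - q.2.2), fun q => (q.1, q.1 - q.2.1, q.1 - q.2.1 - q.2.2),
      fun q => by simp, fun q => by simp⟩
  let e2 : ℤ × ℤ × ℤ ≃ ℤ × ℤ × ℤ :=
    ⟨fun q => (q.2.2, q.1 - q.2.1, q.2.1 - q.2.2), fun q => (q.2.1 + (q.2.2 + q.1), q.2.2 + q.1, q.1),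
      fun q => by simp, fun q => by simp⟩
  constructor
  · exact hasSum_of_eq (e1.hasSum_iff.2 hS) fun q => by simp [e1, mul_assoc]
  · exact hasSum_of_eq (e2.hasSum_iff.2 hS) fun q => by simp [e2, mul_assoc]

lemma triple {x ζ : ℤ → ℝ} (hx : Summable fun k => x k ^ 2) (hζ : Summable ζ)
    (hζ0 : ∀ k, 0 ≤ ζ k) {E : Type*} [NormedAddCommGroup E] [CompleteSpace E]
    {F : ℤ × ℤ × ℤ → E}
    (hF : ∀ q, ‖F q‖ ≤ x q.1 * ζ (q.1 - q.2.1) * ζ (q.2.1 - q.2.2) * x q.2.2) :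
    Summable F ∧ ‖∑' q, F q‖ ≤ (∑' k, ζ k) ^ 2 * ∑' k, x k ^ 2 := by
  obtain ⟨h1, h2⟩ := triple_sq hx hζ (fun k => sq_nonneg _) hζ0
  have h3 := (h1.add h2).mul_left (1 / 2)
  have hb : ∀ q, ‖F q‖ ≤ 1 / 2 * (x q.1 ^ 2 * ζ (q.1 - q.2.1) * ζ (q.2.1 - q.2.2)
      + x q.2.2 ^ 2 * ζ (q.1 - q.2.1) * ζ (q.2.1 - q.2.2)) := by
    intro q
    refine (hF q).trans ?_
    have h4 := mul_nonneg (hζ0 (q.1 - q.2.1)) (hζ0 (q.2.1 - q.2.2))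
    nlinarith [mul_nonneg h4 (sq_nonneg (x q.1 - x q.2.2))]
  refine ⟨Summable.of_norm_bounded h3.summable hb, (tsum_of_norm_bounded h3 hb).trans (le_of_eq ?_)⟩
  ring

/-- The trilinear noise summand. -/
def tri (ξ w : FC) (q : ℤ × ℤ × ℤ) : ℂ :=
  (starRingEnd ℂ) (w q.1) * ξ (q.1 - q.2.1) * ξ (q.2.1 - q.2.2) * w q.2.2

lemma tri_bound {ξ w : FC} (hξ : Rapid ξ) (hw : Rapid w) {G : ℤ × ℤ × ℤ → ℝ} {p : ℕ} {v : ℤ → ℝ}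
    {A : ℝ} (hv : Summable fun k => (v k * ‖w k‖) ^ 2) (hA : 0 ≤ A)
    (hG : ∀ q, |G q| ≤ A * (v q.1 * v q.2.2 * (bb (q.1 - q.2.1) ^ p * bb (q.2.1 - q.2.2) ^ p))) :
    Summable (fun q => tri ξ w q * (G q : ℂ)) ∧
      ‖∑' q, tri ξ w q * (G q : ℂ)‖ ≤ A * (Zn p ξ ^ 2 * ∑' k, (v k * ‖w k‖) ^ 2) := by
  have hx : Summable fun k => (Real.sqrt A * (v k * ‖w k‖)) ^ 2 := by
    simp_rw [mul_pow (Real.sqrt A)]; exact hv.mul_left _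
  have h := triple hx (hξ.summable_pow p) (fun k => by have := bb_pos k; positivity)
    (F := fun q => tri ξ w q * (G q : ℂ)) fun q => ?_
  · refine ⟨h.1, h.2.trans (le_of_eq ?_)⟩
    simp_rw [mul_pow (Real.sqrt A), Real.sq_sqrt hA]
    rw [tsum_mul_left]; unfold Zn; ring
  · unfold tri
    rw [norm_mul, norm_mul, norm_mul, norm_mul, RCLike.norm_conj, Complex.norm_real, Real.norm_eq_abs]
    calc _ ≤ ‖w q.1‖ * ‖ξ (q.1 - q.2.1)‖ * ‖ξ (q.2.1 - q.2.2)‖ * ‖w q.2.2‖ *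
          (A * (v q.1 * v q.2.2 * (bb (q.1 - q.2.1) ^ p * bb (q.2.1 - q.2.2) ^ p))) := by
          gcongr; exact hG q
      _ = (Real.sqrt A * Real.sqrt A) * (‖w q.1‖ * ‖ξ (q.1 - q.2.1)‖ * ‖ξ (q.2.1 - q.2.2)‖ * ‖w q.2.2‖ *
          (v q.1 * v q.2.2 * (bb (q.1 - q.2.1) ^ p * bb (q.2.1 - q.2.2) ^ p))) := by
          rw [Real.mul_self_sqrt hA]; ring
      _ = _ := by ring

/-- Crude summability. -/
lemma tri_summable {ξ w : FC} (hξ : Rapid ξ) (hw : Rapid w) {G : ℤ × ℤ × ℤ → ℝ} {p : ℕ}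
    {A : ℝ} (hA : 0 ≤ A) (hG : ∀ q, |G q| ≤ A * (bb q.1 ^ p * bb q.2.1 ^ p * bb q.2.2 ^ p)) :
    Summable (fun q => tri ξ w q * (G q : ℂ)) := by
  refine (tri_bound hξ hw (p := p) (v := fun k => bb k ^ (2 * p)) ?_ hA fun q => (hG q).trans ?_).1
  · have : Rapid (fun k => ((bb k ^ (2 * p) : ℝ) : ℂ) * w k) := hw.of_le (2 * p) 1 fun k => by
      have := bb_pos k
      rw [norm_mul, Complex.norm_real, Real.norm_of_nonneg (by positivity), one_mul]
    refine this.summable_sq.congr fun k => ?_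
    have := bb_pos k
    rw [norm_mul, Complex.norm_real, Real.norm_of_nonneg (by positivity)]
  · have h1 := one_le_bb q.1
    have h2 := one_le_bb q.2.1
    have h3 := one_le_bb q.2.2
    have h4 := one_le_bb (q.1 - q.2.1)
    have h5 := one_le_bb (q.2.1 - q.2.2)
    have h6 : bb q.2.1 ≤ bb (q.2.1 - q.2.2) * bb q.2.2 := by
      have := bb_add (q.2.1 - q.2.2) q.2.2; rwa [sub_add_cancel] at this
    refine mul_le_mul_of_nonneg_left ?_ hA
    calc _ ≤ bb q.1 ^ (2 * p) * (bb (q.2.1 - q.2.2) * bb q.2.2) ^ p * bb q.2.2 ^ p := by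
          gcongr
          omega
      _ = bb q.1 ^ (2 * p) * bb q.2.2 ^ (2 * p) * (1 * bb (q.2.1 - q.2.2) ^ p) := by
          rw [mul_pow, two_mul, pow_add (bb q.2.2)]; ring
      _ ≤ _ := by
          gcongr
          exact one_le_pow₀ h4

lemma re_tsum_S1 {ξ w : FC} (hr : isReal ξ) (G : ℤ × ℤ × ℤ → ℝ) :
    (∑' q, tri ξ w q * (G q : ℂ)).re = (∑' q : ℤ × ℤ × ℤ, tri ξ w q * (G (q.2.2, q.2.1, q.1) : ℂ)).re := by
  let e : ℤ × ℤ × ℤ ≃ ℤ × ℤ × ℤ :=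
    ⟨fun q => (q.2.2, q.2.1, q.1), fun q => (q.2.2, q.2.1, q.1), fun q => by simp, fun q => by simp⟩
  rw [← Complex.conj_re (∑' q, tri ξ w q * (G q : ℂ)), Complex.conj_tsum, ← e.tsum_eq]
  congr 1
  refine tsum_congr fun q => ?_
  have h : ∀ a b, (starRingEnd ℂ) (ξ (a - b)) = ξ (b - a) := fun a b => by
    rw [← hr, neg_sub]
  simp only [e, Equiv.coe_fn_mk, tri, map_mul, Complex.conj_conj, Complex.conj_ofReal, h]
  ring

lemma tsum_S2 {ξ w : FC} (G : ℤ × ℤ × ℤ → ℝ) :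
    (∑' q, tri ξ w q * (G q : ℂ))
      = (∑' q : ℤ × ℤ × ℤ, tri ξ w q * (G (q.1, q.1 + q.2.2 - q.2.1, q.2.2) : ℂ)) := by
  let e : ℤ × ℤ × ℤ ≃ ℤ × ℤ × ℤ :=
    ⟨fun q => (q.1, q.1 + q.2.2 - q.2.1, q.2.2), fun q => (q.1, q.1 + q.2.2 - q.2.1, q.2.2),
      fun q => by simp, fun q => by simp⟩
  rw [← e.tsum_eq]
  refine tsum_congr fun q => ?_
  simp only [e, Equiv.coe_fn_mk, tri]
  rw [show q.1 - (q.1 + q.2.2 - q.2.1) = q.2.1 - q.2.2 by ring,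
    show q.1 + q.2.2 - q.2.1 - q.2.2 = q.1 - q.2.1 by ring]
  ring

lemma noise_id1 {ξ w : FC} (hξ : Rapid ξ) (hw : Rapid w) (Q : ℤ → ℝ)
    (hs : Summable fun q : ℤ × ℤ × ℤ => tri ξ w q * ((-(q.1 * q.2.1 * Q q.1) : ℝ) : ℂ)) :
    ∑' k, (Q k : ℂ) * (lie2 ξ w k * (starRingEnd ℂ) (w k))
      = ∑' q : ℤ × ℤ × ℤ, tri ξ w q * ((-(q.1 * q.2.1 * Q q.1) : ℝ) : ℂ) := by
  rw [hs.tsum_prod]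
  refine tsum_congr fun k => ?_
  rw [(hs.prod_factor k).tsum_prod, lie2, lie_eq hξ (hξ.lie hw)]
  have : ∀ l, ξ (k - l) * lie ξ w l
      = ∑' m, ξ (k - l) * (Complex.I * l * (ξ (l - m) * w m)) := fun l => by
    rw [lie_eq hξ hw, tsum_mul_left, tsum_mul_left]
  simp_rw [this]
  rw [← tsum_mul_left, ← tsum_mul_right, ← tsum_mul_left]
  refine tsum_congr fun l => ?_
  rw [← tsum_mul_left, ← tsum_mul_right, ← tsum_mul_left]
  refine tsum_congr fun m => ?_
  simp only [tri]
  push_cast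
  linear_combination ((Q k : ℂ) * k * ξ (k - l) * l * ξ (l - m) * w m * (starRingEnd ℂ) (w k))
    * Complex.I_mul_I

lemma noise_id2 {ξ w : FC} (hξ : Rapid ξ) (hw : Rapid w) (hr : isReal ξ) (Q : ℤ → ℝ)
    (hs : Summable fun q : ℤ × ℤ × ℤ => tri ξ w q * ((q.2.1 ^ 2 * Q q.2.1 : ℝ) : ℂ)) :
    ((∑' k, Q k * ‖lie ξ w k‖ ^ 2 : ℝ) : ℂ)
      = ∑' q : ℤ × ℤ × ℤ, tri ξ w q * ((q.2.1 ^ 2 * Q q.2.1 : ℝ) : ℂ) := by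
  let e : ℤ × ℤ × ℤ ≃ ℤ × ℤ × ℤ :=
    ⟨fun q => (q.2.1, q.1, q.2.2), fun q => (q.2.1, q.1, q.2.2), fun q => by simp, fun q => by simp⟩
  have hs' : Summable fun c : ℤ × ℤ × ℤ => tri ξ w (e c) * (((e c).2.1 ^ 2 * Q (e c).2.1 : ℝ) : ℂ) :=
    e.summable_iff.2 hs
  rw [← e.tsum_eq, Summable.tsum_prod hs', Complex.ofReal_tsum]
  refine tsum_congr fun l => ?_
  rw [Summable.tsum_prod (hs'.prod_factor l)]
  have h : ∀ a b, (starRingEnd ℂ) (ξ (a - b)) = ξ (b - a) := fun a b => by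
    rw [← hr, neg_sub]
  push_cast
  rw [← Complex.conj_mul', lie_eq hξ hw, map_mul, Complex.conj_tsum]
  rw [show ∀ a b c d q : ℂ, q * (a * b * (c * d)) = b * (d * (q * a * c)) from
    fun a b c d q => by ring, ← tsum_mul_right]
  refine tsum_congr fun k => ?_
  rw [← tsum_mul_right, ← tsum_mul_left]
  refine tsum_congr fun m => ?_
  simp only [e, Function.comp, Equiv.coe_fn_mk, tri, map_mul, h, Complex.conj_I, map_intCast]
  push_cast
  linear_combination (-(Q l : ℂ) * l ^ 2 * ξ (k - l) * ξ (l - m) * w m * (starRingEnd ℂ) (w k))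
    * Complex.I_mul_I

end S17

namespace S17
open FC MeasureTheory

/-- Symbol bounds up to second order. -/
def SymB (a C : ℝ) (G : ℝ → ℝ) : Prop := 0 ≤ C ∧ ∃ G1 G2 : ℝ → ℝ,
  (∀ x, HasDerivAt G (G1 x) x) ∧ (∀ x, HasDerivAt G1 (G2 x) x) ∧
  ∀ x, |G x| ≤ C * (1 + x ^ 2) ^ a ∧ |G1 x| ≤ C * (1 + x ^ 2) ^ (a - 1 / 2)
    ∧ |G2 x| ≤ C * (1 + x ^ 2) ^ (a - 1)

lemma SymB.mul {a b C D : ℝ} {G H : ℝ → ℝ} (hG : SymB a C G) (hH : SymB b D H) :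
    SymB (a + b) (4 * (C * D)) (fun x => G x * H x) := by
  obtain ⟨hC, G1, G2, g1, g2, gb⟩ := hG
  obtain ⟨hD, H1, H2, h1, h2, hb⟩ := hH
  refine ⟨by positivity, fun x => G1 x * H x + G x * H1 x,
    fun x => (G2 x * H x + G1 x * H1 x) + (G1 x * H1 x + G x * H2 x), fun x => (g1 x).mul (h1 x),
    fun x => ((g2 x).mul (h1 x)).add ((g1 x).mul (h2 x)), fun x => ?_⟩
  obtain ⟨e0, e1, e2⟩ := gb x
  obtain ⟨f0, f1, f2⟩ := hb x
  have hA : (0 : ℝ) < 1 + x ^ 2 := by positivity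
  have key : ∀ {u v c d t : ℝ}, |u| ≤ C * (1 + x ^ 2) ^ c → |v| ≤ D * (1 + x ^ 2) ^ d → c + d = t →
      |u * v| ≤ C * D * (1 + x ^ 2) ^ t := by
    intro u v c d t hu hv ht
    rw [abs_mul, ← ht, Real.rpow_add hA]
    calc _ ≤ (C * (1 + x ^ 2) ^ c) * (D * (1 + x ^ 2) ^ d) := by gcongr
      _ = _ := by ring
  have hCD : 0 ≤ C * D := by positivity
  have p : ∀ t : ℝ, 0 ≤ C * D * (1 + x ^ 2) ^ t := fun t => by positivity
  refine ⟨?_, ?_, ?_⟩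
  · have := key e0 f0 (t := a + b) rfl
    linarith [p (a + b)]
  · have k1 := key e1 f0 (t := a + b - 1 / 2) (by ring)
    have k2 := key e0 f1 (t := a + b - 1 / 2) (by ring)
    refine (abs_add_le _ _).trans ?_
    linarith [p (a + b - 1 / 2)]
  · have k1 := key e2 f0 (t := a + b - 1) (by ring)
    have k2 := key e1 f1 (t := a + b - 1) (by ring)
    have k3 := key e0 f2 (t := a + b - 1) (by ring)
    refine (abs_add_le _ _).trans ((add_le_add (abs_add_le _ _) (abs_add_le _ _)).trans ?_)
    linarith [p (a + b - 1)]

lemma abs_le_rpow_half (x : ℝ) : |x| ≤ (1 + x ^ 2) ^ (1 / 2 : ℝ) := by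
  rw [← Real.sqrt_eq_rpow]
  exact Real.abs_le_sqrt (by linarith)

lemma SymB.id : SymB (1 / 2) 1 (fun x => x) := by
  refine ⟨by norm_num, fun _ => 1, fun _ => 0, fun x => hasDerivAt_id x,
    fun x => hasDerivAt_const x 1, fun x => ⟨?_, ?_, ?_⟩⟩
  · rw [one_mul]; exact abs_le_rpow_half x
  · simp
  · simp; positivity

lemma SymB.pow (σ : ℝ) : SymB σ (1 + 2 * |σ| + 4 * |σ| * |σ - 1|) (fun x => (1 + x ^ 2) ^ σ) := by
  have hA : ∀ x : ℝ, (0 : ℝ) < 1 + x ^ 2 := fun x => by positivity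
  have hd : ∀ (τ x : ℝ), HasDerivAt (fun x : ℝ => (1 + x ^ 2) ^ τ) (2 * τ * x * (1 + x ^ 2) ^ (τ - 1)) x := by
    intro τ x
    have h1 : HasDerivAt (fun x : ℝ => 1 + x ^ 2) (2 * x) x := by
      simpa using (hasDerivAt_pow 2 x).const_add 1
    convert h1.rpow_const (p := τ) (Or.inl (hA x).ne') using 1
    ring
  refine ⟨by positivity, fun x => 2 * σ * (x * (1 + x ^ 2) ^ (σ - 1)),
    fun x => 2 * σ * (1 * (1 + x ^ 2) ^ (σ - 1) + x * (2 * (σ - 1) * x * (1 + x ^ 2) ^ (σ - 1 - 1))),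
    fun x => ?_, fun x => ?_, fun x => ⟨?_, ?_, ?_⟩⟩
  · convert hd σ x using 1; ring
  · exact ((hasDerivAt_id x).mul (hd (σ - 1) x)).const_mul (2 * σ)
  · have := Real.rpow_pos_of_pos (hA x) σ
    rw [abs_of_pos this]
    have h : 0 ≤ (2 * |σ| + 4 * |σ| * |σ - 1|) * (1 + x ^ 2) ^ σ := by positivity
    nlinarith
  · have h1 := Real.rpow_pos_of_pos (hA x) (σ - 1)
    have e : (1 + x ^ 2) ^ (σ - 1 / 2) = (1 + x ^ 2) ^ (1 / 2 : ℝ) * (1 + x ^ 2) ^ (σ - 1) := by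
      rw [← Real.rpow_add (hA x)]; congr 1; ring
    have h2 := abs_le_rpow_half x
    rw [abs_mul, abs_mul, abs_mul, abs_two, abs_of_pos h1, e]
    calc 2 * |σ| * (|x| * (1 + x ^ 2) ^ (σ - 1))
        ≤ 2 * |σ| * ((1 + x ^ 2) ^ (1 / 2 : ℝ) * (1 + x ^ 2) ^ (σ - 1)) := by gcongr
      _ ≤ _ := by
        gcongr
        have : 0 ≤ 4 * |σ| * |σ - 1| := by positivity
        linarith
  · have h1 := Real.rpow_pos_of_pos (hA x) (σ - 1 - 1)
    have e : (1 + x ^ 2) ^ (σ - 1) = (1 + x ^ 2) * (1 + x ^ 2) ^ (σ - 1 - 1) := by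
      rw [Real.rpow_sub_one (hA x).ne' (σ - 1)]
      field_simp
    have h2 := Real.rpow_pos_of_pos (hA x) (σ - 1)
    have h3 : |x * (2 * (σ - 1) * x * (1 + x ^ 2) ^ (σ - 1 - 1))|
        ≤ 2 * |σ - 1| * (1 + x ^ 2) ^ (σ - 1) := by
      rw [show x * (2 * (σ - 1) * x * (1 + x ^ 2) ^ (σ - 1 - 1))
        = 2 * (σ - 1) * (x ^ 2 * (1 + x ^ 2) ^ (σ - 1 - 1)) by ring, e, abs_mul, abs_mul, abs_two,
        abs_of_nonneg (by positivity : (0 : ℝ) ≤ x ^ 2 * (1 + x ^ 2) ^ (σ - 1 - 1))]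
      gcongr
      linarith
    rw [abs_mul, abs_mul, abs_two]
    calc _ ≤ 2 * |σ| * ((1 + x ^ 2) ^ (σ - 1) + 2 * |σ - 1| * (1 + x ^ 2) ^ (σ - 1)) := by
          gcongr
          refine (abs_add_le _ _).trans (add_le_add ?_ h3)
          rw [one_mul, abs_of_pos h2]
      _ ≤ _ := by nlinarith

lemma SymB.sch (j : SchwartzMap ℝ ℝ) : ∃ C : ℝ, ∀ ε ∈ Set.Ioo (0 : ℝ) 1,
    SymB 0 C (fun x => j (ε * x)) := by
  have hdec : ∀ (f : SchwartzMap ℝ ℝ) (p : ℕ), ∃ C : ℝ, 0 < C ∧ ∀ x, |x| ^ p * |f x| ≤ C := by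
    intro f p
    obtain ⟨C, hC, h⟩ := f.decay p 0
    exact ⟨C, hC, fun x => by simpa using h x⟩
  set j1 := SchwartzMap.derivCLM ℝ ℝ j with hj1
  set j2 := SchwartzMap.derivCLM ℝ ℝ j1 with hj2
  have d1 : ∀ x, HasDerivAt j (j1 x) x := fun x => by
    rw [hj1, SchwartzMap.derivCLM_apply]
    exact (j.differentiable x).hasDerivAt
  have d2 : ∀ x, HasDerivAt j1 (j2 x) x := fun x => by
    rw [hj2, SchwartzMap.derivCLM_apply]
    exact (j1.differentiable x).hasDerivAt
  obtain ⟨C0, hC0, b0⟩ := hdec j 0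
  obtain ⟨C1, hC1, b1⟩ := hdec j1 0
  obtain ⟨C2, hC2, b2⟩ := hdec j1 1
  obtain ⟨C3, hC3, b3⟩ := hdec j2 0
  obtain ⟨C4, hC4, b4⟩ := hdec j2 2
  simp only [pow_zero, one_mul, pow_one] at b0 b1 b2 b3
  refine ⟨C0 + C1 + C2 + C3 + C4, fun ε hε => ⟨by positivity, fun x => ε * j1 (ε * x),
    fun x => ε * (ε * j2 (ε * x)), fun x => ?_, fun x => ?_, fun x => ⟨?_, ?_, ?_⟩⟩⟩
  · have h : HasDerivAt (fun x => ε * x) ε x := by simpa using (hasDerivAt_id x).const_mul ε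
    have := (d1 (ε * x)).comp x h
    rw [mul_comm] at this; exact this
  · have h : HasDerivAt (fun x => ε * x) ε x := by simpa using (hasDerivAt_id x).const_mul ε
    have := ((d2 (ε * x)).comp x h).const_mul ε
    rw [mul_comm (j2 _)] at this; exact this
  · rw [Real.rpow_zero]; linarith [b0 (ε * x)]
  · have hA : (0 : ℝ) < 1 + x ^ 2 := by positivity
    rw [zero_sub, Real.rpow_neg hA.le, ← div_eq_mul_inv, le_div_iff₀ (by positivity),
      ← Real.sqrt_eq_rpow, abs_mul, abs_of_pos hε.1]
    have h1 : Real.sqrt (1 + x ^ 2) ≤ 1 + |x| := by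
      rw [Real.sqrt_le_left (by positivity)]
      nlinarith [abs_nonneg x, sq_abs x]
    have h2 := b1 (ε * x)
    have h3 := b2 (ε * x)
    rw [abs_mul, abs_of_pos hε.1] at h3
    have h4 : ε * |j1 (ε * x)| ≤ |j1 (ε * x)| := mul_le_of_le_one_left (abs_nonneg _) hε.2.le
    have h5 : 0 ≤ ε * |j1 (ε * x)| := mul_nonneg hε.1.le (abs_nonneg _)
    calc _ ≤ ε * |j1 (ε * x)| * (1 + |x|) := by gcongr
      _ = ε * |j1 (ε * x)| + ε * |x| * |j1 (ε * x)| := by ring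
      _ ≤ _ := by linarith
  · have hA : (0 : ℝ) < 1 + x ^ 2 := by positivity
    rw [zero_sub, Real.rpow_neg_one, ← div_eq_mul_inv, le_div_iff₀ (by positivity),
      abs_mul, abs_mul, abs_of_pos hε.1]
    have h2 := b3 (ε * x)
    have h3 := b4 (ε * x)
    rw [sq_abs] at h3
    have h5 : 0 ≤ ε * |j2 (ε * x)| := mul_nonneg hε.1.le (abs_nonneg _)
    have h4 : ε * |j2 (ε * x)| ≤ |j2 (ε * x)| := mul_le_of_le_one_left (abs_nonneg _) hε.2.le
    have h6 : ε * (ε * |j2 (ε * x)|) ≤ ε * |j2 (ε * x)| := mul_le_of_le_one_left h5 hε.2.le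
    calc ε * (ε * |j2 (ε * x)|) * (1 + x ^ 2)
        = ε * (ε * |j2 (ε * x)|) + (ε * x) ^ 2 * |j2 (ε * x)| := by ring
      _ ≤ _ := by linarith

lemma mvt1 {F F' : ℝ → ℝ} {a b K : ℝ} (h : ∀ x, HasDerivAt F (F' x) x)
    (hK : ∀ x ∈ Set.uIcc a b, |F' x| ≤ K) : |F b - F a| ≤ K * |b - a| := by
  have := (convex_uIcc a b).norm_image_sub_le_of_norm_hasDerivWithin_le
    (fun x _ => (h x).hasDerivWithinAt) hK Set.left_mem_uIcc Set.right_mem_uIcc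
  simpa [Real.norm_eq_abs] using this

lemma mvt2 {F F1 F2 : ℝ → ℝ} {m p p' K : ℝ} (h1 : ∀ x, HasDerivAt F (F1 x) x)
    (h2 : ∀ x, HasDerivAt F1 (F2 x) x)
    (hK : ∀ x, |x - m| ≤ |p| + |p'| → |x - (m + p + p')| ≤ |p| + |p'| → |F2 x| ≤ K) :
    |F (m + p') + F (m + p) - F (m + p + p') - F m| ≤ K * |p| * |p'| := by
  have d : ∀ (F F1 : ℝ → ℝ) (c : ℝ), (∀ x, HasDerivAt F (F1 x) x) →
      ∀ t, HasDerivAt (fun t => F (c + t)) (F1 (c + t)) t := by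
    intro F F1 c h t
    have := (h (c + t)).comp_const_add c t
    exact this
  have k1 := mvt1 (F := fun t => F (m + p + t) - F (m + t)) (a := 0) (b := p') (K := K * |p|)
    (fun t => (d F F1 (m + p) h1 t).sub (d F F1 m h1 t)) fun t ht => ?_
  · simp only [add_zero, sub_zero] at k1
    rw [← abs_neg]
    refine le_trans (le_of_eq ?_) k1
    congr 1; ring
  · have k2 := mvt1 (F := fun s => F1 (m + t + s)) (a := 0) (b := p) (K := K) (d F1 F2 (m + t) h2)
      fun s hs => ?_
    · simp only [add_zero, sub_zero] at k2
      rw [show m + p + t = m + t + p by ring]; exact k2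
    · have a1 := Set.abs_sub_left_of_mem_uIcc ht
      have a2 := Set.abs_sub_right_of_mem_uIcc ht
      have b1 := Set.abs_sub_left_of_mem_uIcc hs
      have b2 := Set.abs_sub_right_of_mem_uIcc hs
      simp only [sub_zero] at a1 a2 b1 b2
      apply hK
      · rw [show m + t + s - m = s + t by ring]
        exact (abs_add_le _ _).trans (add_le_add b1 a1)
      · rw [← abs_neg, show -(m + t + s - (m + p + p')) = (p - s) + (p' - t) by ring]
        exact (abs_add_le _ _).trans (add_le_add b2 a2)

lemma base_le_of_dist {x k D : ℝ} (h : |x - k| ≤ D) : 1 + x ^ 2 ≤ 2 * (1 + k ^ 2) * (1 + D ^ 2) := by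
  have h1 : (x - k) ^ 2 ≤ D ^ 2 := sq_le_sq' (by linarith [(abs_le.1 h).1]) (abs_le.1 h).2
  nlinarith [sq_nonneg (x - 2 * k), mul_nonneg (sq_nonneg k) (sq_nonneg D)]

lemma rpow_le_wt {σ : ℝ} (hσ : 0 ≤ σ) {x B : ℝ} {k m : ℤ} {D : ℝ} (hB : 1 + D ^ 2 ≤ B)
    (hk : |x - k| ≤ D) (hm : |x - m| ≤ D) :
    (1 + x ^ 2) ^ σ ≤ (2 * B) ^ σ * (wt (σ / 2) k * wt (σ / 2) m) := by
  have hA : (0 : ℝ) < 1 + x ^ 2 := by positivity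
  have hB0 : 0 < B := lt_of_lt_of_le (by positivity) hB
  have hh : 0 ≤ σ / 2 := by positivity
  have h1 : ∀ k : ℤ, |x - k| ≤ D → (1 + x ^ 2) ^ (σ / 2) ≤ (2 * B) ^ (σ / 2) * wt (σ / 2) k := by
    intro k hk
    unfold wt
    rw [← Real.mul_rpow (by positivity) (base_pos k).le]
    refine Real.rpow_le_rpow hA.le ((base_le_of_dist hk).trans ?_) hh
    have := base_pos k
    calc _ ≤ 2 * (1 + (k : ℝ) ^ 2) * B := by gcongr
      _ = _ := by ring
  have e : ∀ {y : ℝ}, 0 < y → y ^ σ = y ^ (σ / 2) * y ^ (σ / 2) := fun hy => by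
    rw [← Real.rpow_add hy]; congr 1; ring
  rw [e hA, e (by positivity : 0 < 2 * B)]
  calc _ ≤ ((2 * B) ^ (σ / 2) * wt (σ / 2) k) * ((2 * B) ^ (σ / 2) * wt (σ / 2) m) := by
        gcongr
        · exact (Real.rpow_nonneg hA.le _).trans (h1 k hk)
        · exact h1 k hk
        · exact h1 m hm
    _ = _ := by ring

/-- The symmetrized symbol is bounded. -/
lemma symm_bound (j : SchwartzMap ℝ ℝ) {σ : ℝ} (hσ : 0 ≤ σ) : ∃ C : ℝ, 0 ≤ C ∧ ∃ M : ℕ,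
    ∀ ε ∈ Set.Ioo (0 : ℝ) 1, ∀ Q : ℝ → ℝ, (∀ x, Q x = (1 + x ^ 2) ^ σ * j (ε * x) ^ 2) →
    ∀ k l m : ℤ,
    |2 * ((l : ℝ) ^ 2 * Q l + ((k + m - l : ℤ) : ℝ) ^ 2 * Q ((k + m - l : ℤ) : ℝ)
        - (k : ℝ) ^ 2 * Q k - (m : ℝ) ^ 2 * Q m)
      + ((k : ℝ) - m) * (k * Q k - m * Q m)|
      ≤ C * (wt (σ / 2) k * wt (σ / 2) m * (bb (k - l) ^ M * bb (l - m) ^ M)) := by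
  obtain ⟨C0, h0⟩ := SymB.sch j
  have h1 := fun ε hε => ((SymB.pow σ).mul ((h0 ε hε).mul (h0 ε hε)))
  have h2 := fun ε hε => SymB.id.mul (h1 ε hε)
  have h3 := fun ε hε => SymB.id.mul (h2 ε hε)
  set Cφ := 4 * (1 * (4 * ((1 + 2 * |σ| + 4 * |σ| * |σ - 1|) * (4 * (C0 * C0))))) with hCφ
  obtain ⟨n, hn⟩ := exists_nat_gt σ
  have hC00 : 0 ≤ C0 := (h0 (1 / 2) ⟨by norm_num, by norm_num⟩).1
  have hC0 : 0 ≤ Cφ := by rw [hCφ]; positivity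
  refine ⟨12 * Cφ * 2 ^ σ, by positivity, 2 * (n + 1), fun ε hε Q hQ k l m => ?_⟩
  obtain ⟨-, φ1, φ2, d1, -, b1⟩ := h2 ε hε
  obtain ⟨-, ψ1, ψ2, e1, e2, b2⟩ := h3 ε hε
  set φ : ℝ → ℝ := fun x => x * ((1 + x ^ 2) ^ σ * (j (ε * x) * j (ε * x))) with hφ
  set ψ : ℝ → ℝ := fun x => x * φ x with hψ
  have hQφ : ∀ x, x * Q x = φ x := fun x => by rw [hQ, hφ]; ring
  have hQψ : ∀ x, x ^ 2 * Q x = ψ x := fun x => by simp only [hψ]; rw [← hQφ]; ring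
  simp only [hQφ, hQψ]
  set p : ℝ := ((k - l : ℤ) : ℝ) with hp
  set p' : ℝ := ((l - m : ℤ) : ℝ) with hp'
  set D : ℝ := |p| + |p'| with hD
  set B : ℝ := (bb (k - l) * bb (l - m)) ^ 2 with hBdef
  have bp : bb (k - l) = 1 + |p| := by unfold bb; rw [hp]
  have bp' : bb (l - m) = 1 + |p'| := by unfold bb; rw [hp']
  have n1 := abs_nonneg p
  have n2 := abs_nonneg p'
  have hb1 : 1 + |p| + |p'| + |p| * |p'| = bb (k - l) * bb (l - m) := by rw [bp, bp']; ring
  have n3 := mul_nonneg n1 n2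
  have hB : 1 + D ^ 2 ≤ B := by
    rw [hBdef, ← hb1, hD]; nlinarith
  have hB1 : 1 ≤ B := by nlinarith [sq_nonneg D]
  have hpp : |p| * |p'| ≤ B := by
    nlinarith [sq_nonneg (|p| - |p'|), sq_nonneg D]
  have hkm : (k : ℝ) = m + p + p' := by rw [hp, hp']; push_cast; ring
  have hl : (l : ℝ) = m + p' := by rw [hp']; push_cast; ring
  have hl' : ((k + m - l : ℤ) : ℝ) = m + p := by rw [hp]; push_cast; ring
  set K : ℝ := 4 * (1 * Cφ) * ((2 * B) ^ σ * (wt (σ / 2) k * wt (σ / 2) m)) with hK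
  have hw1 := wt_pos (σ / 2) k
  have hw2 := wt_pos (σ / 2) m
  have hB0 : 0 < B := by linarith
  have hK0 : 0 ≤ K := by positivity
  have hx : ∀ x : ℝ, |x - (m : ℝ)| ≤ D → |x - (k : ℝ)| ≤ D → |φ1 x| ≤ K ∧ |ψ2 x| ≤ K := by
    intro x hm hk
    have hr := rpow_le_wt hσ hB hk hm
    have hr0 : 0 ≤ (1 + x ^ 2) ^ σ := by positivity
    have t1 := (b1 x).2.1
    have t2 := (b2 x).2.2
    rw [show 1 / 2 + (σ + (0 + 0)) - 1 / 2 = σ by ring] at t1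
    rw [show 1 / 2 + (1 / 2 + (σ + (0 + 0))) - 1 = σ by ring] at t2
    constructor
    · refine t1.trans ?_
      rw [hK]
      gcongr
      linarith
    · refine t2.trans ?_
      rw [hK]
      gcongr
  have m2 := mvt2 (m := (m : ℝ)) (p := p) (p' := p') e1 e2 (K := K) fun x h h' =>
    (hx x h (by rw [hkm]; exact h')).2
  have hkmD : |(k : ℝ) - m| ≤ D := by
    rw [hkm, show (m : ℝ) + p + p' - m = p + p' by ring]; exact abs_add_le _ _
  have m1 := mvt1 (a := (m : ℝ)) (b := (k : ℝ)) d1 (K := K) fun x hxm =>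
    (hx x ((Set.abs_sub_left_of_mem_uIcc hxm).trans hkmD)
      (by rw [abs_sub_comm]; exact (Set.abs_sub_right_of_mem_uIcc hxm).trans hkmD)).1
  rw [← hkm, ← hl] at m2
  rw [hl']
  have hfin : |2 * (ψ l + ψ (m + p) - ψ k - ψ m) + ((k : ℝ) - m) * (φ k - φ m)| ≤ 3 * (K * B) := by
    refine (abs_add_le _ _).trans ?_
    rw [abs_mul, abs_mul, abs_two]
    have q1 : |(k : ℝ) - m| * |φ k - φ m| ≤ K * B := by
      calc _ ≤ D * (K * D) := by
            gcongr
            exact m1.trans (by gcongr)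
        _ = K * D ^ 2 := by ring
        _ ≤ _ := by gcongr; linarith
    have q2 : K * |p| * |p'| ≤ K * B := by rw [mul_assoc]; gcongr
    linarith
  refine hfin.trans ?_
  have hBσ : B ^ σ * B ≤ bb (k - l) ^ (2 * (n + 1)) * bb (l - m) ^ (2 * (n + 1)) := by
    calc _ ≤ B ^ n * B := by
          gcongr
          rw [← Real.rpow_natCast]
          exact Real.rpow_le_rpow_of_exponent_le hB1 hn.le
      _ = _ := by rw [← pow_succ, hBdef, ← pow_mul, mul_pow]
  rw [hK, Real.mul_rpow (by norm_num) hB0.le]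
  calc _ = 12 * Cφ * 2 ^ σ * (wt (σ / 2) k * wt (σ / 2) m * (B ^ σ * B)) := by ring
    _ ≤ _ := by gcongr

end S17

namespace S17
open FC MeasureTheory

def PolyB (G : ℤ × ℤ × ℤ → ℝ) : Prop :=
  ∃ A : ℝ, 0 ≤ A ∧ ∃ p : ℕ, ∀ q, |G q| ≤ A * (bb q.1 ^ p * bb q.2.1 ^ p * bb q.2.2 ^ p)

lemma PolyB.mul {G H : ℤ × ℤ × ℤ → ℝ} (hG : PolyB G) (hH : PolyB H) :
    PolyB (fun q => G q * H q) := by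
  obtain ⟨A, hA, p, hp⟩ := hG
  obtain ⟨B, hB, r, hr⟩ := hH
  refine ⟨A * B, by positivity, p + r, fun q => ?_⟩
  have h1 := bb_pos q.1
  have h2 := bb_pos q.2.1
  have h3 := bb_pos q.2.2
  rw [abs_mul]
  calc _ ≤ _ := mul_le_mul (hp q) (hr q) (abs_nonneg _) (by positivity)
    _ = _ := by ring

lemma PolyB.add {G H : ℤ × ℤ × ℤ → ℝ} (hG : PolyB G) (hH : PolyB H) :
    PolyB (fun q => G q + H q) := by
  obtain ⟨A, hA, p, hp⟩ := hG
  obtain ⟨B, hB, r, hr⟩ := hH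
  refine ⟨A + B, by positivity, p + r, fun q => ?_⟩
  have h1 := one_le_bb q.1
  have h2 := one_le_bb q.2.1
  have h3 := one_le_bb q.2.2
  rw [add_mul]
  refine (abs_add_le _ _).trans (add_le_add ((hp q).trans ?_) ((hr q).trans ?_))
  · gcongr <;> first | assumption | omega
  · gcongr <;> first | assumption | omega

lemma PolyB.neg {G : ℤ × ℤ × ℤ → ℝ} (hG : PolyB G) : PolyB (fun q => - G q) := by
  obtain ⟨A, hA, p, hp⟩ := hG
  exact ⟨A, hA, p, fun q => by rw [abs_neg]; exact hp q⟩

lemma PolyB.S1 {G : ℤ × ℤ × ℤ → ℝ} (hG : PolyB G) : PolyB (fun q => G (q.2.2, q.2.1, q.1)) := by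
  obtain ⟨A, hA, p, hp⟩ := hG
  refine ⟨A, hA, p, fun q => (hp _).trans (le_of_eq ?_)⟩
  simp only; ring

lemma PolyB.S2 {G : ℤ × ℤ × ℤ → ℝ} (hG : PolyB G) :
    PolyB (fun q => G (q.1, q.1 + q.2.2 - q.2.1, q.2.2)) := by
  obtain ⟨A, hA, p, hp⟩ := hG
  refine ⟨A, hA, 2 * p, fun q => (hp _).trans ?_⟩
  have h1 := bb_pos q.1
  have h2 := one_le_bb q.2.1
  have h3 := bb_pos q.2.2
  have h4 : bb (q.1 + q.2.2 - q.2.1) ≤ bb q.1 * bb q.2.2 * bb q.2.1 := by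
    refine (bb_sub _ _).trans ?_
    gcongr
    exact bb_add _ _
  have h5 := bb_pos (q.1 + q.2.2 - q.2.1)
  simp only
  calc A * (bb q.1 ^ p * bb (q.1 + q.2.2 - q.2.1) ^ p * bb q.2.2 ^ p)
      ≤ A * (bb q.1 ^ p * (bb q.1 * bb q.2.2 * bb q.2.1) ^ p * bb q.2.2 ^ p) := by gcongr
    _ = A * (bb q.1 ^ (2 * p) * bb q.2.1 ^ p * bb q.2.2 ^ (2 * p)) := by
        simp only [mul_pow, two_mul, pow_add]; ring
    _ ≤ _ := by gcongr <;> first | assumption | omega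

lemma PolyB.coord {Q : ℤ → ℝ} {p : ℕ} (hQ : ∀ k, |Q k| ≤ bb k ^ p) :
    PolyB (fun q => Q q.1) ∧ PolyB (fun q => Q q.2.1) := by
  have h (q : ℤ × ℤ × ℤ) := one_le_pow₀ (one_le_bb q.1) (n := p)
  have h' (q : ℤ × ℤ × ℤ) := one_le_pow₀ (one_le_bb q.2.1) (n := p)
  have h'' (q : ℤ × ℤ × ℤ) := one_le_pow₀ (one_le_bb q.2.2) (n := p)
  constructor
  · refine ⟨1, by norm_num, p, fun q => (hQ _).trans ?_⟩
    rw [one_mul, mul_assoc]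
    exact le_mul_of_one_le_right (by linarith [h q]) (one_le_mul_of_one_le_of_one_le (h' q) (h'' q))
  · refine ⟨1, by norm_num, p, fun q => (hQ _).trans ?_⟩
    rw [one_mul, mul_right_comm, mul_comm]
    exact le_mul_of_one_le_right (by linarith [h' q]) (one_le_mul_of_one_le_of_one_le (h q) (h'' q))

lemma PolyB.summable {G : ℤ × ℤ × ℤ → ℝ} (hG : PolyB G) {ξ w : FC} (hξ : Rapid ξ) (hw : Rapid w) :
    Summable (fun q => tri ξ w q * (G q : ℂ)) := by
  obtain ⟨A, hA, p, hp⟩ := hG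
  exact tri_summable hξ hw hA hp

lemma tri_add {G H : ℤ × ℤ × ℤ → ℝ} (hG : PolyB G) (hH : PolyB H) {ξ w : FC} (hξ : Rapid ξ)
    (hw : Rapid w) : (∑' q, tri ξ w q * (G q : ℂ)) + (∑' q, tri ξ w q * (H q : ℂ))
      = ∑' q, tri ξ w q * ((G q + H q : ℝ) : ℂ) := by
  rw [← (hG.summable hξ hw).tsum_add (hH.summable hξ hw)]
  refine tsum_congr fun q => ?_
  push_cast; ring

lemma noise (j : SchwartzMap ℝ ℝ) (hj0 : ∀ x, 0 ≤ j x) (hj1 : ∀ x, j x ≤ 1) {σ : ℝ} (hσ : 0 ≤ σ) :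
    ∃ C : ℝ, 0 ≤ C ∧ ∃ M : ℕ, ∀ ε ∈ Set.Ioo (0 : ℝ) 1, ∀ ξ w : FC, Rapid ξ → isReal ξ → Rapid w →
      (∑' k, ((wt σ k * j (ε * k) ^ 2 : ℝ) : ℂ) * (lie2 ξ w k * (starRingEnd ℂ) (w k))).re
        + ∑' k, (wt σ k * j (ε * k) ^ 2) * ‖lie ξ w k‖ ^ 2
        ≤ C * (Zn M ξ ^ 2 * hsNorm σ w ^ 2) := by
  obtain ⟨C, hC, M, hM⟩ := symm_bound j hσ
  obtain ⟨p, hp⟩ := wt_le_bb σ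
  refine ⟨C, hC, M, fun ε hε ξ w hξ hr hw => ?_⟩
  set Q : ℤ → ℝ := fun k => wt σ k * j (ε * k) ^ 2 with hQ
  have hQb : ∀ k, |Q k| ≤ bb k ^ p := fun k => by
    rw [hQ]; simp only
    rw [abs_of_nonneg (mul_nonneg (wt_pos σ k).le (sq_nonneg _))]
    refine le_trans ?_ (hp k)
    exact mul_le_of_le_one_right (wt_pos σ k).le (pow_le_one₀ (hj0 _) (hj1 _))
  have hid : ∀ k : ℤ, |((k : ℤ) : ℝ)| ≤ bb k ^ 1 := fun k => by rw [pow_one]; exact abs_le_bb k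
  have c1 := PolyB.coord hQb
  have c2 := PolyB.coord hid
  have p1 : PolyB (fun q => -(q.1 * q.2.1 * Q q.1)) := ((c2.1.mul c2.2).mul c1.1).neg
  have p2 : PolyB (fun q => q.2.1 ^ 2 * Q q.2.1) := by
    simpa only [sq] using (c2.2.mul c2.2).mul c1.2
  have i1 := noise_id1 hξ hw Q (p1.summable hξ hw)
  have i2 := noise_id2 hξ hw hr Q (p2.summable hξ hw)
  have i3 := tri_add p1 p2 hξ hw
  rw [← i1, ← i2] at i3
  set G : ℤ × ℤ × ℤ → ℝ := fun q => -(q.1 * q.2.1 * Q q.1) + q.2.1 ^ 2 * Q q.2.1 with hG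
  have pG : PolyB G := p1.add p2
  have pG2 : PolyB (fun q => G q + G (q.2.2, q.2.1, q.1)) := pG.add pG.S1
  have e1 := re_tsum_S1 (w := w) hr G
  have e2 := congrArg Complex.re (tri_add pG pG.S1 hξ hw)
  have e3 := congrArg Complex.re (tsum_S2 (ξ := ξ) (w := w) (fun q => G q + G (q.2.2, q.2.1, q.1)))
  have e4 := congrArg Complex.re (tri_add pG2 pG2.S2 hξ hw)
  have e5 := congrArg Complex.re i3
  simp only [Complex.add_re, Complex.ofReal_re] at e2 e4 e5
  have hv : Summable fun k => (wt (σ / 2) k * ‖w k‖) ^ 2 := by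
    refine (hw.memHs σ).congr fun k => ?_
    rw [mul_pow, wt_half_sq]
  have hv2 : ∑' k, (wt (σ / 2) k * ‖w k‖) ^ 2 = hsNorm σ w ^ 2 := by
    rw [hsNorm_sq]
    refine tsum_congr fun k => ?_
    rw [mul_pow, wt_half_sq]
  have hb := (tri_bound hξ hw (G := fun q => G q + G (q.2.2, q.2.1, q.1) +
      (G (q.1, q.1 + q.2.2 - q.2.1, q.2.2) + G (q.2.2, q.1 + q.2.2 - q.2.1, q.1)))
      (p := M) hv hC ?_).2
  · rw [hv2] at hb
    have hb2 := (Complex.re_le_norm _).trans hb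
    have hn : 0 ≤ C * (Zn M ξ ^ 2 * hsNorm σ w ^ 2) := by positivity
    have hQ' : ∀ k, (wt σ k * j (ε * k) ^ 2) = Q k := fun k => rfl
    linarith
  · intro q
    have := hM ε hε (fun x => (1 + x ^ 2) ^ σ * j (ε * x) ^ 2) (fun x => rfl) q.1 q.2.1 q.2.2
    refine le_trans (le_of_eq (congrArg abs ?_)) this
    simp only [hG, hQ, wt]
    push_cast
    ring

end S17

namespace S17
open FC MeasureTheory

lemma summable_mul_nat {f g : ℕ → ℝ} (hf : Summable f) (hg : Summable g) (hf0 : ∀ i, 0 ≤ f i)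
    (hg0 : ∀ i, 0 ≤ g i) : Summable fun i => f i * g i := by
  refine Summable.of_nonneg_of_le (fun i => mul_nonneg (hf0 i) (hg0 i)) (fun i => ?_)
    (hg.mul_left (∑' i, f i))
  exact mul_le_mul_of_nonneg_right (hf.le_tsum i fun j _ => hf0 j) (hg0 i)

lemma summable_Zn {ξ : ℕ → FC} (hmem : ∀ σ : ℝ, 0 ≤ σ → ∀ k, memHs σ (ξ k))
    (hsum : ∀ σ : ℝ, 0 ≤ σ → Summable fun k => hsNorm σ (ξ k)) (p : ℕ) :
    Summable fun i => Zn p (ξ i) := by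
  obtain ⟨C, hC, h⟩ := Zn_le p
  exact Summable.of_nonneg_of_le (fun i => Zn_nonneg _ _)
    (fun i => h (ξ i) fun s hs => hmem s hs i) ((hsum _ (by positivity)).mul_left C)

lemma noise_sum (j : SchwartzMap ℝ ℝ) (hj0 : ∀ x, 0 ≤ j x) (hj1 : ∀ x, j x ≤ 1) {σ : ℝ}
    (hσ : 0 ≤ σ) {ξ : ℕ → FC} (hmem : ∀ σ : ℝ, 0 ≤ σ → ∀ k, memHs σ (ξ k))
    (hreal : ∀ k, isReal (ξ k))
    (hsum : ∀ σ : ℝ, 0 ≤ σ → Summable fun k => hsNorm σ (ξ k)) :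
    ∃ C : ℝ, 0 ≤ C ∧ ∀ ε ∈ Set.Ioo (0 : ℝ) 1, ∀ w : FC, Rapid w →
      (Summable fun i => ∑' k, (wt σ k * j (ε * k) ^ 2) * ‖lie (ξ i) w k‖ ^ 2) ∧
      (Summable fun k => ((wt σ k * j (ε * k) ^ 2 : ℝ) : ℂ) *
        (tsumFC (fun i => lie2 (ξ i) w) k * (starRingEnd ℂ) (w k))) ∧
      (∑' k, ((wt σ k * j (ε * k) ^ 2 : ℝ) : ℂ) *
        (tsumFC (fun i => lie2 (ξ i) w) k * (starRingEnd ℂ) (w k))).re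
        + ∑' i, ∑' k, (wt σ k * j (ε * k) ^ 2) * ‖lie (ξ i) w k‖ ^ 2
        ≤ C * hsNorm σ w ^ 2 := by
  obtain ⟨C, hC, M, hM⟩ := noise j hj0 hj1 hσ
  obtain ⟨p, hp⟩ := wt_le_bb σ
  have hz := summable_Zn hmem hsum
  have hzz : ∀ p q, Summable fun i => Zn p (ξ i) * Zn q (ξ i) := fun p q =>
    summable_mul_nat (hz p) (hz q) (fun i => Zn_nonneg _ _) (fun i => Zn_nonneg _ _)
  have hrap : ∀ i, Rapid (ξ i) := fun i => rapid_of_memHs fun s hs => hmem s hs i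
  refine ⟨C * ∑' i, Zn M (ξ i) ^ 2, mul_nonneg hC (tsum_nonneg fun i => sq_nonneg _),
    fun ε hε w hw => ?_⟩
  set Q : ℤ → ℝ := fun k => wt σ k * j (ε * k) ^ 2 with hQ
  have hQ0 : ∀ k, 0 ≤ Q k := fun k => mul_nonneg (wt_pos σ k).le (sq_nonneg _)
  have hQb : ∀ k, Q k ≤ bb k ^ p := fun k => by
    refine le_trans ?_ (hp k)
    exact mul_le_of_le_one_right (wt_pos σ k).le (pow_le_one₀ (hj0 _) (hj1 _))
  -- the square terms
  have hb : Summable fun i => ∑' k, Q k * ‖lie (ξ i) w k‖ ^ 2 := by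
    obtain ⟨W, hW⟩ := hw (p + 1 + 1)
    have hW0 : 0 ≤ W := le_trans (by have := bb_pos 0; positivity) (hW 0)
    refine Summable.of_nonneg_of_le
      (fun i => tsum_nonneg fun k => mul_nonneg (hQ0 k) (sq_nonneg _)) (fun i => ?_)
      ((hzz (p + 1 + 1) (p + 1 + 1)).mul_right (W ^ 2 * ∑' k, (bb k ^ 2)⁻¹))
    have hpt : ∀ k, Q k * ‖lie (ξ i) w k‖ ^ 2
        ≤ (Zn (p + 1 + 1) (ξ i) * W) ^ 2 * (bb k ^ 2)⁻¹ := by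
      intro k
      have h1 := lie_bound (hrap i) hw hW k
      have hbk := one_le_bb k
      have h0 : 0 ≤ ‖lie (ξ i) w k‖ * bb k ^ (p + 1) := by positivity
      rw [← div_eq_mul_inv, le_div_iff₀ (by positivity)]
      calc Q k * ‖lie (ξ i) w k‖ ^ 2 * bb k ^ 2 ≤ bb k ^ p * ‖lie (ξ i) w k‖ ^ 2 * bb k ^ 2 := by
            gcongr; exact hQb k
        _ ≤ bb k ^ (2 * p) * ‖lie (ξ i) w k‖ ^ 2 * bb k ^ 2 := by
            gcongr
            omega
        _ = (‖lie (ξ i) w k‖ * bb k ^ (p + 1)) ^ 2 := by ring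
        _ ≤ _ := by gcongr
    have hs2 := (summable_bb.mul_left ((Zn (p + 1 + 1) (ξ i) * W) ^ 2))
    calc _ ≤ _ := (Summable.of_nonneg_of_le (fun k => mul_nonneg (hQ0 k) (sq_nonneg _)) hpt hs2).tsum_le_tsum hpt hs2
      _ = _ := by rw [tsum_mul_left]; ring
  -- the cross terms
  obtain ⟨W, hW⟩ := hw (1 + 1)
  have hW0 : 0 ≤ W := le_trans (by have := bb_pos 0; positivity) (hW 0)
  have hl2 : ∀ i k, ‖lie2 (ξ i) w k‖ ≤ Zn 1 (ξ i) * Zn 2 (ξ i) * W := by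
    intro i k
    have h1 := lie_bound (hrap i) ((hrap i).lie hw) (p := 0)
      (W := Zn 2 (ξ i) * W) (fun k => lie_bound (hrap i) hw hW k) k
    rw [pow_zero, mul_one] at h1
    calc _ ≤ _ := h1
      _ = _ := by ring
  have hF : Summable fun q : ℕ × ℤ =>
      ((Q q.2 : ℝ) : ℂ) * (lie2 (ξ q.1) w q.2 * (starRingEnd ℂ) (w q.2)) := by
    have hpr := ((hzz 1 2).mul_right W).mul_of_nonneg (hw.summable_pow p)
      (fun i => mul_nonneg (mul_nonneg (Zn_nonneg _ _) (Zn_nonneg _ _)) hW0)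
      (fun k => by have := bb_pos k; positivity)
    refine Summable.of_norm_bounded hpr fun q => ?_
    rw [norm_mul, norm_mul, Complex.norm_real, Real.norm_of_nonneg (hQ0 _), RCLike.norm_conj]
    have h1 := hl2 q.1 q.2
    have h2 := hQb q.2
    have h3 := hQ0 q.2
    have h4 := bb_pos q.2
    calc _ ≤ bb q.2 ^ p * (Zn 1 (ξ q.1) * Zn 2 (ξ q.1) * W * ‖w q.2‖) := by gcongr
      _ = _ := by ring
  have hFk : ∀ k, HasSum (fun i => ((Q k : ℝ) : ℂ) * (lie2 (ξ i) w k * (starRingEnd ℂ) (w k)))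
      (((Q k : ℝ) : ℂ) * (tsumFC (fun i => lie2 (ξ i) w) k * (starRingEnd ℂ) (w k))) := by
    intro k
    refine (HasSum.mul_right _ ?_).mul_left _
    refine Summable.hasSum (Summable.of_norm_bounded ((hzz 1 2).mul_right W) fun i => hl2 i k)
  have hFs := hF.prod_symm
  have hsk := hFs.prod
  have e1 : (fun k => ∑' i, ((Q k : ℝ) : ℂ) * (lie2 (ξ i) w k * (starRingEnd ℂ) (w k)))
      = fun k => ((Q k : ℝ) : ℂ) * (tsumFC (fun i => lie2 (ξ i) w) k * (starRingEnd ℂ) (w k)) :=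
    funext fun k => (hFk k).tsum_eq
  have hcomm := hF.tsum_comm (f := fun i k =>
    ((Q k : ℝ) : ℂ) * (lie2 (ξ i) w k * (starRingEnd ℂ) (w k)))
  refine ⟨hb, ?_, ?_⟩
  · rw [← e1]; exact hsk
  · rw [e1] at hcomm
    rw [hcomm]
    have ha := hF.prod
    have har : Summable fun i => (∑' k, ((Q k : ℝ) : ℂ) *
        (lie2 (ξ i) w k * (starRingEnd ℂ) (w k))).re := Complex.reCLM.summable ha
    rw [Complex.re_tsum ha]
    refine le_trans (le_of_eq (har.tsum_add hb).symm) ?_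
    rw [mul_right_comm, ← tsum_mul_left]
    have hfin : Summable fun i => C * hsNorm σ w ^ 2 * Zn M (ξ i) ^ 2 := by
      simpa only [sq] using (hzz M M).mul_left (C * (hsNorm σ w * hsNorm σ w))
    refine (har.add hb).tsum_le_tsum (fun i => ?_) hfin
    refine (hM ε hε (ξ i) w (hrap i) (hreal i) hw).trans (le_of_eq ?_)
    ring

end S17

namespace S17
open FC MeasureTheory

lemma memHs.mono {a b : ℝ} (hab : a ≤ b) {c : FC} (h : memHs b c) : memHs a c :=
  Summable.of_nonneg_of_le (fun k => mul_nonneg (wt_pos a k).le (sq_nonneg _))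
    (fun k => mul_le_mul_of_nonneg_right (wt_mono hab k) (sq_nonneg _)) h

lemma hsNorm_sq_mono {a b : ℝ} (hab : a ≤ b) {c : FC} (h : memHs b c) :
    hsNorm a c ^ 2 ≤ hsNorm b c ^ 2 := by
  rw [hsNorm_sq, hsNorm_sq]
  exact (memHs.mono hab h).tsum_le_tsum
    (fun k => mul_le_mul_of_nonneg_right (wt_mono hab k) (sq_nonneg _)) h

/-- comparison of norms by pointwise comparison of coefficients -/
lemma hsNorm_sq_le {a b A : ℝ} {c d : FC} (hd : memHs b d)
    (h : ∀ k, wt a k * ‖c k‖ ^ 2 ≤ A * (wt b k * ‖d k‖ ^ 2)) :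
    memHs a c ∧ hsNorm a c ^ 2 ≤ A * hsNorm b d ^ 2 := by
  have h1 : memHs a c := Summable.of_nonneg_of_le
    (fun k => mul_nonneg (wt_pos a k).le (sq_nonneg _)) h (hd.mul_left A)
  refine ⟨h1, ?_⟩
  rw [hsNorm_sq, hsNorm_sq, ← tsum_mul_left]
  exact h1.tsum_le_tsum h (hd.mul_left A)

lemma memHs.summ_bb {a : ℝ} (ha : 2 ≤ a) {c : FC} (h : memHs a c) :
    Summable fun k => bb k * ‖c k‖ := by
  refine Summable.of_nonneg_of_le (fun k => by have := bb_pos k; positivity) (fun k => ?_)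
    (summable_bb.add (h.mul_left 4))
  have h1 := bb_pos k
  have h2 : bb k ^ 4 ≤ 4 * wt a k := by
    have h3 := bb_le_base k
    have h4 : (1 + (k : ℝ) ^ 2) ^ 2 ≤ wt a k := by
      refine le_trans (le_of_eq ?_) (wt_mono ha k)
      unfold wt; norm_num
    nlinarith [sq_nonneg (bb k)]
  set x := (bb k)⁻¹ with hx
  have hxk : x * bb k = 1 := inv_mul_cancel₀ h1.ne'
  have h5 : (bb k ^ 2)⁻¹ = x ^ 2 := by rw [inv_pow]
  rw [h5]
  have h6 : bb k ^ 4 * ‖c k‖ ^ 2 ≤ 4 * (wt a k * ‖c k‖ ^ 2) := by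
    rw [← mul_assoc]; gcongr
  have h7 : bb k * ‖c k‖ = x * (bb k ^ 2 * ‖c k‖) := by
    rw [show x * (bb k ^ 2 * ‖c k‖) = (x * bb k) * (bb k * ‖c k‖) by ring, hxk, one_mul]
  rw [h7]
  nlinarith [sq_nonneg (x - bb k ^ 2 * ‖c k‖), sq_nonneg x, sq_nonneg (bb k ^ 2 * ‖c k‖)]

lemma memHs.summable {a : ℝ} (ha : 2 ≤ a) {c : FC} (h : memHs a c) : Summable fun k => ‖c k‖ :=
  Summable.of_nonneg_of_le (fun k => norm_nonneg _)
    (fun k => le_mul_of_one_le_left (norm_nonneg _) (one_le_bb k)) (memHs.summ_bb ha h)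

lemma memHs.summable_D1 {a : ℝ} (ha : 2 ≤ a) {c : FC} (h : memHs a c) :
    Summable fun k => ‖D1 c k‖ := by
  refine Summable.of_nonneg_of_le (fun k => norm_nonneg _) (fun k => ?_) (memHs.summ_bb ha h)
  simp only [D1, norm_mul, Complex.norm_I, one_mul]
  gcongr
  have := abs_le_bb k
  simpa using this

lemma memHs.bdd {a : ℝ} (ha : 0 ≤ a) {c : FC} (h : memHs a c) (k : ℤ) : ‖c k‖ ≤ hsNorm a c := by
  refine le_trans ?_ (memHs_coef h k)
  exact le_mul_of_one_le_left (norm_nonneg _) (one_le_wt (by positivity) k)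

lemma norm_Jmol_le {j : SchwartzMap ℝ ℝ} (hj0 : ∀ x, 0 ≤ j x) (hj1 : ∀ x, j x ≤ 1) (ε : ℝ) (c : FC)
    (k : ℤ) : ‖Jmol j ε c k‖ ≤ ‖c k‖ := by
  unfold Jmol mult
  rw [norm_mul, Complex.norm_real, Real.norm_of_nonneg (hj0 _)]
  exact mul_le_of_le_one_left (norm_nonneg _) (hj1 _)

lemma hsNorm_Jmol {j : SchwartzMap ℝ ℝ} (hj0 : ∀ x, 0 ≤ j x) (hj1 : ∀ x, j x ≤ 1) (ε : ℝ) {c : FC}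
    {σ : ℝ} (h : memHs σ c) : hsNorm σ (Jmol j ε c) ^ 2 ≤ hsNorm σ c ^ 2 := by
  refine (hsNorm_sq_le (A := 1) h fun k => ?_).2.trans (by rw [one_mul])
  rw [one_mul]
  have := norm_Jmol_le hj0 hj1 ε c k
  have := wt_pos σ k
  gcongr

lemma D1_Jmol (j : ℝ → ℝ) (ε : ℝ) (c : FC) : D1 (Jmol j ε c) = Jmol j ε (D1 c) := by
  funext k; simp only [D1, Jmol, mult]; ring

lemma NLJ (j : SchwartzMap ℝ ℝ) (hj0 : ∀ x, 0 ≤ j x) (hj1 : ∀ x, j x ≤ 1) {σ : ℝ} (hσ : 2 ≤ σ) :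
    ∃ C : ℝ, 0 ≤ C ∧ ∀ ε ∈ Set.Ioo (0 : ℝ) 1, ∀ u v : FC, isReal u → memHs σ u → memHs σ v →
      (Summable fun k => (wt σ k : ℂ) *
        (Jmol j ε (mul (Jmol j ε u) (D1 (Jmol j ε v))) k * (starRingEnd ℂ) (v k))) ∧
      |hsInner σ (Jmol j ε (mul (Jmol j ε u) (D1 (Jmol j ε v)))) v|
        ≤ C * (linfty (D1 u) + linfty (D1 v)) * (hsNorm σ u ^ 2 + hsNorm σ v ^ 2) := by
  obtain ⟨C, hC, hNL⟩ := NL (σ := σ) (by linarith)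
  obtain ⟨C1, hC1, h1⟩ := linfty_Jmol j
  obtain ⟨C2, hC2, h2⟩ := linfty_Jodd j
  obtain ⟨C3, hC3⟩ := j.decay 1 0
  refine ⟨C * (2 * C1 + C2 * (1 + C3 ^ 2)), by positivity, fun ε hε u v hr hu hv => ?_⟩
  have hε0 := hε.1
  set f := Jmol j ε u with hf
  set g := Jmol j ε v with hg
  have rf : Rapid f := Jmol_rapid j hε0 (memHs.bdd (by linarith) hu)
  have rg : Rapid g := Jmol_rapid j hε0 (memHs.bdd (by linarith) hv)
  have hE : Summable fun q : ℤ × ℤ => EE σ f g q.1 q.2 := by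
    simpa using summable_EE σ rf rg (P := fun _ _ => 1) (by intros; norm_num)
  have hterm : ∀ k, ∑' m, EE σ f g k m = (wt σ k : ℂ) *
        (Jmol j ε (mul f (D1 g)) k * (starRingEnd ℂ) (v k)) := by
    intro k
    have e1 : mul f (D1 g) k = ∑' m, f (k - m) * D1 g m := by
      unfold mul
      rw [← (Equiv.subLeft k).tsum_eq]
      simp [Equiv.subLeft]
    have e2 : Jmol j ε (mul f (D1 g)) k * (starRingEnd ℂ) (v k)
        = (starRingEnd ℂ) (g k) * mul f (D1 g) k := by
      simp only [hg, Jmol, mult, map_mul, Complex.conj_ofReal]; ring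
    rw [e2, e1, ← mul_assoc, ← tsum_mul_left]
    refine tsum_congr fun m => ?_
    simp only [EE, D1]; ring
  have hsum : Summable fun k => (wt σ k : ℂ) *
        (Jmol j ε (mul f (D1 g)) k * (starRingEnd ℂ) (v k)) := by
    refine hE.prod.congr fun k => ?_
    exact hterm k
  refine ⟨hsum, ?_⟩
  have hval : hsInner σ (Jmol j ε (mul f (D1 g))) v = (∑' q : ℤ × ℤ, EE σ f g q.1 q.2).re := by
    unfold hsInner
    rw [hE.tsum_prod]
    congr 1
    exact tsum_congr fun k => (hterm k).symm
  rw [hval]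
  refine (hNL f g rf rg ε hε0).trans ?_
  have a1 : linfty (D1 f) ≤ C1 * linfty (D1 u) := by
    rw [hf, D1_Jmol]; exact h1 ε _ (memHs.summable_D1 hσ hu)
  have a2 : linfty (D1 g) ≤ C1 * linfty (D1 v) := by
    rw [hg, D1_Jmol]; exact h1 ε _ (memHs.summable_D1 hσ hv)
  have a3 : linfty (oddp f) ≤ C2 * ε * linfty (D1 u) := by
    have := h2 ε u (memHs.summable hσ hu) (memHs.summable_D1 hσ hu)
    rw [abs_of_pos hε0] at this
    refine le_trans (le_of_eq ?_) this
    congr 1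
    funext n
    simp only [oddp, hf, Jmol, mult, map_mul, Complex.conj_ofReal, hr n, Complex.conj_conj]
    push_cast
    rw [mul_neg]; ring
  have b1 := hsNorm_Jmol hj0 hj1 ε hu
  have b2 := hsNorm_Jmol hj0 hj1 ε hv
  rw [← hf] at b1
  rw [← hg] at b2
  have b3 : ε ^ 2 * hsNorm σ (D1 g) ^ 2 ≤ C3 ^ 2 * hsNorm σ v ^ 2 := by
    have hε2 : ε ^ 2 ≠ 0 := by positivity
    have := (hsNorm_sq_le (a := σ) (c := D1 g) (A := C3 ^ 2 / ε ^ 2) hv fun k => ?_).2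
    · calc _ ≤ ε ^ 2 * (C3 ^ 2 / ε ^ 2 * hsNorm σ v ^ 2) := by gcongr
        _ = _ := by field_simp
    · have hk := hC3.2 (ε * k)
      simp only [pow_one, norm_iteratedFDeriv_zero, Real.norm_eq_abs, abs_mul] at hk
      rw [abs_of_pos hε0] at hk
      have hw := wt_pos σ k
      have e : ‖D1 g k‖ = |(k : ℝ)| * |j (ε * k)| * ‖v k‖ := by
        simp [D1, hg, Jmol, mult]; ring
      rw [e, div_mul_eq_mul_div, le_div_iff₀ (by positivity)]
      calc wt σ k * (|(k : ℝ)| * |j (ε * k)| * ‖v k‖) ^ 2 * ε ^ 2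
          = (ε * |(k : ℝ)| * |j (ε * k)|) ^ 2 * (wt σ k * ‖v k‖ ^ 2) := by ring
        _ ≤ _ := by gcongr
  have l1 := linfty_nonneg (D1 u)
  have l2 := linfty_nonneg (D1 v)
  set U := linfty (D1 u)
  set V := linfty (D1 v)
  set Nu := hsNorm σ u ^ 2 with hNu
  set Nv := hsNorm σ v ^ 2 with hNv
  have n1 : 0 ≤ Nu := sq_nonneg _
  have n2 : 0 ≤ Nv := sq_nonneg _
  have t1 : linfty (D1 f) * hsNorm σ g ^ 2 ≤ C1 * U * Nv :=
    mul_le_mul a1 b2 (sq_nonneg _) (by positivity)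
  have t2 : linfty (D1 g) * (hsNorm σ f ^ 2 + hsNorm σ g ^ 2) ≤ C1 * V * (Nu + Nv) :=
    mul_le_mul a2 (add_le_add b1 b2) (by positivity) (by positivity)
  have t3 : linfty (oddp f) * ε⁻¹ * (hsNorm σ g ^ 2 + ε ^ 2 * hsNorm σ (D1 g) ^ 2)
      ≤ C2 * U * ((1 + C3 ^ 2) * Nv) := by
    refine mul_le_mul ?_ (by linarith) (by positivity) (by positivity)
    rw [← div_eq_mul_inv, div_le_iff₀ hε0]
    linarith
  rw [mul_assoc C, mul_assoc C]
  refine mul_le_mul_of_nonneg_left ?_ hC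
  refine (add_le_add (add_le_add t1 t2) t3).trans ?_
  have m1 : 0 ≤ C1 * U * Nu := by positivity
  have m2 : 0 ≤ C1 * V * (Nu + Nv) := by positivity
  have m3 : 0 ≤ C2 * (1 + C3 ^ 2) * (U * Nu + V * (Nu + Nv)) := by positivity
  have m4 : 0 ≤ C1 * U * Nv := by positivity
  nlinarith

end S17

namespace S17
open FC MeasureTheory

lemma hsInner_comb {σ : ℝ} {A B v : FC}
    (hA : Summable fun k => (wt σ k : ℂ) * (A k * (starRingEnd ℂ) (v k)))
    (hB : Summable fun k => (wt σ k : ℂ) * (B k * (starRingEnd ℂ) (v k))) :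
    2 * hsInner σ (-A + (1 / 2 : ℝ) • B) v = - 2 * hsInner σ A v + hsInner σ B v := by
  have h : (∑' k, (wt σ k : ℂ) * ((-A + (1 / 2 : ℝ) • B) k * (starRingEnd ℂ) (v k)))
      = - (∑' k, (wt σ k : ℂ) * (A k * (starRingEnd ℂ) (v k)))
        + ((1 / 2 : ℝ) : ℂ) * ∑' k, (wt σ k : ℂ) * (B k * (starRingEnd ℂ) (v k)) := by
    rw [← tsum_neg, ← tsum_mul_left, ← hA.neg.tsum_add (hB.mul_left _)]
    refine tsum_congr fun k => ?_
    simp only [Pi.add_apply, Pi.neg_apply, Pi.smul_apply, Complex.real_smul]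
    ring
  unfold hsInner
  rw [h, Complex.add_re, Complex.neg_re, Complex.re_ofReal_mul]
  ring

lemma wt_two (s : ℝ) (k : ℤ) : wt s k = wt (s - 2) k * (1 + (k : ℝ) ^ 2) ^ 2 := by
  have h : wt 2 k = (1 + (k : ℝ) ^ 2) ^ 2 := by unfold wt; norm_num
  rw [← h, wt_add]; congr 1; ring

lemma comp1 (j : SchwartzMap ℝ ℝ) (hj0 : ∀ x, 0 ≤ j x) (hj1 : ∀ x, j x ≤ 1) {s : ℝ}
    (hs : 11 / 2 < s) {ξ : ℕ → FC} (hmem : ∀ σ : ℝ, 0 ≤ σ → ∀ k, memHs σ (ξ k))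
    (hreal : ∀ k, isReal (ξ k))
    (hsum : ∀ σ : ℝ, 0 ≤ σ → Summable fun k => hsNorm σ (ξ k)) :
    ∃ C : ℝ, 0 ≤ C ∧ ∀ ε ∈ Set.Ioo (0 : ℝ) 1, ∀ u : FC, isReal u → memHs s u →
      (Summable fun i => hsNorm s (hMol1 j ε ξ i u) ^ 2) ∧
      2 * hsInner s (gMol1 j ε ξ u) u + ∑' i, hsNorm s (hMol1 j ε ξ i u) ^ 2
        ≤ C * (1 + linfty (D1 u)) * hsNorm s u ^ 2 := by
  obtain ⟨C1, hC1, hN⟩ := noise_sum j hj0 hj1 (σ := s - 2) (by linarith) hmem hreal hsum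
  obtain ⟨C2, hC2, hL⟩ := NLJ j hj0 hj1 (σ := s) (by linarith)
  refine ⟨C1 + 8 * C2, by positivity, fun ε hε u hr hu => ?_⟩
  set w := helm (Jmol j ε u) with hw
  have rJ : Rapid (Jmol j ε u) := Jmol_rapid j hε.1 (memHs.bdd (by linarith) hu)
  have rw' : Rapid w := by
    refine rJ.of_le 2 1 fun k => ?_
    rw [hw]; unfold helm mult
    rw [norm_mul, Complex.norm_real, Real.norm_of_nonneg (base_pos k).le, one_mul]
    have := base_le_bb k
    gcongr
  obtain ⟨s1, s2, hle⟩ := hN ε hε w rw'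
  obtain ⟨s3, hle3⟩ := hL ε hε u u hr hu hu
  have eB : ∀ k, (wt s k : ℂ) * ((Jmol j ε (Jmol j ε (Jmol j ε
      (helmInv (tsumFC fun k => lie2 (ξ k) w))))) k * (starRingEnd ℂ) (u k))
      = ((wt (s - 2) k * j (ε * k) ^ 2 : ℝ) : ℂ) *
        (tsumFC (fun i => lie2 (ξ i) w) k * (starRingEnd ℂ) (w k)) := by
    intro k
    have hb : ((1 + (k : ℝ) ^ 2 : ℝ) : ℂ) ≠ 0 := by exact_mod_cast (base_pos k).ne'
    rw [wt_two s k]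
    set T := tsumFC (fun i => lie2 (ξ i) w) with hT
    simp only [hw, helm, helmInv, Jmol, mult, map_mul, Complex.conj_ofReal, Complex.ofReal_mul,
      Complex.ofReal_pow, Complex.ofReal_inv]
    field_simp
  have eh : ∀ i, hsNorm s (hMol1 j ε ξ i u) ^ 2
      = ∑' k, (wt (s - 2) k * j (ε * k) ^ 2) * ‖lie (ξ i) w k‖ ^ 2 := by
    intro i
    rw [hsNorm_sq]
    refine tsum_congr fun k => ?_
    have hb := (base_pos k).ne'
    have e : ‖hMol1 j ε ξ i u k‖ = j (ε * k) * ((1 + (k : ℝ) ^ 2)⁻¹ * ‖lie (ξ i) w k‖) := by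
      unfold hMol1
      rw [← hw, Pi.neg_apply, norm_neg]
      unfold Jmol helmInv mult
      rw [norm_mul, norm_mul, Complex.norm_real, Complex.norm_real, Real.norm_of_nonneg (hj0 _),
        Real.norm_of_nonneg (inv_nonneg.2 (base_pos k).le)]
    rw [e, wt_two s k]
    field_simp
  have hwn : hsNorm (s - 2) w ^ 2 ≤ hsNorm s u ^ 2 := by
    refine le_trans (le_of_eq ?_) (hsNorm_Jmol hj0 hj1 ε hu)
    rw [hsNorm_sq, hsNorm_sq]
    refine tsum_congr fun k => ?_
    rw [hw]
    unfold helm mult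
    rw [norm_mul, Complex.norm_real, Real.norm_of_nonneg (base_pos k).le, wt_two s k]
    ring
  have s2' := s2.congr fun k => (eB k).symm
  have hI := hsInner_comb s3 s2'
  have hB : hsInner s (Jmol j ε (Jmol j ε (Jmol j ε
      (helmInv (tsumFC fun k => lie2 (ξ k) w))))) u
      = (∑' k, ((wt (s - 2) k * j (ε * k) ^ 2 : ℝ) : ℂ) *
        (tsumFC (fun i => lie2 (ξ i) w) k * (starRingEnd ℂ) (w k))).re := by
    unfold hsInner
    rw [tsum_congr eB]
  simp only [eh]
  refine ⟨s1, ?_⟩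
  have hI' : 2 * hsInner s (gMol1 j ε ξ u) u = _ := hI
  rw [hI', hB]
  have hab := neg_abs_le (hsInner s (Jmol j ε (mul (Jmol j ε u) (D1 (Jmol j ε u)))) u)
  have l1 := linfty_nonneg (D1 u)
  set U := linfty (D1 u)
  set N := hsNorm s u ^ 2 with hNdef
  have n0 : 0 ≤ N := sq_nonneg _
  have t1 : C1 * hsNorm (s - 2) w ^ 2 ≤ C1 * N := mul_le_mul_of_nonneg_left hwn hC1
  have t2 : 0 ≤ C1 * U * N := by positivity
  have t3 : 0 ≤ C2 * N := by positivity
  nlinarith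

lemma comp2 (j : SchwartzMap ℝ ℝ) (hj0 : ∀ x, 0 ≤ j x) (hj1 : ∀ x, j x ≤ 1) {s : ℝ}
    (hs : 11 / 2 < s) {ξ : ℕ → FC} (hmem : ∀ σ : ℝ, 0 ≤ σ → ∀ k, memHs σ (ξ k))
    (hreal : ∀ k, isReal (ξ k))
    (hsum : ∀ σ : ℝ, 0 ≤ σ → Summable fun k => hsNorm σ (ξ k)) :
    ∃ C : ℝ, 0 ≤ C ∧ ∀ ε ∈ Set.Ioo (0 : ℝ) 1, ∀ u η : FC, isReal u → memHs s u → memHs (s - 1) η →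
      (Summable fun i => hsNorm (s - 1) (hMol2 j ε ξ i η) ^ 2) ∧
      2 * hsInner (s - 1) (gMol2 j ε ξ u η) η + ∑' i, hsNorm (s - 1) (hMol2 j ε ξ i η) ^ 2
        ≤ C * (1 + linfty (D1 u) + linfty (D1 η)) * (hsNorm s u ^ 2 + hsNorm (s - 1) η ^ 2) := by
  obtain ⟨C1, hC1, hN⟩ := noise_sum j hj0 hj1 (σ := s - 1) (by linarith) hmem hreal hsum
  obtain ⟨C2, hC2, hL⟩ := NLJ j hj0 hj1 (σ := s - 1) (by linarith)
  refine ⟨C1 + 2 * C2, by positivity, fun ε hε u η hr hu hη => ?_⟩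
  set w := Jmol j ε η with hw
  have rw' : Rapid w := Jmol_rapid j hε.1 (memHs.bdd (by linarith) hη)
  have hu' : memHs (s - 1) u := memHs.mono (by linarith) hu
  obtain ⟨s1, s2, hle⟩ := hN ε hε w rw'
  obtain ⟨s3, hle3⟩ := hL ε hε u η hr hu' hη
  have eB : ∀ k, (wt (s - 1) k : ℂ) * ((Jmol j ε (Jmol j ε (Jmol j ε
      (tsumFC fun k => lie2 (ξ k) w)))) k * (starRingEnd ℂ) (η k))
      = ((wt (s - 1) k * j (ε * k) ^ 2 : ℝ) : ℂ) *
        (tsumFC (fun i => lie2 (ξ i) w) k * (starRingEnd ℂ) (w k)) := by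
    intro k
    set T := tsumFC (fun i => lie2 (ξ i) w) with hT
    simp only [hw, Jmol, mult, map_mul, Complex.conj_ofReal, Complex.ofReal_mul,
      Complex.ofReal_pow]
    ring
  have eh : ∀ i, hsNorm (s - 1) (hMol2 j ε ξ i η) ^ 2
      = ∑' k, (wt (s - 1) k * j (ε * k) ^ 2) * ‖lie (ξ i) w k‖ ^ 2 := by
    intro i
    rw [hsNorm_sq]
    refine tsum_congr fun k => ?_
    have e : ‖hMol2 j ε ξ i η k‖ = j (ε * k) * ‖lie (ξ i) w k‖ := by
      unfold hMol2
      rw [← hw, Pi.neg_apply, norm_neg]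
      unfold Jmol mult
      rw [norm_mul, Complex.norm_real, Real.norm_of_nonneg (hj0 _)]
    rw [e]
    ring
  have hwn : hsNorm (s - 1) w ^ 2 ≤ hsNorm (s - 1) η ^ 2 := hsNorm_Jmol hj0 hj1 ε hη
  have s2' := s2.congr fun k => (eB k).symm
  have hI := hsInner_comb s3 s2'
  have hB : hsInner (s - 1) (Jmol j ε (Jmol j ε (Jmol j ε
      (tsumFC fun k => lie2 (ξ k) w)))) η
      = (∑' k, ((wt (s - 1) k * j (ε * k) ^ 2 : ℝ) : ℂ) *
        (tsumFC (fun i => lie2 (ξ i) w) k * (starRingEnd ℂ) (w k))).re := by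
    unfold hsInner
    rw [tsum_congr eB]
  simp only [eh]
  refine ⟨s1, ?_⟩
  have hI' : 2 * hsInner (s - 1) (gMol2 j ε ξ u η) η = _ := hI
  rw [hI', hB]
  have hab := neg_abs_le (hsInner (s - 1) (Jmol j ε (mul (Jmol j ε u) (D1 (Jmol j ε η)))) η)
  have hmono := hsNorm_sq_mono (show s - 1 ≤ s by linarith) hu
  have l1 := linfty_nonneg (D1 u)
  have l2 := linfty_nonneg (D1 η)
  set U := linfty (D1 u)
  set V := linfty (D1 η)
  set N := hsNorm s u ^ 2 with hNdef
  set N' := hsNorm (s - 1) η ^ 2 with hNdef'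
  have n0 : 0 ≤ N := sq_nonneg _
  have n1 : 0 ≤ N' := sq_nonneg _
  have t1 : C1 * hsNorm (s - 1) w ^ 2 ≤ C1 * N' := mul_le_mul_of_nonneg_left hwn hC1
  have t2 : 0 ≤ C1 * (U + V) * (N + N') := by positivity
  have t4 : 0 ≤ C1 * N := by positivity
  have t3 : 0 ≤ C2 * (N + N') := by positivity
  have t5 : C2 * (U + V) * (hsNorm (s - 1) u ^ 2 + N') ≤ C2 * (U + V) * (N + N') := by
    gcongr
  nlinarith

end S17

/-- Let `s > 11/2`, `Σ_k ‖ξ_k‖_{H^σ} < ∞` for all `σ ≥ 0`, and let `j` be a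
fixed Schwartz mollifier (`ĵ` Schwartz, `0 ≤ ĵ ≤ 1`, `ĵ = 1` on `[-1,1]`).  Then there is
`C > 0`, independent of `ε`, such that for all `ε ∈ (0,1)` and `X = (u,η) ∈ H^s × H^{s-1}`:
`2 (g_ε(X), X)_{H^s×H^{s-1}} + Σ_k ‖h_ε^k(X)‖²_{H^s×H^{s-1}}`
`≤ C (1 + ‖∂ₓu‖_{L^∞} + ‖∂ₓη‖_{L^∞}) (‖u‖²_{H^s} + ‖η‖²_{H^{s-1}})`. -/
theorem statement17 (s : ℝ) (hs : 11 / 2 < s) (ξ : ℕ → FC)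
    (hξmem : ∀ σ : ℝ, 0 ≤ σ → ∀ k : ℕ, FC.memHs σ (ξ k))
    (hξreal : ∀ k : ℕ, FC.isReal (ξ k))
    (hξsum : ∀ σ : ℝ, 0 ≤ σ → Summable fun k : ℕ => FC.hsNorm σ (ξ k))
    (jhat : SchwartzMap ℝ ℝ)
    (hj0 : ∀ x : ℝ, 0 ≤ jhat x) (hj1 : ∀ x : ℝ, jhat x ≤ 1)
    (hjone : ∀ x : ℝ, |x| ≤ 1 → jhat x = 1) :
    ∃ C > (0 : ℝ), ∀ ε : ℝ, ε ∈ Set.Ioo (0 : ℝ) 1 → ∀ u η : FC,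
      FC.memHs s u → FC.memHs (s - 1) η → FC.isReal u → FC.isReal η →
      Summable (fun k : ℕ =>
        FC.hsNorm s (hMol1 (⇑jhat) ε ξ k u) ^ 2
          + FC.hsNorm (s - 1) (hMol2 (⇑jhat) ε ξ k η) ^ 2) ∧
      2 * FC.pairInner s (s - 1) (gMol1 (⇑jhat) ε ξ u) (gMol2 (⇑jhat) ε ξ u η) u η
          + ∑' k : ℕ, (FC.hsNorm s (hMol1 (⇑jhat) ε ξ k u) ^ 2
              + FC.hsNorm (s - 1) (hMol2 (⇑jhat) ε ξ k η) ^ 2)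
        ≤ C * (1 + FC.linfty (FC.D1 u) + FC.linfty (FC.D1 η))
            * (FC.hsNorm s u ^ 2 + FC.hsNorm (s - 1) η ^ 2) := by
  obtain ⟨C1, hC1, h1⟩ := S17.comp1 jhat hj0 hj1 hs hξmem hξreal hξsum
  obtain ⟨C2, hC2, h2⟩ := S17.comp2 jhat hj0 hj1 hs hξmem hξreal hξsum
  refine ⟨C1 + C2 + 1, by positivity, fun ε hε u η hu hη hur _ => ?_⟩
  obtain ⟨s1, b1⟩ := h1 ε hε u hur hu
  obtain ⟨s2, b2⟩ := h2 ε hε u η hur hu hη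
  refine ⟨s1.add s2, ?_⟩
  rw [s1.tsum_add s2]
  unfold FC.pairInner
  have l1 := S17.linfty_nonneg (FC.D1 u)
  have l2 := S17.linfty_nonneg (FC.D1 η)
  set U := FC.linfty (FC.D1 u)
  set V := FC.linfty (FC.D1 η)
  set N := FC.hsNorm s u ^ 2 with hN
  set N' := FC.hsNorm (s - 1) η ^ 2 with hN'
  have n0 : 0 ≤ N := sq_nonneg _
  have n1 : 0 ≤ N' := sq_nonneg _
  have t1 : 0 ≤ C1 * (1 + U + V) * N' := by positivity
  have t2 : 0 ≤ C1 * V * N := by positivity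
  have t3 : 0 ≤ (1 + U + V) * (N + N') := by positivity
  nlinarith
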